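/- arXiv:1211.3766 — 2 statements merged into one kernel-verified Lean document; each statement's English description precedes it below -/
import Mathlib

section
/- Let n ≥ 1 and let Z ⊆ ℂ^n be a nonempty Zariski constructible subset defined over ℚ̄. Suppose that the image exp(Z) ⊆ (ℂ^*)^n is also a Zariski constructible subset defined over ℚ̄. Then exp(Z) contains a torsion point of (ℂ^*)^n. -/
open MvPolynomial

noncomputable section

/-- The coordinatewise exponential map `ℂ^n → (ℂ^*)^n`,
`z ↦ (e^{2π√-1 z_λ})_λ`. -/
def expMap (n : ℕ) (z : Fin n → ℂ) : Fin n → ℂ :=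
  fun i => Complex.exp (2 * (Real.pi : ℂ) * Complex.I * z i)

/-- A subset of `ℂ^n` is Zariski closed and defined over `ℚ̄` if it is the common
zero locus of a family of polynomials whose coefficients are algebraic over `ℚ`. -/
def ZClosedQbar (n : ℕ) (S : Set (Fin n → ℂ)) : Prop :=
  ∃ P : Set (MvPolynomial (Fin n) ℂ),
    (∀ p ∈ P, ∀ m, IsAlgebraic ℚ (coeff m p)) ∧
    S = {z | ∀ p ∈ P, eval z p = 0}

/-- A subset of `(ℂ^*)^n` (viewed as the set of points of `ℂ^n` with all coordinates
nonzero) is Zariski closed and defined over `ℚ̄` if it is the common zero locus in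
`(ℂ^*)^n` of a family of polynomials whose coefficients are algebraic over `ℚ`. -/
def ZClosedTorusQbar (n : ℕ) (T : Set (Fin n → ℂ)) : Prop :=
  ∃ P : Set (MvPolynomial (Fin n) ℂ),
    (∀ p ∈ P, ∀ m, IsAlgebraic ℚ (coeff m p)) ∧
    T = {z | (∀ i, z i ≠ 0) ∧ ∀ p ∈ P, eval z p = 0}

/-- Zariski constructible over `ℚ̄` in `ℂ^n`: a finite union of differences of
Zariski closed sets defined over `ℚ̄`. -/
def ConstructibleQbar (n : ℕ) (Z : Set (Fin n → ℂ)) : Prop :=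
  ∃ (k : ℕ) (F G : Fin k → Set (Fin n → ℂ)),
    (∀ i, ZClosedQbar n (F i) ∧ ZClosedQbar n (G i)) ∧ Z = ⋃ i, F i \ G i

/-- Zariski constructible over `ℚ̄` in `(ℂ^*)^n`. -/
def ConstructibleTorusQbar (n : ℕ) (Z : Set (Fin n → ℂ)) : Prop :=
  ∃ (k : ℕ) (F G : Fin k → Set (Fin n → ℂ)),
    (∀ i, ZClosedTorusQbar n (F i) ∧ ZClosedTorusQbar n (G i)) ∧ Z = ⋃ i, F i \ G i

/-- A torsion point of `(ℂ^*)^n`: every coordinate is a root of unity. -/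
def IsTorsionPoint (n : ℕ) (τ : Fin n → ℂ) : Prop :=
  ∀ i, ∃ k : ℕ, 0 < k ∧ τ i ^ k = 1

/-!
A point `exp z` is torsion iff all `z j` are rational, so it suffices to make the coordinates of
some `z ∈ Z` rational one at a time, keeping those that are already rational. If `z j` is
transcendental, then all but finitely many algebraic numbers occur as the `j`-th coordinate of a
point of `Z` that agrees with `z` in all its algebraic coordinates, because a dominant map from an
irreducible variety to the line has cofinite image; choose a rational one. If `z j` is algebraic but
`e ^ (2πi z j)` is transcendental, specialise in `exp Z` in the same way, now to a root of unity. If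
both are algebraic, `z j` is already rational by the Gelfond–Schneider theorem.

Gelfond–Schneider is proved by Schneider's method. For irrational `β`, Siegel's lemma gives a
nonzero polynomial in `t` and `e ^ (ℓ t)`, with small coefficients, vanishing at all `x + y β` with
`x, y < n ^ 2`. If it vanishes for `x, y < M`, the Schwarz lemma makes its values at `x, y ≤ M` so
small that, being algebraic, they vanish by the product formula. Hence it vanishes at all `x + y β`,
the Schwarz lemma now forces it to be identically zero, and this contradicts the transcendence of
the exponential function.
-/

section Specialization

variable {k A : Type*} [Field k] [CommRing A] [Algebra k A] [Algebra.FiniteType k A]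

theorem exists_algHom_le_ker_of_ne_top [IsAlgClosed k] {I : Ideal A} (hI : I ≠ ⊤) :
    ∃ φ : A →ₐ[k] k, I ≤ RingHom.ker φ := by
  obtain ⟨M, hM, hIM⟩ := Ideal.exists_le_maximal I hI
  let : Field (A ⧸ M) := Ideal.Quotient.field M
  have : Module.Finite k (A ⧸ M) := finite_of_finite_type_of_isJacobsonRing k (A ⧸ M)
  refine ⟨(IsAlgClosed.lift : A ⧸ M →ₐ[k] k).comp (Ideal.Quotient.mkₐ k M), fun x hx => ?_⟩
  rw [RingHom.mem_ker, AlgHom.comp_apply, Ideal.Quotient.mkₐ_eq_mk,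
    Ideal.Quotient.eq_zero_iff_mem.2 (hIM hx), map_zero]

theorem exists_basicOpen_subset_range_comap_aeval [IsDomain A] {x : A} (hx : Transcendental k x) :
    ∃ h : Polynomial k, h ≠ 0 ∧ (PrimeSpectrum.basicOpen h : Set (PrimeSpectrum (Polynomial k))) ⊆
      Set.range (PrimeSpectrum.comap (Polynomial.aeval x : Polynomial k →ₐ[k] A).toRingHom) := by
  let : Algebra (Polynomial k) A := (Polynomial.aeval x).toRingHom.toAlgebra
  have : IsScalarTower k (Polynomial k) A :=
    .of_algebraMap_eq fun c => (Polynomial.aeval_C x c).symm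
  have : FaithfulSMul (Polynomial k) A :=
    (faithfulSMul_iff_algebraMap_injective _ _).2 (transcendental_iff_injective.1 hx)
  have : Algebra.FiniteType (Polynomial k) A := .of_restrictScalars_finiteType k (Polynomial k) A
  have : Algebra.FinitePresentation (Polynomial k) A :=
    Algebra.FinitePresentation.of_finiteType.1 inferInstance
  -- Going down holds because `A` is torsion-free, hence flat, over the principal ideal domain
  -- `k[X]`.
  have hopen := (PrimeSpectrum.isOpenMap_comap_of_hasGoingDown_of_finitePresentation
    (R := Polynomial k) (S := A)).isOpen_range
  obtain ⟨_, ⟨h, rfl⟩, hgen, hsub⟩ :=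
    PrimeSpectrum.isTopologicalBasis_basic_opens.exists_subset_of_mem_open
      (Set.mem_range_self (⊥ : PrimeSpectrum A)) hopen
  refine ⟨h, ?_, hsub⟩
  rintro rfl
  simp only [PrimeSpectrum.basicOpen_zero, TopologicalSpace.Opens.coe_bot,
    Set.mem_empty_iff_false] at hgen

theorem eventually_exists_algHom_apply_eq [IsAlgClosed k] [IsDomain A] {x : A}
    (hx : Transcendental k x) :
    ∀ᶠ c : k in Filter.cofinite, ∃ φ : A →ₐ[k] k, φ x = c := by
  obtain ⟨h, h_ne_zero, hsub⟩ := exists_basicOpen_subset_range_comap_aeval hx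
  filter_upwards [(Polynomial.finite_setOfPred_isRoot h_ne_zero).eventually_cofinite_notMem]
    with c hc
  let evalKer : PrimeSpectrum (Polynomial k) :=
    ⟨RingHom.ker (Polynomial.evalRingHom c), RingHom.ker_isPrime _⟩
  obtain ⟨P, hP⟩ := hsub (show evalKer ∈ PrimeSpectrum.basicOpen h from hc)
  have hxc : x - algebraMap k A c ∈ P.asIdeal := by
    have hXC : Polynomial.X - Polynomial.C c ∈ evalKer.asIdeal := by
      simp [evalKer, RingHom.mem_ker]
    rw [← hP] at hXC
    simpa using hXC
  obtain ⟨φ, hφ⟩ := exists_algHom_le_ker_of_ne_top (k := k) P.isPrime.ne_top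
  refine ⟨φ, sub_eq_zero.1 ?_⟩
  simpa [RingHom.mem_ker] using hφ hxc

end Specialization

theorem eventually_exists_specialization {σ k L : Type*} [Finite σ] [Field k] [IsAlgClosed k]
    [Field L] [Algebra k L] (z : σ → L) {j : σ} (hz : Transcendental k (z j))
    {g : MvPolynomial σ k} (hg : aeval z g ≠ 0) :
    ∀ᶠ c : k in Filter.cofinite, ∃ w : σ → k,
      w j = c ∧ aeval w g ≠ 0 ∧ ∀ f : MvPolynomial σ k, aeval z f = 0 → aeval w f = 0 := by
  let s : Set L := insert (aeval z g)⁻¹ (Set.range z)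
  let A : Subalgebra k L := Algebra.adjoin k s
  have : Algebra.FiniteType k A := Subalgebra.fg_iff_finiteType A |>.1 <|
    Subalgebra.fg_def.2 ⟨s, (Set.finite_range z).insert _, rfl⟩
  let zA : σ → A := fun i => ⟨z i, Algebra.subset_adjoin (Or.inr ⟨i, rfl⟩)⟩
  let u : A := ⟨(aeval z g)⁻¹, Algebra.subset_adjoin (Or.inl rfl)⟩
  have coe_aeval (f : MvPolynomial σ k) : ((aeval zA f : A) : L) = aeval z f :=
    comp_aeval_apply (f := zA) A.val f
  have hgu : aeval zA g * u = 1 :=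
    Subtype.ext <| by rw [A.coe_mul, coe_aeval, mul_inv_cancel₀ hg, A.coe_one]
  have hzA : Transcendental k (zA j) :=
    (transcendental_algebraMap_iff (R := k) (A := L) Subtype.val_injective).1 hz
  filter_upwards [eventually_exists_algHom_apply_eq hzA] with c ⟨φ, hφ⟩
  have hφ_aeval (f : MvPolynomial σ k) : aeval (fun i => φ (zA i)) f = φ (aeval zA f) :=
    (comp_aeval_apply (f := zA) φ f).symm
  refine ⟨fun i => φ (zA i), hφ, ?_, fun f hf => ?_⟩
  · rw [hφ_aeval]
    exact left_ne_zero_of_mul_eq_one (by rw [← map_mul, hgu, map_one] : _ * φ u = 1)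
  · rw [hφ_aeval, Subtype.ext ((coe_aeval f).trans hf) (a2 := (0 : A)), map_zero]

/-- The field of algebraic numbers, as a subfield of `ℂ`, over which the polynomials defining
`ℚ̄`-closed sets are specialised. -/
abbrev QBar : Type := algebraicClosure ℚ ℂ

instance : IsAlgClosed QBar := (algebraicClosure.isAlgClosure ℚ ℂ).isAlgClosed

instance : Algebra.IsAlgebraic ℚ QBar :=
  ⟨fun x => (isAlgebraic_algebraMap_iff (algebraMap QBar ℂ).injective).1
    (mem_algebraicClosure_iff.1 x.2)⟩

theorem transcendental_qBar_iff {w : ℂ} : Transcendental QBar w ↔ Transcendental ℚ w :=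
  not_congr ⟨fun h => h.restrictScalars ℚ, fun h => h.tower_top QBar⟩

section Coefficients

variable {σ : Type*}

theorem forall_isAlgebraic_coeff_iff_mem_range_map {p : MvPolynomial σ ℂ} :
    (∀ m, IsAlgebraic ℚ (coeff m p)) ↔ p ∈ (map (σ := σ) (algebraMap QBar ℂ)).range := by
  constructor
  · intro hp
    refine (mem_range_map_iff_coeffs_subset).2 fun x hx => ?_
    obtain ⟨m, -, rfl⟩ := mem_coeffs_iff.1 hx
    exact ⟨⟨_, mem_algebraicClosure_iff.2 (hp m)⟩, rfl⟩
  · rintro ⟨q, rfl⟩ m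
    rw [coeff_map]
    exact mem_algebraicClosure_iff.1 (coeff m q).2

theorem eval_map_algebraMap_qBar (z : σ → ℂ) (q : MvPolynomial σ QBar) :
    eval z (map (algebraMap QBar ℂ) q) = aeval z q := by
  rw [eval_map, aeval_def]

end Coefficients

section ConstructibleSets

variable {n : ℕ} {S F G : Set (Fin n → ℂ)}

theorem zClosedQbar_iff : ZClosedQbar n S ↔
    ∃ Q : Set (MvPolynomial (Fin n) QBar), S = {z | ∀ q ∈ Q, aeval z q = 0} := by
  constructor
  · rintro ⟨P, hP, rfl⟩
    refine ⟨map (algebraMap QBar ℂ) ⁻¹' P, Set.ext fun z => ⟨fun h q hq => ?_, fun h p hp => ?_⟩⟩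
    · rw [← eval_map_algebraMap_qBar]
      exact h _ hq
    · obtain ⟨q, rfl⟩ := forall_isAlgebraic_coeff_iff_mem_range_map.1 (hP p hp)
      exact (eval_map_algebraMap_qBar z q).trans (h q hp)
  · rintro ⟨Q, rfl⟩
    refine ⟨map (algebraMap QBar ℂ) '' Q, ?_, ?_⟩
    · rintro _ ⟨q, -, rfl⟩
      exact forall_isAlgebraic_coeff_iff_mem_range_map.2 ⟨q, rfl⟩
    · simp only [Set.forall_mem_image, eval_map_algebraMap_qBar]

theorem ZClosedQbar.union (hF : ZClosedQbar n F) (hG : ZClosedQbar n G) :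
    ZClosedQbar n (F ∪ G) := by
  obtain ⟨P, rfl⟩ := zClosedQbar_iff.1 hF
  obtain ⟨Q, rfl⟩ := zClosedQbar_iff.1 hG
  refine zClosedQbar_iff.2 ⟨Set.image2 (· * ·) P Q, Set.ext fun z => ?_⟩
  simp only [Set.mem_union, Set.mem_ofPred_eq, Set.forall_mem_image2, map_mul, mul_eq_zero]
  refine ⟨fun h p hp q hq => h.imp (· p hp) (· q hq), fun h => or_iff_not_imp_left.2 ?_⟩
  simp only [not_forall]
  exact fun ⟨p, hp, hpz⟩ q hq => (h p hp q hq).resolve_left hpz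

theorem zClosedQbar_compl_torus (n : ℕ) : ZClosedQbar n {z | ∀ i, z i ≠ 0}ᶜ := by
  refine zClosedQbar_iff.2 ⟨{∏ i, X i}, Set.ext fun z => ?_⟩
  simp [Finset.prod_eq_zero_iff]

theorem ZClosedTorusQbar.exists_eq_torus_inter (hS : ZClosedTorusQbar n S) :
    ∃ F, ZClosedQbar n F ∧ S = {z | ∀ i, z i ≠ 0} ∩ F := by
  obtain ⟨P, hP, rfl⟩ := hS
  exact ⟨_, ⟨P, hP, rfl⟩, rfl⟩

theorem ConstructibleTorusQbar.constructibleQbar (hS : ConstructibleTorusQbar n S) :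
    ConstructibleQbar n S := by
  obtain ⟨k, F, G, hFG, rfl⟩ := hS
  choose F' hF' hFF' using fun i => (hFG i).1.exists_eq_torus_inter
  choose G' hG' hGG' using fun i => (hFG i).2.exists_eq_torus_inter
  set T : Set (Fin n → ℂ) := {z | ∀ i, z i ≠ 0}
  refine ⟨k, fun i => F' i, fun i => G' i ∪ Tᶜ,
    fun i => ⟨hF' i, (hG' i).union (zClosedQbar_compl_torus n)⟩, Set.iUnion_congr fun i => ?_⟩
  rw [hFF', hGG']
  ext z
  simp only [Set.mem_sdiff, Set.mem_inter_iff, Set.mem_union, Set.mem_compl_iff]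
  tauto

theorem ConstructibleQbar.eventually_exists_apply_eq (hS : ConstructibleQbar n S)
    {z : Fin n → ℂ} (hz : z ∈ S) {j : Fin n} (hj : Transcendental ℚ (z j)) :
    ∀ᶠ c : QBar in Filter.cofinite,
      ∃ w ∈ S, w j = c ∧ ∀ i, IsAlgebraic ℚ (z i) → w i = z i := by
  obtain ⟨k, F, G, hFG, rfl⟩ := hS
  obtain ⟨i, hzF, hzG⟩ := Set.mem_iUnion.1 hz
  obtain ⟨P, hP⟩ := zClosedQbar_iff.1 (hFG i).1
  obtain ⟨Q, hQ⟩ := zClosedQbar_iff.1 (hFG i).2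
  simp only [hP, hQ, Set.mem_ofPred_eq, not_forall] at hzF hzG
  obtain ⟨g, hgQ, hgz⟩ := hzG
  filter_upwards [eventually_exists_specialization z (transcendental_qBar_iff.2 hj) hgz]
    with c ⟨w, hwj, hgw, hw⟩
  have aeval_coe (f : MvPolynomial (Fin n) QBar) :
      aeval (fun i => (w i : ℂ)) f = ((aeval w f : QBar) : ℂ) :=
    aeval_algebraMap_apply ℂ w f
  refine ⟨fun i => w i, Set.mem_iUnion.2 ⟨i, ?_, ?_⟩, congrArg _ hwj, fun l hl => ?_⟩
  · rw [hP]
    exact fun p hp => by rw [aeval_coe, hw p (hzF p hp), ZeroMemClass.coe_zero]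
  · rw [hQ]
    exact fun h => hgw <| Subtype.ext <| by rw [← aeval_coe, h g hgQ, ZeroMemClass.coe_zero]
  · let a : QBar := ⟨z l, mem_algebraicClosure_iff.2 hl⟩
    have hwa : aeval w (X l - C a : MvPolynomial (Fin n) QBar) = 0 := hw _ <| by
      rw [map_sub, aeval_X, aeval_C]
      exact sub_self _
    rw [map_sub, aeval_X, aeval_C, sub_eq_zero] at hwa
    exact congrArg ((↑) : QBar → ℂ) hwa

end ConstructibleSets

section SchwarzLemma

variable {E : Type*} [NormedAddCommGroup E] [NormedSpace ℂ E] [CompleteSpace E]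

theorem exists_differentiable_eq_prod_sub_smul {F : ℂ → E} (hF : Differentiable ℂ F)
    {s : Finset ℂ} (hs : ∀ w ∈ s, F w = 0) :
    ∃ G : ℂ → E, Differentiable ℂ G ∧ ∀ z, F z = (∏ w ∈ s, (z - w)) • G z := by
  induction s using Finset.induction_on generalizing F with
  | empty => exact ⟨F, hF, fun z => by rw [Finset.prod_empty, one_smul]⟩
  | insert a s ha ih =>
    have hslope : Differentiable ℂ (dslope F a) := differentiableOn_univ.1 <|
      (Complex.differentiableOn_dslope Filter.univ_mem).2 hF.differentiableOn
    have hfactor (z : ℂ) : F z = (z - a) • dslope F a z := by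
      rw [sub_smul_dslope, hs a (Finset.mem_insert_self a s), sub_zero]
    obtain ⟨G, hG, hFG⟩ := ih hslope fun w hw => by
      have hwa : w - a ≠ 0 := sub_ne_zero.2 fun h => ha (h ▸ hw)
      exact (smul_eq_zero_iff_right hwa).1 <|
        (hfactor w).symm.trans (hs w (Finset.mem_insert_of_mem hw))
    exact ⟨G, hG, fun z => by rw [hfactor, hFG, Finset.prod_insert ha, mul_smul]⟩

theorem norm_le_mul_pow_card_of_forall_eq_zero {F : ℂ → E} (hF : Differentiable ℂ F)
    {s : Finset ℂ} (hs : ∀ w ∈ s, F w = 0) {r R B : ℝ} (hrR : r < R) (hsr : ∀ w ∈ s, ‖w‖ ≤ r)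
    (hB : ∀ z, ‖z‖ = R → ‖F z‖ ≤ B) {t : ℂ} (ht : ‖t‖ ≤ r) :
    ‖F t‖ ≤ B * (2 * r / (R - r)) ^ s.card := by
  obtain ⟨G, hG, hFG⟩ := exists_differentiable_eq_prod_sub_smul hF hs
  have hr : 0 ≤ r := (norm_nonneg t).trans ht
  have hRr : 0 < R - r := sub_pos.2 hrR
  have hG_sphere (z : ℂ) (hz : ‖z‖ = R) : ‖G z‖ ≤ B / (R - r) ^ s.card := by
    have hprod : (R - r) ^ s.card ≤ ‖∏ w ∈ s, (z - w)‖ := by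
      rw [norm_prod, ← Finset.prod_const]
      refine Finset.prod_le_prod (fun w _ => hRr.le) fun w hw => ?_
      linarith [norm_sub_norm_le z w, hsr w hw]
    rw [le_div_iff₀' (by positivity)]
    calc (R - r) ^ s.card * ‖G z‖ ≤ ‖∏ w ∈ s, (z - w)‖ * ‖G z‖ := by gcongr
      _ = ‖F z‖ := by rw [hFG, norm_smul]
      _ ≤ B := hB z hz
  have hG_t : ‖G t‖ ≤ B / (R - r) ^ s.card := by
    refine Complex.norm_le_of_forall_mem_frontier_norm_le (U := Metric.ball 0 R)
      Metric.isBounded_ball hG.diffContOnCl (fun z hz => hG_sphere z ?_) (subset_closure ?_)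
    · rwa [frontier_ball _ (hr.trans_lt hrR).ne', mem_sphere_zero_iff_norm] at hz
    · exact mem_ball_zero_iff.2 (ht.trans_lt hrR)
  have hprod : ‖∏ w ∈ s, (t - w)‖ ≤ (2 * r) ^ s.card := by
    rw [norm_prod, ← Finset.prod_const]
    refine Finset.prod_le_prod (fun w _ => norm_nonneg _) fun w hw => ?_
    linarith [norm_sub_le t w, hsr w hw]
  calc ‖F t‖ = ‖∏ w ∈ s, (t - w)‖ * ‖G t‖ := by rw [hFG, norm_smul]
    _ ≤ (2 * r) ^ s.card * (B / (R - r) ^ s.card) := by gcongr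
    _ = B * (2 * r / (R - r)) ^ s.card := by rw [div_pow]; ring

end SchwarzLemma

section Growth

theorem eventually_mul_log_lt_sqrt {H : ℝ} (hH : 0 < H) (C : ℝ) :
    ∀ᶠ x : ℝ in Filter.atTop, C * Real.log (H * x) < √x := by
  have hlog : (fun x => C * (Real.log H + Real.log x)) =o[Filter.atTop] fun x => √x := by
    simp only [Real.sqrt_eq_rpow]
    refine ((Asymptotics.isLittleO_const_left.2 (Or.inr ?_)).add
      (isLittleO_log_rpow_atTop one_half_pos)).const_mul_left C
    exact tendsto_norm_atTop_atTop.comp (tendsto_rpow_atTop one_half_pos)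
  filter_upwards [hlog.def one_half_pos, Filter.eventually_gt_atTop 0] with x hx hx_pos
  have hsqrt : 0 < √x := Real.sqrt_pos.2 hx_pos
  rw [Real.norm_of_nonneg hsqrt.le] at hx
  rw [Real.log_mul hH.ne' hx_pos.ne']
  linarith [Real.le_norm_self (C * (Real.log H + Real.log x))]

theorem eventually_pow_lt_two_pow_sq {H : ℝ} (hH : 1 ≤ H) (C : ℕ) :
    ∀ᶠ M : ℕ in Filter.atTop, ∀ N : ℕ, N ^ 2 ≤ M → (H * M) ^ (C * (N * M)) < 2 ^ M ^ 2 := by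
  have hH_pos : 0 < H := one_pos.trans_le hH
  filter_upwards [tendsto_natCast_atTop_atTop.eventually
    (eventually_mul_log_lt_sqrt hH_pos (C / Real.log 2)), Filter.eventually_gt_atTop 0]
    with M hlog hM N hNM
  have hM_pos : (0 : ℝ) < M := Nat.cast_pos.2 hM
  have hM_one : (1 : ℝ) ≤ M := Nat.one_le_cast.2 hM
  have hlog2 : 0 < Real.log 2 := Real.log_pos one_lt_two
  have hlogHM : 0 ≤ Real.log (H * M) := Real.log_nonneg (one_le_mul_of_one_le_of_one_le hH hM_one)
  have hN : (N : ℝ) ≤ √M := Real.le_sqrt_of_sq_le (mod_cast hNM)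
  rw [div_mul_eq_mul_div, div_lt_iff₀ hlog2] at hlog
  rw [← Real.log_lt_log_iff (by positivity) (by positivity), Real.log_pow, Real.log_pow]
  push_cast
  calc C * (N * M) * Real.log (H * M) = N * M * (C * Real.log (H * M)) := by ring
    _ ≤ √M * M * (C * Real.log (H * M)) := by gcongr
    _ < √M * M * (√M * Real.log 2) := by gcongr
    _ = √M ^ 2 * M * Real.log 2 := by ring
    _ = M ^ 2 * Real.log 2 := by rw [Real.sq_sqrt hM_pos.le, sq]

end Growth

section NumberFieldBounds

open NumberField

universe u v

variable (K : Type*) [Field K] [NumberField K]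

theorem exists_house_le_of_card_eq_two_mul : ∃ C : ℝ,
    ∀ {α : Type u} {β : Type v} [Fintype α] [Fintype β] (a : Matrix α β (𝓞 K)) {A : ℝ}, a ≠ 0 →
      Fintype.card β = 2 * Fintype.card α → (∀ k l, house (a k l : K) ≤ A) →
      ∃ ξ : β → 𝓞 K, ξ ≠ 0 ∧ a.mulVec ξ = 0 ∧
        ∀ l, house (ξ l : K) ≤ C * Fintype.card β * A := by
  classical
  have hsiegel : ∃ c : ℝ, ∀ {α : Type u} {β : Type v} [Fintype α] [Fintype β]
      (a : Matrix α β (𝓞 K)) {A : ℝ}, a ≠ 0 → 0 < Fintype.card α → Fintype.card α < Fintype.card β →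
      (∀ k l, house (a k l : K) ≤ A) → ∃ ξ : β → 𝓞 K, ξ ≠ 0 ∧ a.mulVec ξ = 0 ∧ ∀ l,
        house (ξ l : K) ≤ c * (c * Fintype.card β * A) ^
          ((Fintype.card α : ℝ) / (Fintype.card β - Fintype.card α)) :=
    ⟨_, fun a _ ha hα hαβ hA =>
      house.exists_ne_zero_int_vec_house_le K a ha hα hαβ rfl hA rfl⟩
  obtain ⟨c, hc⟩ := hsiegel
  refine ⟨c ^ 2, fun {α β} _ _ a A ha hcard hA => ?_⟩
  have hα : 0 < Fintype.card α := Fintype.card_pos_iff.2 <| by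
    by_contra hempty
    rw [not_nonempty_iff] at hempty
    exact ha (Subsingleton.elim _ _)
  obtain ⟨ξ, hξ, haξ, hle⟩ := hc a ha hα (by omega) hA
  refine ⟨ξ, hξ, haξ, fun l => (hle l).trans_eq ?_⟩
  have hexp : (Fintype.card α : ℝ) / (Fintype.card β - Fintype.card α) = 1 := by
    rw [hcard]
    push_cast
    rw [two_mul, add_sub_cancel_right, div_self (Nat.cast_ne_zero.2 hα.ne')]
  rw [hexp, Real.rpow_one]
  ring

variable {K}

theorem one_le_norm_mul_house_pow (σ : K →+* ℂ) {v : 𝓞 K} (hv : v ≠ 0) :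
    1 ≤ ‖σ v‖ * house (v : K) ^ (Module.finrank ℚ K - 1) := by
  have hnorm : 1 ≤ ‖Algebra.norm ℚ (v : K)‖ := by
    rw [← Algebra.coe_norm_int v, ← Rat.norm_cast_real, Rat.cast_intCast, Real.norm_eq_abs,
      ← Int.cast_abs]
    exact_mod_cast Int.one_le_abs (Algebra.norm_ne_zero_iff.2 hv)
  exact hnorm.trans (norm_norm_le_norm_mul_house_pow (v : K) σ)

theorem house_pow_mul_pow_le {u v : K} {X : ℝ} (hu : house u ≤ X) (hv : house v ≤ X) (a b : ℕ) :
    house (u ^ a * v ^ b) ≤ X ^ (a + b) := by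
  have hX : 0 ≤ X := (house_nonneg u).trans hu
  calc house (u ^ a * v ^ b) ≤ house u ^ a * house v ^ b :=
        (house_mul_le _ _).trans <| mul_le_mul (house_pow_le u a) (house_pow_le v b)
          (house_nonneg _) (pow_nonneg (house_nonneg u) a)
    _ ≤ X ^ a * X ^ b := mul_le_mul (pow_le_pow_left₀ (house_nonneg u) hu a)
        (pow_le_pow_left₀ (house_nonneg v) hv b) (pow_nonneg (house_nonneg v) b) (pow_nonneg hX a)
    _ = X ^ (a + b) := (pow_add X a b).symm

theorem exists_common_denominator (s : Finset K) :
    ∃ D : 𝓞 K, D ≠ 0 ∧ ∀ x ∈ s, ∃ y : 𝓞 K, (y : K) = D * x := by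
  obtain ⟨m, hm, hint⟩ := exists_integral_multiples ℤ ℚ s
  refine ⟨m, Int.cast_ne_zero.2 hm, fun x hx => ⟨⟨m • x, hint x hx⟩, ?_⟩⟩
  simp

end NumberFieldBounds

section ExponentialPolynomials

open Complex

theorem eq_zero_of_forall_sum_mul_pow_mul_exp_pow_eq_zero {m n : ℕ} {ℓ : ℂ} (hℓ : ℓ ≠ 0)
    {c : Fin m × Fin n → ℂ}
    (h : ∀ t : ℂ, ∑ l, c l * (t ^ (l.1 : ℕ) * exp (ℓ * t) ^ (l.2 : ℕ)) = 0) : c = 0 := by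
  -- Translating `t` by the periods of `e ^ (ℓ t)` changes only the powers of `t`, so a Vandermonde
  -- determinant separates them; a second one separates the powers of `e ^ (ℓ t)`.
  have inner_sum (t : ℂ) (i : Fin m) : ∑ j : Fin n, c (i, j) * exp (ℓ * t) ^ (j : ℕ) = 0 := by
    let shift (k : Fin m) : ℂ := t + (k : ℕ) * (2 * Real.pi * I / ℓ)
    have shift_injective : Function.Injective shift := fun k k' hk =>
      Fin.val_injective <| Nat.cast_injective (R := ℂ) <|
        mul_right_cancel₀ (div_ne_zero two_pi_I_ne_zero hℓ) (add_left_cancel hk)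
    have exp_shift (k : Fin m) : exp (ℓ * shift k) = exp (ℓ * t) := by
      have harg : ℓ * shift k = ℓ * t + (k : ℕ) * (2 * Real.pi * I) := by
        simp only [shift]
        field_simp
      rw [harg, exp_periodic.nat_mul]
    refine congrFun (Matrix.eq_zero_of_forall_index_sum_mul_pow_eq_zero shift_injective
      (v := fun i => ∑ j : Fin n, c (i, j) * exp (ℓ * t) ^ (j : ℕ)) fun k => ?_) i
    rw [← h (shift k), Fintype.sum_prod_type]
    refine Finset.sum_congr rfl fun i _ => ?_
    rw [Finset.sum_mul, exp_shift]
    exact Finset.sum_congr rfl fun j _ => by ring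
  funext ⟨i, j⟩
  let node (k : Fin n) : ℂ := (k : ℕ) + 1
  have node_injective : Function.Injective node := fun k k' hk =>
    Fin.val_injective <| Nat.cast_injective (R := ℂ) (add_right_cancel hk)
  refine congrFun (Matrix.eq_zero_of_forall_index_sum_mul_pow_eq_zero node_injective
    (v := fun j => c (i, j)) fun k => ?_) j
  have hexp := inner_sum (log (node k) / ℓ) i
  rwa [mul_div_cancel₀ _ hℓ, exp_log (Nat.cast_add_one_ne_zero _)] at hexp

theorem injective_natCast_add_natCast_mul {β : ℂ} (hβ : β ∉ Set.range ((↑) : ℚ → ℂ)) :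
    Function.Injective fun p : ℕ × ℕ => (p.1 + p.2 * β : ℂ) := by
  rintro ⟨x, y⟩ ⟨x', y'⟩ h
  simp only at h
  obtain rfl : y = y' := by
    by_contra hne
    refine hβ ⟨(x' - x) / (y - y'), ?_⟩
    push_cast
    rw [div_eq_iff (sub_ne_zero.2 (Nat.cast_injective.ne hne))]
    linear_combination -h
  rw [Prod.mk.injEq, Nat.cast_injective (R := ℂ) (add_right_cancel h)]
  exact ⟨rfl, rfl⟩

end ExponentialPolynomials

section GelfondSchneider

open NumberField

/-- The input of Schneider's method: algebraic `β`, `e ^ ℓ` and `e ^ (ℓ * β)`, written as fractions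
`b / D`, `p / D` and `q / D` of algebraic integers of a number field embedded in `ℂ` by `σ`. -/
structure SchneiderData (K : Type*) [Field K] where
  σ : K →+* ℂ
  ℓ : ℂ
  β : ℂ
  D : 𝓞 K
  b : 𝓞 K
  p : 𝓞 K
  q : 𝓞 K
  D_ne_zero : D ≠ 0
  map_b : σ b = σ D * β
  map_p : σ p = σ D * Complex.exp ℓ
  map_q : σ q = σ D * Complex.exp (ℓ * β)

namespace SchneiderData

section Values

variable {K : Type*} [Field K] (S : SchneiderData K) {m n : ℕ}

/-- The point `x + y * β` of the lattice on which the auxiliary function is made to vanish. -/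
def point (x y : ℕ) : ℂ := x + y * S.β

/-- The auxiliary function `∑ c (i, j) * t ^ i * e ^ (j * ℓ * t)` of Schneider's method. -/
def auxFun (c : Fin m × Fin n → 𝓞 K) (t : ℂ) : ℂ :=
  ∑ l, S.σ (c l) * (t ^ (l.1 : ℕ) * Complex.exp (S.ℓ * t) ^ (l.2 : ℕ))

variable (m n) in
/-- The algebraic integer `D ^ (m + (x + y) * n) * t ^ i * e ^ (j * ℓ * t)` for `t = x + y * β`. -/
def monomialValue (x y : ℕ) (l : Fin m × Fin n) : 𝓞 K :=
  S.D ^ (m - l.1 : ℕ) * (S.D * x + y * S.b) ^ (l.1 : ℕ) *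
    ((S.D ^ (x + y)) ^ (n - l.2 : ℕ) * (S.p ^ x * S.q ^ y) ^ (l.2 : ℕ))

/-- The value of the auxiliary function at `x + y * β`, multiplied by the common denominator
`D ^ (m + (x + y) * n)`. -/
def auxValue (c : Fin m × Fin n → 𝓞 K) (x y : ℕ) : 𝓞 K :=
  ∑ l, S.monomialValue m n x y l * c l

theorem differentiable_auxFun (c : Fin m × Fin n → 𝓞 K) : Differentiable ℂ (S.auxFun c) := by
  unfold auxFun
  fun_prop

theorem map_D_ne_zero : S.σ S.D ≠ 0 :=
  (map_ne_zero S.σ).2 (RingOfIntegers.coe_ne_zero_iff.2 S.D_ne_zero)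

theorem exp_mul_point (x y : ℕ) :
    Complex.exp (S.ℓ * S.point x y) = Complex.exp S.ℓ ^ x * Complex.exp (S.ℓ * S.β) ^ y := by
  rw [point, ← Complex.exp_nat_mul, ← Complex.exp_nat_mul, ← Complex.exp_add]
  ring_nf

theorem map_monomialValue (x y : ℕ) (l : Fin m × Fin n) :
    S.σ (S.monomialValue m n x y l) = S.σ S.D ^ (m + (x + y) * n) *
      (S.point x y ^ (l.1 : ℕ) * Complex.exp (S.ℓ * S.point x y) ^ (l.2 : ℕ)) := by
  have clear_denom (d t : ℂ) {i k : ℕ} (hi : i ≤ k) :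
      d ^ (k - i) * (d * t) ^ i = d ^ k * t ^ i := by
    rw [mul_pow, ← mul_assoc, pow_sub_mul_pow d hi]
  have map_linear : S.σ S.D * x + y * S.σ S.b = S.σ S.D * S.point x y := by
    rw [S.map_b, point]
    ring
  have map_exp : S.σ S.p ^ x * S.σ S.q ^ y =
      S.σ S.D ^ (x + y) * Complex.exp (S.ℓ * S.point x y) := by
    rw [S.map_p, S.map_q, S.exp_mul_point]
    ring
  simp only [monomialValue, map_mul, map_pow, map_add, map_natCast]
  rw [map_linear, map_exp, clear_denom _ _ l.1.2.le, clear_denom _ _ l.2.2.le]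
  ring

theorem map_auxValue (c : Fin m × Fin n → 𝓞 K) (x y : ℕ) :
    S.σ (S.auxValue c x y) = S.σ S.D ^ (m + (x + y) * n) * S.auxFun c (S.point x y) := by
  simp only [auxValue, map_sum, map_mul, map_monomialValue, auxFun, Finset.mul_sum]
  exact Finset.sum_congr rfl fun l _ => by ring

theorem auxFun_point_eq_zero {c : Fin m × Fin n → 𝓞 K} {x y : ℕ} (h : S.auxValue c x y = 0) :
    S.auxFun c (S.point x y) = 0 := by
  have hmap := S.map_auxValue c x y
  rw [h] at hmap
  simp only [map_zero] at hmap
  exact (mul_eq_zero.1 hmap.symm).resolve_left (pow_ne_zero _ S.map_D_ne_zero)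

theorem norm_point_le {x y M : ℕ} (hx : x ≤ M) (hy : y ≤ M) :
    ‖S.point x y‖ ≤ (1 + ‖S.β‖) * M := by
  have hx' : (x : ℝ) ≤ M := Nat.cast_le.2 hx
  have hy' : (y : ℝ) ≤ M := Nat.cast_le.2 hy
  calc ‖S.point x y‖ ≤ x + y * ‖S.β‖ := by
        simpa only [point, norm_mul, Complex.norm_natCast] using norm_add_le (x : ℂ) (y * S.β)
    _ ≤ M + M * ‖S.β‖ := by gcongr
    _ = (1 + ‖S.β‖) * M := by ring

/-- The lattice points `x + y * β` with `x, y < M`. -/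
def lattice (M : ℕ) : Finset ℂ :=
  (Finset.range M ×ˢ Finset.range M).image fun v => S.point v.1 v.2

theorem card_lattice (hβ : S.β ∉ Set.range ((↑) : ℚ → ℂ)) (M : ℕ) :
    (S.lattice M).card = M ^ 2 := by
  have hinj : Function.Injective fun v : ℕ × ℕ => S.point v.1 v.2 :=
    injective_natCast_add_natCast_mul hβ
  rw [lattice, Finset.card_image_of_injective _ hinj, Finset.card_product, Finset.card_range, sq]

theorem forall_mem_lattice {M : ℕ} {P : ℂ → Prop} :
    (∀ w ∈ S.lattice M, P w) ↔ ∀ x < M, ∀ y < M, P (S.point x y) := by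
  simp only [lattice, Finset.forall_mem_image, Finset.mem_product, Finset.mem_range, Prod.forall]
  exact ⟨fun h x hx y hy => h x y ⟨hx, hy⟩, fun h x y hxy => h x hxy.1 y hxy.2⟩

end Values

/-- The unit in which all quantities of Schneider's method are measured: they are bounded by fixed
powers of `(H * M) ^ (n * M)` for a constant `H`. -/
def scale (H : ℝ) (n M : ℕ) : ℝ := (H * M) ^ (n * M)

section Scale

variable {H : ℝ} {n M : ℕ}

theorem pow_le_scale_pow (hHM : 1 ≤ H * M) {e k : ℕ} (he : e ≤ k * (n * M)) :
    (H * M) ^ e ≤ scale H n M ^ k := by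
  rw [scale, ← pow_mul, mul_comm (n * M)]
  exact pow_le_pow_right₀ hHM he

theorem one_le_scale (hHM : 1 ≤ H * M) : 1 ≤ scale H n M :=
  one_le_pow₀ hHM

theorem mul_le_scale (hHM : 1 ≤ H * M) (hn : 0 < n) (hM : 0 < M) : H * M ≤ scale H n M :=
  le_self_pow₀ hHM (Nat.mul_pos hn hM).ne'

theorem scale_mono (hH : 1 ≤ H) {M' : ℕ} (hM : 0 < M) (hMM' : M ≤ M') :
    scale H n M ≤ scale H n M' := by
  have hHM : 1 ≤ H * M := one_le_mul_of_one_le_of_one_le hH (Nat.one_le_cast.2 hM)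
  have hbase : H * M ≤ H * M' := by gcongr
  calc scale H n M ≤ (H * M') ^ (n * M) := pow_le_pow_left₀ (zero_le_one.trans hHM) hbase _
    _ ≤ scale H n M' := pow_le_pow_right₀ (hHM.trans hbase) (Nat.mul_le_mul_left n hMM')

theorem mul_le_scale_sq {m : ℕ} (hH : 2 ≤ H) (hn : 0 < n) (hm : m ≤ 2 * (n * M))
    (hnM : n ^ 2 ≤ M) : (m * n : ℝ) ≤ scale H n M ^ 2 := by
  have hM : 0 < M := (pow_pos hn 2).trans_le hnM
  have hHM : 1 ≤ H * M :=
    one_le_mul_of_one_le_of_one_le (one_le_two.trans hH) (Nat.one_le_cast.2 hM)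
  have hmn : m * n ≤ 2 * M ^ 2 := by
    calc m * n ≤ 2 * (n * M) * n := Nat.mul_le_mul_right n hm
      _ = 2 * (n ^ 2 * M) := by ring
      _ ≤ 2 * (M * M) := by gcongr
      _ = 2 * M ^ 2 := by ring
  calc (m * n : ℝ) ≤ 2 * M ^ 2 := mod_cast hmn
    _ ≤ H ^ 2 * M ^ 2 := by gcongr; nlinarith
    _ = (H * M) ^ 2 := by ring
    _ ≤ scale H n M ^ 2 := pow_le_scale_pow hHM (Nat.le_mul_of_pos_right 2 (Nat.mul_pos hn hM))

theorem exists_forall_scale_pow_lt (hH : 1 ≤ H) (C : ℕ) :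
    ∃ n, 0 < n ∧ ∀ M, n ^ 2 ≤ M → scale H n M ^ C < 2 ^ M ^ 2 := by
  obtain ⟨M₀, hM₀⟩ := Filter.eventually_atTop.1 (eventually_pow_lt_two_pow_sq hH C)
  refine ⟨M₀ + 1, M₀.succ_pos, fun M hM => ?_⟩
  have hM₀M : M₀ ≤ M := M₀.le_succ.trans ((Nat.le_self_pow two_ne_zero _).trans hM)
  rw [scale, ← pow_mul, mul_comm _ C]
  exact hM₀ M hM₀M _ hM

end Scale

section Bounds

variable {K : Type*} [Field K] [NumberField K] (S : SchneiderData K)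

/-- `H` dominates the constants attached to the data `S`, with `‖t‖ ≤ 5 * (1 + ‖β‖) * M` being the
disc on which the auxiliary function is estimated. -/
structure IsBound (H : ℝ) : Prop where
  two_le : 2 ≤ H
  house_D_add_house_b_le : house (S.D : K) + house (S.b : K) ≤ H
  house_p_le : house (S.p : K) ≤ H
  house_q_le : house (S.q : K) ≤ H
  radius_le : 5 * (1 + ‖S.β‖) ≤ H
  exp_radius_le : Real.exp (‖S.ℓ‖ * (5 * (1 + ‖S.β‖))) ≤ H

theorem exists_isBound (C : ℝ) : ∃ H, S.IsBound H ∧ C ≤ H := by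
  obtain ⟨H, hH⟩ := (Set.toFinite {2, house (S.D : K) + house (S.b : K), house (S.p : K),
    house (S.q : K), 5 * (1 + ‖S.β‖), Real.exp (‖S.ℓ‖ * (5 * (1 + ‖S.β‖))), C}).bddAbove
  simp only [mem_upperBounds, Set.mem_insert_iff, Set.mem_singleton_iff, forall_eq_or_imp,
    forall_eq] at hH
  obtain ⟨h₁, h₂, h₃, h₄, h₅, h₆, h₇⟩ := hH
  exact ⟨H, ⟨h₁, h₂, h₃, h₄, h₅, h₆⟩, h₇⟩

variable {S} {H : ℝ} {m n M : ℕ}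

namespace IsBound

theorem le_mul (hH : S.IsBound H) (hM : 0 < M) : H ≤ H * M :=
  le_mul_of_one_le_right (zero_le_two.trans hH.two_le) (Nat.one_le_cast.2 hM)

theorem one_le_mul (hH : S.IsBound H) (hM : 0 < M) : 1 ≤ H * M :=
  one_le_two.trans (hH.two_le.trans (hH.le_mul hM))

theorem house_D_le (hH : S.IsBound H) : house (S.D : K) ≤ H :=
  (le_add_of_nonneg_right (house_nonneg _)).trans hH.house_D_add_house_b_le

theorem house_linear_le (hH : S.IsBound H) {x y : ℕ} (hx : x ≤ M) (hy : y ≤ M) :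
    house (S.D * x + y * S.b : K) ≤ H * M := by
  have hx' : (x : ℝ) ≤ M := Nat.cast_le.2 hx
  have hy' : (y : ℝ) ≤ M := Nat.cast_le.2 hy
  calc house (S.D * x + y * S.b : K) ≤ x * house (S.D : K) + y * house (S.b : K) := by
        rw [mul_comm (S.D : K), ← house_nat_mul, ← house_nat_mul]
        exact house_add_le _ _
    _ ≤ M * house (S.D : K) + M * house (S.b : K) := by
        gcongr <;> exact house_nonneg _
    _ = (house (S.D : K) + house (S.b : K)) * M := by ring
    _ ≤ H * M := by gcongr; exact hH.house_D_add_house_b_le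

theorem house_monomialValue_le (hH : S.IsBound H) (hM : 0 < M) (hm : m ≤ 2 * (n * M)) {x y : ℕ}
    (hx : x ≤ M) (hy : y ≤ M) (l : Fin m × Fin n) :
    house (S.monomialValue m n x y l : K) ≤ scale H n M ^ 4 := by
  have hHX := hH.le_mul hM
  have hX : 0 ≤ H * M := zero_le_one.trans (hH.one_le_mul hM)
  have hpoly : house ((S.D : K) ^ (m - l.1 : ℕ) * (S.D * x + y * S.b : K) ^ (l.1 : ℕ)) ≤
      (H * M) ^ m := by
    have h := house_pow_mul_pow_le (hH.house_D_le.trans hHX) (hH.house_linear_le hx hy)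
      (m - l.1 : ℕ) l.1
    rwa [Nat.sub_add_cancel l.1.2.le] at h
  have hexp : house (((S.D : K) ^ (x + y)) ^ (n - l.2 : ℕ) *
      ((S.p : K) ^ x * (S.q : K) ^ y) ^ (l.2 : ℕ)) ≤ (H * M) ^ ((x + y) * n) := by
    have hD : house ((S.D : K) ^ (x + y)) ≤ (H * M) ^ (x + y) :=
      (house_pow_le _ _).trans (pow_le_pow_left₀ (house_nonneg _) (hH.house_D_le.trans hHX) _)
    have h := house_pow_mul_pow_le hD (house_pow_mul_pow_le (hH.house_p_le.trans hHX)
      (hH.house_q_le.trans hHX) x y) (n - l.2 : ℕ) l.2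
    rwa [Nat.sub_add_cancel l.2.2.le, ← pow_mul (H * M)] at h
  have hexponent : m + (x + y) * n ≤ 4 * (n * M) := by nlinarith
  calc house (S.monomialValue m n x y l : K) ≤ (H * M) ^ m * (H * M) ^ ((x + y) * n) := by
        simp only [monomialValue, map_mul, map_pow, map_add, map_natCast]
        exact (house_mul_le _ _).trans
          (mul_le_mul hpoly hexp (house_nonneg _) (pow_nonneg hX m))
    _ = (H * M) ^ (m + (x + y) * n) := (pow_add _ _ _).symm
    _ ≤ scale H n M ^ 4 := pow_le_scale_pow (hH.one_le_mul hM) hexponent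

variable {c : Fin m × Fin n → 𝓞 K}

theorem house_le_scale_pow (hH : S.IsBound H) (hn : 0 < n) (hnM : n ^ 2 ≤ M)
    (hc : ∀ l, house (c l : K) ≤ scale H n (n ^ 2) ^ 7) (l : Fin m × Fin n) :
    house (c l : K) ≤ scale H n M ^ 7 :=
  (hc l).trans <| pow_le_pow_left₀
    (zero_le_one.trans (one_le_scale (hH.one_le_mul (pow_pos hn 2))))
    (scale_mono (one_le_two.trans hH.two_le) (pow_pos hn 2) hnM) 7

theorem house_auxValue_le (hH : S.IsBound H) (hn : 0 < n) (hm : m ≤ 2 * (n * M)) (hnM : n ^ 2 ≤ M)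
    (hc : ∀ l, house (c l : K) ≤ scale H n M ^ 7) {x y : ℕ} (hx : x ≤ M) (hy : y ≤ M) :
    house (S.auxValue c x y : K) ≤ scale H n M ^ 13 := by
  have hM : 0 < M := (pow_pos hn 2).trans_le hnM
  have hscale : 0 ≤ scale H n M := zero_le_one.trans (one_le_scale (hH.one_le_mul hM))
  have hterm (l : Fin m × Fin n) :
      house (S.monomialValue m n x y l * c l : K) ≤ scale H n M ^ 4 * scale H n M ^ 7 :=
    (house_mul_le _ _).trans <| mul_le_mul (hH.house_monomialValue_le hM hm hx hy l) (hc l)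
      (house_nonneg _) (pow_nonneg hscale 4)
  calc house (S.auxValue c x y : K)
      = house (∑ l, (S.monomialValue m n x y l * c l : K)) := by
        simp only [auxValue, map_sum, map_mul]
    _ ≤ ∑ l, house (S.monomialValue m n x y l * c l : K) := house_sum_le_sum_house _ _
    _ ≤ ∑ _l : Fin m × Fin n, scale H n M ^ 4 * scale H n M ^ 7 :=
        Finset.sum_le_sum fun l _ => hterm l
    _ = m * n * (scale H n M ^ 4 * scale H n M ^ 7) := by simp
    _ ≤ scale H n M ^ 2 * (scale H n M ^ 4 * scale H n M ^ 7) := by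
        gcongr
        exact mul_le_scale_sq hH.two_le hn hm hnM
    _ = scale H n M ^ 13 := by ring

theorem norm_exp_le (hH : S.IsBound H) (hM : 0 < M) {t : ℂ}
    (ht : ‖t‖ ≤ 5 * ((1 + ‖S.β‖) * M)) : ‖Complex.exp (S.ℓ * t)‖ ≤ (H * M) ^ M :=
  calc ‖Complex.exp (S.ℓ * t)‖ ≤ Real.exp (‖S.ℓ‖ * ‖t‖) := by
        rw [← norm_mul]
        exact Complex.norm_exp_le_exp_norm _
    _ ≤ Real.exp (M * (‖S.ℓ‖ * (5 * (1 + ‖S.β‖)))) := by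
        refine Real.exp_le_exp.2 ((mul_le_mul_of_nonneg_left ht (norm_nonneg _)).trans_eq ?_)
        ring
    _ = Real.exp (‖S.ℓ‖ * (5 * (1 + ‖S.β‖))) ^ M := Real.exp_nat_mul _ _
    _ ≤ (H * M) ^ M :=
        pow_le_pow_left₀ (Real.exp_nonneg _) (hH.exp_radius_le.trans (hH.le_mul hM)) M

theorem norm_auxFun_le (hH : S.IsBound H) (hn : 0 < n) (hm : m ≤ 2 * (n * M)) (hnM : n ^ 2 ≤ M)
    (hc : ∀ l, house (c l : K) ≤ scale H n M ^ 7) {t : ℂ} (ht : ‖t‖ ≤ 5 * ((1 + ‖S.β‖) * M)) :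
    ‖S.auxFun c t‖ ≤ scale H n M ^ 12 := by
  have hM : 0 < M := (pow_pos hn 2).trans_le hnM
  have hX := hH.one_le_mul hM
  have htX : ‖t‖ ≤ H * M := by
    refine ht.trans ?_
    rw [← mul_assoc]
    gcongr
    exact hH.radius_le
  have hpow (i : Fin m) : ‖t‖ ^ (i : ℕ) ≤ scale H n M ^ 2 :=
    (pow_le_pow_left₀ (norm_nonneg t) htX _).trans (pow_le_scale_pow hX (i.2.le.trans hm))
  have hexp (j : Fin n) : ‖Complex.exp (S.ℓ * t)‖ ^ (j : ℕ) ≤ scale H n M ^ 1 := by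
    refine (pow_le_pow_left₀ (norm_nonneg _) (hH.norm_exp_le hM ht) _).trans ?_
    rw [← pow_mul, mul_comm M]
    exact pow_le_scale_pow hX ((Nat.mul_le_mul_right M j.2.le).trans_eq (one_mul _).symm)
  have hscale : 0 ≤ scale H n M := zero_le_one.trans (one_le_scale hX)
  have hterm (l : Fin m × Fin n) :
      ‖S.σ (c l) * (t ^ (l.1 : ℕ) * Complex.exp (S.ℓ * t) ^ (l.2 : ℕ))‖ ≤
        scale H n M ^ 7 * (scale H n M ^ 2 * scale H n M ^ 1) := by
    rw [norm_mul, norm_mul, norm_pow, norm_pow]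
    gcongr
    exacts [(norm_embedding_le_house _ S.σ).trans (hc l), hpow l.1, hexp l.2]
  calc ‖S.auxFun c t‖
      ≤ ∑ _l : Fin m × Fin n, scale H n M ^ 7 * (scale H n M ^ 2 * scale H n M ^ 1) :=
        norm_sum_le_of_le _ fun l _ => hterm l
    _ = m * n * (scale H n M ^ 7 * (scale H n M ^ 2 * scale H n M ^ 1)) := by simp
    _ ≤ scale H n M ^ 2 * (scale H n M ^ 7 * (scale H n M ^ 2 * scale H n M ^ 1)) := by
        gcongr
        exact mul_le_scale_sq hH.two_le hn hm hnM
    _ = scale H n M ^ 12 := by ring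

theorem norm_auxFun_le_div (hH : S.IsBound H) (hβ : S.β ∉ Set.range ((↑) : ℚ → ℂ)) (hn : 0 < n)
    (hm : m ≤ 2 * (n * M)) (hnM : n ^ 2 ≤ M) (hc : ∀ l, house (c l : K) ≤ scale H n M ^ 7)
    (hzero : ∀ x < M, ∀ y < M, S.auxValue c x y = 0) {t : ℂ} (ht : ‖t‖ ≤ (1 + ‖S.β‖) * M) :
    ‖S.auxFun c t‖ ≤ scale H n M ^ 12 / 2 ^ M ^ 2 := by
  have hM : (0 : ℝ) < M := Nat.cast_pos.2 ((pow_pos hn 2).trans_le hnM)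
  set r : ℝ := (1 + ‖S.β‖) * M
  have hr : 0 < r := by positivity
  have hschwarz := norm_le_mul_pow_card_of_forall_eq_zero (S.differentiable_auxFun c)
    (S.forall_mem_lattice.2 fun x hx y hy => S.auxFun_point_eq_zero (hzero x hx y hy))
    (show r < 5 * r by linarith)
    (S.forall_mem_lattice.2 fun x hx y hy => S.norm_point_le hx.le hy.le)
    (fun z hz => hH.norm_auxFun_le hn hm hnM hc hz.le) ht
  have hratio : 2 * r / (5 * r - r) = 1 / 2 := by
    field_simp
    norm_num
  rwa [hratio, S.card_lattice hβ, one_div, inv_pow, ← div_eq_mul_inv] at hschwarz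

theorem norm_map_auxValue_le (hH : S.IsBound H) (hβ : S.β ∉ Set.range ((↑) : ℚ → ℂ)) (hn : 0 < n)
    (hm : m ≤ 2 * (n * M)) (hnM : n ^ 2 ≤ M) (hc : ∀ l, house (c l : K) ≤ scale H n M ^ 7)
    (hzero : ∀ x < M, ∀ y < M, S.auxValue c x y = 0) {x y : ℕ} (hx : x ≤ M) (hy : y ≤ M) :
    ‖S.σ (S.auxValue c x y)‖ ≤ scale H n M ^ 16 / 2 ^ M ^ 2 := by
  have hM : 0 < M := (pow_pos hn 2).trans_le hnM
  have hD : ‖S.σ S.D‖ ≤ H * M :=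
    (norm_embedding_le_house _ S.σ).trans (hH.house_D_le.trans (hH.le_mul hM))
  have hdenom : ‖S.σ S.D‖ ^ (m + (x + y) * n) ≤ scale H n M ^ 4 :=
    (pow_le_pow_left₀ (norm_nonneg _) hD _).trans <|
      pow_le_scale_pow (hH.one_le_mul hM) (by nlinarith)
  have haux := hH.norm_auxFun_le_div hβ hn hm hnM hc hzero (S.norm_point_le hx hy)
  calc ‖S.σ (S.auxValue c x y)‖
      = ‖S.σ S.D‖ ^ (m + (x + y) * n) * ‖S.auxFun c (S.point x y)‖ := by
        rw [map_auxValue, norm_mul, norm_pow]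
    _ ≤ scale H n M ^ 4 * (scale H n M ^ 12 / 2 ^ M ^ 2) := by gcongr
    _ = scale H n M ^ 16 / 2 ^ M ^ 2 := by ring

theorem auxValue_eq_zero_of_forall_lt (hH : S.IsBound H) (hβ : S.β ∉ Set.range ((↑) : ℚ → ℂ))
    (hn : 0 < n) (hm : m ≤ 2 * (n * M)) (hnM : n ^ 2 ≤ M)
    (hc : ∀ l, house (c l : K) ≤ scale H n M ^ 7)
    (hgrowth : scale H n M ^ (16 * Module.finrank ℚ K) < 2 ^ M ^ 2)
    (hzero : ∀ x < M, ∀ y < M, S.auxValue c x y = 0) {x y : ℕ} (hx : x ≤ M) (hy : y ≤ M) :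
    S.auxValue c x y = 0 := by
  by_contra hne
  set d := Module.finrank ℚ K
  have hd_pos : 0 < d := Module.finrank_pos
  have hM : 0 < M := (pow_pos hn 2).trans_le hnM
  have hscale : 1 ≤ scale H n M := one_le_scale (hH.one_le_mul hM)
  refine (one_le_norm_mul_house_pow S.σ hne).not_gt ?_
  calc ‖S.σ (S.auxValue c x y)‖ * house (S.auxValue c x y : K) ^ (d - 1)
      ≤ scale H n M ^ 16 / 2 ^ M ^ 2 * (scale H n M ^ 13) ^ (d - 1) := by
        refine mul_le_mul (hH.norm_map_auxValue_le hβ hn hm hnM hc hzero hx hy)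
          (pow_le_pow_left₀ (house_nonneg _) (hH.house_auxValue_le hn hm hnM hc hx hy) _)
          (pow_nonneg (house_nonneg _) _) (by positivity)
    _ = scale H n M ^ (16 + 13 * (d - 1)) / 2 ^ M ^ 2 := by rw [pow_add, pow_mul]; ring
    _ ≤ scale H n M ^ (16 * d) / 2 ^ M ^ 2 := by
        gcongr
        omega
    _ < 1 := (div_lt_one (by positivity)).2 hgrowth

end IsBound

variable (S) in
theorem exists_forall_lt_sq_auxValue_eq_zero : ∃ H, S.IsBound H ∧ ∀ {n : ℕ}, 0 < n →
    ∃ c : Fin (2 * (n * n ^ 2)) × Fin n → 𝓞 K, c ≠ 0 ∧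
      (∀ l, house (c l : K) ≤ scale H n (n ^ 2) ^ 7) ∧
      ∀ x < n ^ 2, ∀ y < n ^ 2, S.auxValue c x y = 0 := by
  obtain ⟨C, hC⟩ := exists_house_le_of_card_eq_two_mul K
  obtain ⟨H, hH, hCH⟩ := S.exists_isBound C
  refine ⟨H, hH, fun {n} hn => ?_⟩
  have hM : 0 < n ^ 2 := pow_pos hn 2
  let a : Matrix (Fin (n ^ 2) × Fin (n ^ 2)) (Fin (2 * (n * n ^ 2)) × Fin n) (𝓞 K) :=
    fun v => S.monomialValue (2 * (n * n ^ 2)) n v.1 v.2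
  have ha : a ≠ 0 := fun h => by
    have hentry := congrFun₂ h (⟨0, hM⟩, ⟨0, hM⟩) (⟨0, by positivity⟩, ⟨0, hn⟩)
    simp [a, monomialValue, S.D_ne_zero] at hentry
  have hcard : Fintype.card (Fin (2 * (n * n ^ 2)) × Fin n) =
      2 * Fintype.card (Fin (n ^ 2) × Fin (n ^ 2)) := by
    simp only [Fintype.card_prod, Fintype.card_fin]
    ring
  obtain ⟨c, hc, hac, hle⟩ := hC a ha hcard fun v l =>
    hH.house_monomialValue_le hM le_rfl v.1.2.le v.2.2.le l
  refine ⟨c, hc, fun l => (hle l).trans ?_, fun x hx y hy => congrFun hac (⟨x, hx⟩, ⟨y, hy⟩)⟩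
  have hHM := hH.one_le_mul hM
  have hscale : 0 ≤ scale H n (n ^ 2) := zero_le_one.trans (one_le_scale hHM)
  have hC_le : C ≤ scale H n (n ^ 2) :=
    hCH.trans ((hH.le_mul hM).trans (mul_le_scale hHM hn hM))
  have hcard_le : (Fintype.card (Fin (2 * (n * n ^ 2)) × Fin n) : ℝ) ≤ scale H n (n ^ 2) ^ 2 := by
    rw [Fintype.card_prod, Fintype.card_fin, Fintype.card_fin, Nat.cast_mul]
    exact mul_le_scale_sq hH.two_le hn le_rfl le_rfl
  calc C * Fintype.card (Fin (2 * (n * n ^ 2)) × Fin n) * scale H n (n ^ 2) ^ 4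
      ≤ scale H n (n ^ 2) * scale H n (n ^ 2) ^ 2 * scale H n (n ^ 2) ^ 4 := by gcongr
    _ = scale H n (n ^ 2) ^ 7 := by ring

namespace IsBound

variable {c : Fin m × Fin n → 𝓞 K}

theorem auxValue_eq_zero (hH : S.IsBound H) (hβ : S.β ∉ Set.range ((↑) : ℚ → ℂ)) (hn : 0 < n)
    (hm : m ≤ 2 * (n * n ^ 2)) (hc : ∀ l, house (c l : K) ≤ scale H n (n ^ 2) ^ 7)
    (hgrowth : ∀ M, n ^ 2 ≤ M → scale H n M ^ (16 * Module.finrank ℚ K) < 2 ^ M ^ 2)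
    (hzero : ∀ x < n ^ 2, ∀ y < n ^ 2, S.auxValue c x y = 0) (x y : ℕ) :
    S.auxValue c x y = 0 := by
  have hvanish (M : ℕ) (hM : n ^ 2 ≤ M) : ∀ x < M, ∀ y < M, S.auxValue c x y = 0 := by
    induction M, hM using Nat.le_induction with
    | base => exact hzero
    | succ M hM ih =>
      exact fun x hx y hy => hH.auxValue_eq_zero_of_forall_lt hβ hn (hm.trans (by gcongr)) hM
        (hH.house_le_scale_pow hn hM hc) (hgrowth M hM) ih (Nat.lt_succ_iff.1 hx)
        (Nat.lt_succ_iff.1 hy)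
  exact hvanish (n ^ 2 + x + y + 1) (by omega) x (by omega) y (by omega)

theorem auxFun_eq_zero (hH : S.IsBound H) (hβ : S.β ∉ Set.range ((↑) : ℚ → ℂ)) (hn : 0 < n)
    (hm : m ≤ 2 * (n * n ^ 2)) (hc : ∀ l, house (c l : K) ≤ scale H n (n ^ 2) ^ 7)
    (hgrowth : ∀ M, n ^ 2 ≤ M → scale H n M ^ (16 * Module.finrank ℚ K) < 2 ^ M ^ 2)
    (hzero : ∀ x < n ^ 2, ∀ y < n ^ 2, S.auxValue c x y = 0) (t : ℂ) :
    S.auxFun c t = 0 := by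
  have hsmall : ∀ᶠ M : ℕ in Filter.atTop, ‖S.auxFun c t‖ ≤ 1 / M := by
    filter_upwards [Filter.eventually_ge_atTop (n ^ 2),
      tendsto_natCast_atTop_atTop.eventually_ge_atTop ‖t‖] with M hM htM
    have hM_pos : 0 < M := (pow_pos hn 2).trans_le hM
    have hHM := hH.one_le_mul hM_pos
    have hscale : 1 ≤ scale H n M := one_le_scale hHM
    have hM_le : (M : ℝ) ≤ scale H n M :=
      (le_mul_of_one_le_left M.cast_nonneg (one_le_two.trans hH.two_le)).trans
        (mul_le_scale hHM hn hM_pos)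
    have ht : ‖t‖ ≤ (1 + ‖S.β‖) * M := htM.trans <|
      le_mul_of_one_le_left M.cast_nonneg (le_add_of_nonneg_right (norm_nonneg _))
    refine (hH.norm_auxFun_le_div hβ hn (hm.trans (by gcongr)) hM (hH.house_le_scale_pow hn hM hc)
      (fun x _ y _ => hH.auxValue_eq_zero hβ hn hm hc hgrowth hzero x y) ht).trans ?_
    rw [div_le_div_iff₀ (by positivity) (Nat.cast_pos.2 hM_pos), one_mul]
    calc scale H n M ^ 12 * M ≤ scale H n M ^ 12 * scale H n M := by gcongr
      _ = scale H n M ^ 13 := (pow_succ _ 12).symm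
      _ ≤ scale H n M ^ (16 * Module.finrank ℚ K) := by
        have hd : 0 < Module.finrank ℚ K := Module.finrank_pos
        gcongr
        omega
      _ ≤ 2 ^ M ^ 2 := (hgrowth M hM).le
  exact norm_le_zero_iff.1 (ge_of_tendsto tendsto_one_div_atTop_nhds_zero_nat hsmall)

end IsBound

variable (S) in
theorem β_mem_range_ratCast (hℓ : S.ℓ ≠ 0) : S.β ∈ Set.range ((↑) : ℚ → ℂ) := by
  by_contra hβ
  obtain ⟨H, hH, hexists⟩ := S.exists_forall_lt_sq_auxValue_eq_zero
  obtain ⟨n, hn, hgrowth⟩ :=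
    exists_forall_scale_pow_lt (one_le_two.trans hH.two_le) (16 * Module.finrank ℚ K)
  obtain ⟨c, hc_ne_zero, hc, hzero⟩ := hexists hn
  have hσc : (fun l => S.σ (c l)) = 0 := eq_zero_of_forall_sum_mul_pow_mul_exp_pow_eq_zero hℓ
    (hH.auxFun_eq_zero hβ hn le_rfl hc hgrowth hzero)
  refine hc_ne_zero (funext fun l => ?_)
  exact RingOfIntegers.coe_eq_zero_iff.1 ((map_eq_zero S.σ).1 (congrFun hσc l))

end Bounds

end SchneiderData

theorem gelfond_schneider {ℓ β : ℂ} (hℓ : ℓ ≠ 0) (hα : IsAlgebraic ℚ (Complex.exp ℓ))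
    (hβ : IsAlgebraic ℚ β) (hγ : IsAlgebraic ℚ (Complex.exp (ℓ * β))) :
    β ∈ Set.range ((↑) : ℚ → ℂ) := by
  let s : Set ℂ := {β, Complex.exp ℓ, Complex.exp (ℓ * β)}
  let K := IntermediateField.adjoin ℚ s
  have hs : ∀ x ∈ s, IsIntegral ℚ x := by
    simp only [s, Set.mem_insert_iff, Set.mem_singleton_iff, forall_eq_or_imp, forall_eq]
    exact ⟨hβ.isIntegral, hα.isIntegral, hγ.isIntegral⟩
  have : FiniteDimensional ℚ K := IntermediateField.finiteDimensional_adjoin hs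
  have : NumberField K := { }
  let toK (x : s) : K := ⟨x, IntermediateField.subset_adjoin ℚ s x.2⟩
  obtain ⟨D, hD, hDs⟩ := exists_common_denominator (Set.finite_range toK).toFinset
  have hnum (x : ℂ) (hx : x ∈ s) :
      ∃ y : 𝓞 K, algebraMap K ℂ y = algebraMap K ℂ D * x := by
    obtain ⟨y, hy⟩ := hDs (toK ⟨x, hx⟩) (by simp)
    exact ⟨y, by rw [hy, map_mul]; rfl⟩
  obtain ⟨b, hb⟩ := hnum β (by simp [s])
  obtain ⟨p, hp⟩ := hnum (Complex.exp ℓ) (by simp [s])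
  obtain ⟨q, hq⟩ := hnum (Complex.exp (ℓ * β)) (by simp [s])
  exact SchneiderData.β_mem_range_ratCast ⟨algebraMap K ℂ, ℓ, β, D, b, p, q, hD, hb, hp, hq⟩ hℓ

end GelfondSchneider

section RootsOfUnity

theorem isOfFinOrder_exp_two_pi_I_mul_iff {z : ℂ} :
    IsOfFinOrder (Complex.exp (2 * Real.pi * Complex.I * z)) ↔ z ∈ Set.range ((↑) : ℚ → ℂ) := by
  simp only [isOfFinOrder_iff_pow_eq_one, ← Complex.exp_nat_mul, Complex.exp_eq_one_iff]
  constructor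
  · rintro ⟨k, hk, m, hm⟩
    refine ⟨m / k, ?_⟩
    push_cast
    rw [div_eq_iff (Nat.cast_ne_zero.2 hk.ne')]
    refine mul_left_cancel₀ Complex.two_pi_I_ne_zero ?_
    linear_combination -hm
  · rintro ⟨q, rfl⟩
    refine ⟨q.den, q.den_pos, q.num, ?_⟩
    have hq : (q.den : ℂ) * q = q.num := mod_cast Rat.den_mul_eq_num q
    linear_combination (2 * Real.pi * Complex.I) * hq

theorem isTorsionPoint_expMap_iff {n : ℕ} {z : Fin n → ℂ} :
    IsTorsionPoint n (expMap n z) ↔ ∀ i, z i ∈ Set.range ((↑) : ℚ → ℂ) :=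
  forall_congr' fun _ => isOfFinOrder_iff_pow_eq_one.symm.trans isOfFinOrder_exp_two_pi_I_mul_iff

theorem isAlgebraic_of_isOfFinOrder {R A : Type*} [CommRing R] [Nontrivial R] [CommRing A]
    [Algebra R A] {x : A} (hx : IsOfFinOrder x) : IsAlgebraic R x := by
  obtain ⟨k, hk, hxk⟩ := isOfFinOrder_iff_pow_eq_one.1 hx
  exact .of_pow hk (hxk ▸ isAlgebraic_one)

theorem infinite_setOf_isOfFinOrder (k : Type*) [Field k] [IsAlgClosed k] [CharZero k] :
    {x : k | IsOfFinOrder x}.Infinite := by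
  choose ζ hζ using fun n : ℕ => HasEnoughRootsOfUnity.exists_primitiveRoot k (n + 1)
  refine Set.infinite_of_injective_forall_mem (f := ζ) (fun m n hmn => ?_)
    fun n => (hζ n).isOfFinOrder n.succ_ne_zero
  exact Nat.succ_injective ((hζ m).unique (hmn ▸ hζ n))

end RootsOfUnity

section Main

variable {n : ℕ} {Z : Set (Fin n → ℂ)}

theorem ConstructibleQbar.exists_apply_mem_range_ratCast (hZ : ConstructibleQbar n Z)
    {z : Fin n → ℂ} (hz : z ∈ Z) {j : Fin n} (hj : Transcendental ℚ (z j)) :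
    ∃ y ∈ Z, y j ∈ Set.range ((↑) : ℚ → ℂ) ∧ ∀ i, IsAlgebraic ℚ (z i) → y i = z i := by
  obtain ⟨q, y, hyZ, hyj, hy⟩ := ((Rat.cast_injective (α := QBar)).tendsto_cofinite.eventually
    (hZ.eventually_exists_apply_eq hz hj)).exists
  exact ⟨y, hyZ, ⟨q, by rw [hyj]; rfl⟩, hy⟩

theorem ConstructibleQbar.exists_isOfFinOrder_apply (hZ : ConstructibleQbar n Z)
    {z : Fin n → ℂ} (hz : z ∈ Z) {j : Fin n} (hj : Transcendental ℚ (z j)) :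
    ∃ y ∈ Z, IsOfFinOrder (y j) ∧ ∀ i, IsAlgebraic ℚ (z i) → y i = z i := by
  obtain ⟨c, hc, y, hyZ, hyj, hy⟩ := ((Filter.frequently_cofinite_iff_infinite.2
    (infinite_setOf_isOfFinOrder QBar)).and_eventually
      (hZ.eventually_exists_apply_eq hz hj)).exists
  exact ⟨y, hyZ, hyj ▸ (algebraMap QBar ℂ).toMonoidHom.isOfFinOrder hc, hy⟩

theorem exists_apply_mem_range_ratCast (hZ : ConstructibleQbar n Z)
    (hexpZ : ConstructibleTorusQbar n (expMap n '' Z)) {z : Fin n → ℂ} (hz : z ∈ Z) (j : Fin n) :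
    ∃ y ∈ Z, y j ∈ Set.range ((↑) : ℚ → ℂ) ∧
      ∀ i, z i ∈ Set.range ((↑) : ℚ → ℂ) → y i ∈ Set.range ((↑) : ℚ → ℂ) := by
  by_cases hzj : IsAlgebraic ℚ (z j)
  · by_cases hexp : IsAlgebraic ℚ (expMap n z j)
    · refine ⟨z, hz, gelfond_schneider Complex.two_pi_I_ne_zero ?_ hzj hexp, fun i hi => hi⟩
      rw [Complex.exp_two_pi_mul_I]
      exact isAlgebraic_one
    · obtain ⟨_, ⟨y, hyZ, rfl⟩, hyj, hy⟩ := hexpZ.constructibleQbar.exists_isOfFinOrder_apply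
        (Set.mem_image_of_mem _ hz) hexp
      refine ⟨y, hyZ, isOfFinOrder_exp_two_pi_I_mul_iff.1 hyj, fun i hi => ?_⟩
      have hfin : IsOfFinOrder (expMap n z i) := isOfFinOrder_exp_two_pi_I_mul_iff.2 hi
      rw [← hy i (isAlgebraic_of_isOfFinOrder hfin)] at hfin
      exact isOfFinOrder_exp_two_pi_I_mul_iff.1 hfin
  · obtain ⟨y, hyZ, hyj, hy⟩ := hZ.exists_apply_mem_range_ratCast hz hzj
    refine ⟨y, hyZ, hyj, ?_⟩
    rintro i ⟨q, hq⟩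
    exact ⟨q, hq.trans (hy i (hq ▸ isAlgebraic_algebraMap q)).symm⟩

end Main

/-- If `Z ⊆ ℂ^n` is a nonempty Zariski constructible set defined over `ℚ̄`, and
`exp(Z) ⊆ (ℂ^*)^n` is also Zariski constructible defined over `ℚ̄`, then `exp(Z)`
contains a torsion point. -/
theorem torsion_point_in_exp_image (n : ℕ) (hn : 1 ≤ n)
    (Z : Set (Fin n → ℂ)) (hZne : Z.Nonempty)
    (hZ : ConstructibleQbar n Z)
    (hexpZ : ConstructibleTorusQbar n (expMap n '' Z)) :
    ∃ τ ∈ expMap n '' Z, IsTorsionPoint n τ := by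
  suffices h : ∀ s : Finset (Fin n), ∃ z ∈ Z, ∀ i ∈ s, z i ∈ Set.range ((↑) : ℚ → ℂ) by
    obtain ⟨z, hz, hrat⟩ := h Finset.univ
    exact ⟨expMap n z, Set.mem_image_of_mem _ hz,
      isTorsionPoint_expMap_iff.2 fun i => hrat i (Finset.mem_univ i)⟩
  intro s
  induction s using Finset.induction with
  | empty => exact hZne.imp fun z hz => ⟨hz, by simp⟩
  | insert j s _ ih =>
    obtain ⟨z, hz, hrat⟩ := ih
    obtain ⟨y, hy, hyj, hyrat⟩ := exists_apply_mem_range_ratCast hZ hexpZ hz j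
    exact ⟨y, hy, Finset.forall_mem_insert _ _ _ |>.2 ⟨hyj, fun i hi => hyrat i (hrat i hi)⟩⟩
end
end

section
/- Let n ≥ 1. Suppose S ⊆ ℂ^n is a nonempty irreducible Zariski closed subset defined over ℚ̄, and T ⊆ (ℂ^*)^n is an irreducible Zariski closed subset defined over ℚ̄ such that dim S = dim T and exp(S) ⊆ T. Then T is a torsion translate of a subtorus of (ℂ^*)^n. -/
open MvPolynomial

noncomputable section

/-- A subset of `ℂ^n` is Zariski closed if it is the common zero locus of a family
of polynomials with complex coefficients. -/
def ZClosed (n : ℕ) (S : Set (Fin n → ℂ)) : Prop :=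
  ∃ P : Set (MvPolynomial (Fin n) ℂ), S = {z | ∀ p ∈ P, eval z p = 0}

/-- A subset of `(ℂ^*)^n` (viewed as the set of points of `ℂ^n` with all coordinates
nonzero) is Zariski closed if it is the common zero locus in `(ℂ^*)^n` of a family of
polynomials. -/
def ZClosedTorus (n : ℕ) (T : Set (Fin n → ℂ)) : Prop :=
  ∃ P : Set (MvPolynomial (Fin n) ℂ),
    T = {z | (∀ i, z i ≠ 0) ∧ ∀ p ∈ P, eval z p = 0}

/-- A set is irreducible (with respect to a given notion of closed set) if it is
nonempty and not the union of two proper closed subsets of it. -/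
def IsIrrOf {α : Type*} (Closed : Set α → Prop) (S : Set α) : Prop :=
  S.Nonempty ∧ ∀ F G : Set α, Closed F → Closed G → S ⊆ F ∪ G → S ⊆ F ∨ S ⊆ G

/-- The dimension (with respect to a given notion of closed set) of a set `S`:
the supremum of lengths `d` of chains `Z_0 ⊊ Z_1 ⊊ ⋯ ⊊ Z_d` of nonempty
irreducible closed subsets contained in `S`. -/
def dimOf {α : Type*} (Closed : Set α → Prop) (S : Set α) : ℕ∞ :=
  sSup {e : ℕ∞ | ∃ d : ℕ, e = (d : ℕ∞) ∧
    ∃ Z : Fin (d + 1) → Set α,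
      (∀ i, Closed (Z i) ∧ IsIrrOf Closed (Z i) ∧ Z i ⊆ S) ∧
      ∀ i j : Fin (d + 1), i < j → Z i ⊂ Z j}

/-- A subtorus of `(ℂ^*)^n`: the image of a homomorphism `(ℂ^*)^m → (ℂ^*)^n`
given by an integer matrix, `x ↦ (∏_j x_j ^ a_{λ j})_λ`. -/
def IsSubtorus (n : ℕ) (T₀ : Set (Fin n → ℂ)) : Prop :=
  ∃ (m : ℕ) (a : Fin n → Fin m → ℤ),
    T₀ = {z | ∃ x : Fin m → ℂ, (∀ j, x j ≠ 0) ∧ ∀ l, z l = ∏ j, x j ^ a l j}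

/-- A torsion translate of a subtorus: a coset `τ · T₀` with `τ` a torsion point
and `T₀` a subtorus. -/
def IsTorsionTranslateOfSubtorus (n : ℕ) (T : Set (Fin n → ℂ)) : Prop :=
  ∃ (τ : Fin n → ℂ) (T₀ : Set (Fin n → ℂ)),
    IsTorsionPoint n τ ∧ IsSubtorus n T₀ ∧
    T = (fun z => fun i => τ i * z i) '' T₀

/-!
Let `L` be the lattice of integer linear forms that are constant on `S`, and let `A` be an integer
matrix whose columns are a basis of the common kernel of `L`, so that `S ⊆ a + im A` for `a ∈ S`.
If a polynomial `p` vanishes on `T`, then `p ∘ exp` is on `S` an exponential sum whose exponents are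
linear forms no two of which differ by a constant on `S`. Differentiating along vector fields
tangent to `S` eliminates one exponential after the other, so all coefficients of the sum vanish.
Hence `T` contains the coset `exp (a + im A)`, whose dimension is at least `dim S = dim T`, and is
equal to it.

Now choose `a` algebraic. As `T` has an algebraic point as well, `exp (2πi m(a))` is algebraic for
every `m ∈ L`. By the Gelfond–Schneider theorem with the logarithm `2πi`, `m(a)` is then rational,
which makes the coset a torsion translate.
-/

/-! ### Tangent derivations and exponential sums -/

section Elimination

variable {ι R A : Type*} [CommRing R] [CommRing A]

/-- If `c i ≠ 0`, then multiplying the transformed relation by `c i` and the original one by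
`T i (c i)` and subtracting cancels the `i`-th term. -/
theorem map_eq_zero_of_sum_map_mul_eq_zero (φ : R →+* A) {e : ι → A} (𝒯 : Set (ι → R → R))
    (h𝒯 : ∀ T ∈ 𝒯, ∀ (t : Finset ι) (c : ι → R), ∑ i ∈ t, φ (c i) * e i = 0 →
      ∑ i ∈ t, φ (T i (c i)) * e i = 0)
    (s : Finset ι) (he : ∀ i ∈ s, IsUnit (e i))
    (hsep : ∀ i ∈ s, ∀ j ∈ s, i ≠ j → ∀ a b, φ a ≠ 0 → φ b ≠ 0 →
      ∃ T ∈ 𝒯, φ (a * T j b - b * T i a) ≠ 0)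
    (c : ι → R) (hc : ∑ i ∈ s, φ (c i) * e i = 0) : ∀ i ∈ s, φ (c i) = 0 := by
  classical
  induction s using Finset.strongInduction generalizing c with
  | H s ih =>
  have ih_erase : ∀ i ∈ s, ∀ c : ι → R, φ (c i) * e i = 0 → ∑ j ∈ s, φ (c j) * e j = 0 →
      ∀ j ∈ s.erase i, φ (c j) = 0 := fun i hi c hci hsum ↦
    ih _ (Finset.erase_ssubset hi) (fun j hj ↦ he j (Finset.mem_of_mem_erase hj))
      (fun j hj k hk ↦ hsep j (Finset.mem_of_mem_erase hj) k (Finset.mem_of_mem_erase hk)) c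
      (by rwa [← Finset.add_sum_erase _ _ hi, hci, zero_add] at hsum)
  intro i hi
  by_contra hci
  have eliminated : ∀ T ∈ 𝒯, ∀ j ∈ s.erase i, φ (c i * T j (c j) - c j * T i (c i)) = 0 := by
    intro T hT
    refine ih_erase i hi _ (by simp only [mul_comm, sub_self, map_zero, mul_zero]) ?_
    calc ∑ j ∈ s, φ (c i * T j (c j) - c j * T i (c i)) * e j
        = φ (c i) * ∑ j ∈ s, φ (T j (c j)) * e j
          - φ (T i (c i)) * ∑ j ∈ s, φ (c j) * e j := by
          simp only [Finset.mul_sum, ← Finset.sum_sub_distrib, map_sub, map_mul]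
          exact Finset.sum_congr rfl fun j _ ↦ by ring
      _ = 0 := by rw [h𝒯 T hT s c hc, hc, mul_zero, mul_zero, sub_zero]
  have others_zero : ∀ j ∈ s, j ≠ i → φ (c j) = 0 := by
    intro j hj hji
    by_contra hcj
    obtain ⟨T, hT, hne⟩ := hsep i hi j hj hji.symm (c i) (c j) hci hcj
    exact hne (eliminated T hT j (Finset.mem_erase.2 ⟨hji, hj⟩))
  rw [Finset.sum_eq_single_of_mem i hi fun j hj hji ↦ by rw [others_zero j hj hji, zero_mul]] at hc
  exact hci ((he i hi).mul_left_eq_zero.1 hc)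

end Elimination

section Derivations

variable {k K : Type*} [Field k] [Field K] [Algebra k K]

theorem exists_derivation_eq_of_formallyEtale (R : Type*) {A B : Type*} [CommRing R] [CommRing A]
    [CommRing B] [Algebra R A] [Algebra R B] [Algebra A B] [IsScalarTower R A B]
    [Algebra.FormallyEtale A B] (D : Derivation R A B) :
    ∃ δ : Derivation R B B, ∀ a, δ (algebraMap A B a) = D a := by
  let e := KaehlerDifferential.tensorKaehlerEquivOfFormallyEtale R A B
  let ℓ : TensorProduct A B (Ω[A⁄R]) →ₗ[B] B :=
    LinearMap.liftBaseChange B D.liftKaehlerDifferential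
  refine ⟨(ℓ ∘ₗ e.symm.toLinearMap).compDer (KaehlerDifferential.D R B), fun a ↦ ?_⟩
  calc ℓ (e.symm (KaehlerDifferential.D R B (algebraMap A B a)))
      = ℓ (TensorProduct.tmul A 1 (KaehlerDifferential.D R A a)) := by
        rw [KaehlerDifferential.tensorKaehlerEquivOfFormallyEtale_symm_D_algebraMap]
    _ = D a := by
        simp only [ℓ, LinearMap.liftBaseChange_tmul, Derivation.liftKaehlerDifferential_comp_D,
          one_smul]

theorem formallyEtale_of_isAlgebraic (A K : Type*) [CommRing A] [IsDomain A] [CharZero A] [Field K]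
    [Algebra A K] [FaithfulSMul A K] [Algebra.IsAlgebraic A K] : Algebra.FormallyEtale A K := by
  let : Algebra (FractionRing A) K := FractionRing.liftAlgebra A K
  have : IsScalarTower A (FractionRing A) K := FractionRing.isScalarTower_liftAlgebra A K
  have : Algebra.IsAlgebraic (FractionRing A) K :=
    .extendScalars (R := A) (IsFractionRing.injective A (FractionRing A))
  have : Algebra.FormallyEtale (FractionRing A) K := .of_isSeparable _ _
  have : Algebra.FormallyEtale A (FractionRing A) := .of_isLocalization (nonZeroDivisors A)
  exact .comp A (FractionRing A) K

variable [CharZero k]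

theorem exists_derivation_of_isTranscendenceBasis {ι : Type*} {x : ι → K}
    (hx : IsTranscendenceBasis k x) (v : ι → K) : ∃ δ : Derivation k K K, ∀ i, δ (x i) = v i := by
  let : Algebra (MvPolynomial ι k) K := (aeval x : MvPolynomial ι k →ₐ[k] K).toRingHom.toAlgebra
  have : IsScalarTower k (MvPolynomial ι k) K :=
    .of_algebraMap_eq fun c ↦ (aeval_C x c).symm
  have : FaithfulSMul (MvPolynomial ι k) K := (faithfulSMul_iff_algebraMap_injective _ _).2 hx.1
  have : Algebra.IsAlgebraic (Algebra.adjoin k (Set.range x)) K := hx.isAlgebraic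
  have : Algebra.IsAlgebraic (MvPolynomial ι k) K :=
    .of_ringHom_of_comp_eq (S := Algebra.adjoin k (Set.range x)) hx.1.aevalEquiv (RingHom.id K)
      hx.1.aevalEquiv.surjective Function.injective_id
      (RingHom.ext fun p ↦ (hx.1.algebraMap_aevalEquiv p).symm)
  have := formallyEtale_of_isAlgebraic (MvPolynomial ι k) K
  obtain ⟨δ, hδ⟩ := exists_derivation_eq_of_formallyEtale k (mkDerivation k v)
  refine ⟨δ, fun i ↦ ?_⟩
  calc δ (x i) = δ (algebraMap (MvPolynomial ι k) K (X i)) := congrArg δ (aeval_X x i).symm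
    _ = v i := by rw [hδ, mkDerivation_X]

theorem exists_derivation_of_algebraicIndepOn {s : Set K} (hs : AlgebraicIndepOn k id s)
    (v : K → K) : ∃ δ : Derivation k K K, ∀ x ∈ s, δ x = v x := by
  obtain ⟨t, hst, ht⟩ := exists_isTranscendenceBasis_superset hs
  obtain ⟨δ, hδ⟩ := exists_derivation_of_isTranscendenceBasis ht fun x ↦ v x
  exact ⟨δ, fun x hx ↦ hδ ⟨x, hst hx⟩⟩

theorem wronskian_ne_C_mul_mul {R : Type*} [CommRing R] [IsDomain R] {a b : Polynomial R} {c : R}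
    (ha : a ≠ 0) (hb : b ≠ 0) (hc : c ≠ 0) :
    Polynomial.wronskian a b ≠ Polynomial.C c * (a * b) := by
  intro h
  have hlt := Polynomial.degree_wronskian_lt_add ha hb
  rw [h, Polynomial.degree_C_mul hc, Polynomial.degree_mul] at hlt
  exact lt_irrefl _ hlt

theorem forall_eq_zero_of_sum_aeval_mul_pow_eq_zero {w u : K} (hw : Transcendental k w)
    (hu : u ≠ 0) {δ : Derivation k K K} (hδw : δ w = 1) (hδu : δ u = -u) (s : Finset ℕ)
    (a : ℕ → Polynomial k) (h : ∑ j ∈ s, Polynomial.aeval w (a j) * u ^ j = 0) :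
    ∀ j ∈ s, a j = 0 := by
  have aeval_eq_zero : ∀ p, Polynomial.aeval w p = 0 ↔ p = 0 := fun p ↦
    map_eq_zero_iff (Polynomial.aeval w) (transcendental_iff_injective.1 hw)
  let T : ℕ → Polynomial k → Polynomial k := fun j p ↦ p.derivative - Polynomial.C (j : k) * p
  have δ_term : ∀ (j : ℕ) (p : Polynomial k),
      δ (Polynomial.aeval w p * u ^ j) = Polynomial.aeval w (T j p) * u ^ j := by
    rintro (_ | j) p
    · simp [T, hδw]
    · simp only [T, Derivation.leibniz, Derivation.leibniz_pow, Derivation.map_aeval, hδw, hδu,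
        smul_eq_mul, nsmul_eq_mul, add_tsub_cancel_right, map_sub, map_mul, map_natCast]
      ring
  intro j hj
  refine (aeval_eq_zero _).1 (map_eq_zero_of_sum_map_mul_eq_zero
    (Polynomial.aeval w : Polynomial k →ₐ[k] K).toRingHom {T} ?_ s
    (fun i _ ↦ (pow_ne_zero i hu).isUnit) ?_ a h j hj)
  · rintro _ rfl t c hc
    simpa only [AlgHom.toRingHom_eq_coe, RingHom.coe_coe, map_sum, map_zero, δ_term]
      using congrArg δ hc
  · refine fun i _ j _ hij a b ha hb ↦ ⟨T, rfl, fun h0 ↦ ?_⟩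
    refine wronskian_ne_C_mul_mul (a := a) (b := b) (c := (j : k) - i)
      (fun h ↦ ha ((aeval_eq_zero a).2 h)) (fun h ↦ hb ((aeval_eq_zero b).2 h))
      (sub_ne_zero.2 (Nat.cast_injective.ne hij.symm)) ?_
    have := (aeval_eq_zero _).1 h0
    simp only [T, Polynomial.wronskian, Polynomial.C_sub] at this ⊢
    linear_combination this

theorem transcendental_adjoin_singleton_of_derivation {w u : K} (hw : Transcendental k w)
    (hu : u ≠ 0) {δ : Derivation k K K} (hδw : δ w = 1) (hδu : δ u = -u) :
    Transcendental (Algebra.adjoin k {w}) u := by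
  rintro ⟨q, hq, hqu⟩
  have lift_coeff : ∀ j, ∃ a : Polynomial k, Polynomial.aeval w a = (q.coeff j : K) := fun j ↦
    (Algebra.adjoin_singleton_eq_range_aeval k w).le (q.coeff j).2
  choose a ha using lift_coeff
  have ha0 := forall_eq_zero_of_sum_aeval_mul_pow_eq_zero hw hu hδw hδu
    (Finset.range (q.natDegree + 1)) a (by
      rw [← hqu, Polynomial.aeval_eq_sum_range]
      exact Finset.sum_congr rfl fun j _ ↦ by rw [ha]; rfl)
  refine hq (Polynomial.leadingCoeff_eq_zero.1 (Subtype.ext ?_))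
  rw [Polynomial.leadingCoeff, ← ha, ha0 _ (Finset.self_mem_range_succ _), map_zero]
  rfl

/-- Otherwise a derivation with `δ w = 1` has `δ u = -u`, which makes `u` and `w` algebraically
independent; but then there is a derivation with `δ u = 0` and `δ w = 1`. -/
theorem exists_derivation_add_mul_ne_zero {w u : K} (hu : u ≠ 0) (hw : Transcendental k w) :
    ∃ δ : Derivation k K K, δ u + u * δ w ≠ 0 := by
  classical
  by_contra! hcon
  have indep_w : AlgebraicIndepOn k id {w} := by simpa using hw
  obtain ⟨δ, hδ⟩ := exists_derivation_of_algebraicIndepOn indep_w fun _ ↦ 1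
  have hδw : δ w = 1 := hδ w rfl
  have hδu : δ u = -u := by linear_combination hcon δ - u * hδw
  have hu_trans := transcendental_adjoin_singleton_of_derivation hw hu hδw hδu
  have hne : u ≠ w := by
    rintro rfl
    exact hu_trans (isAlgebraic_algebraMap
      (⟨u, Algebra.subset_adjoin rfl⟩ : Algebra.adjoin k ({u} : Set K)))
  obtain ⟨δ', hδ'⟩ := exists_derivation_of_algebraicIndepOn
    (indep_w.insert (i := u) (by rwa [Set.image_id])) fun x ↦ if x = w then 1 else 0
  have h0 := hcon δ'
  rw [hδ' u (by simp), hδ' w (by simp), if_neg hne, if_pos rfl, zero_add, mul_one] at h0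
  exact hu h0

theorem exists_algebraMap_eq_of_isAlgebraic {k K : Type*} [Field k] [IsAlgClosed k] [Ring K]
    [IsDomain K] [Algebra k K] {x : K} (hx : IsAlgebraic k x) : ∃ c, algebraMap k K c = x :=
  minpoly.mem_range_of_degree_eq_one k x
    (IsAlgClosed.degree_eq_one_of_irreducible k (minpoly.irreducible hx.isIntegral))

end Derivations

section PolynomialDerivations

variable {σ k : Type*} [Finite σ] [Field k]

theorem exists_derivation_lift_up_to_denominator {A K : Type*} [CommRing A] [IsDomain A] [Field K]
    [Algebra k A] [Algebra k K] [Algebra A K] [IsFractionRing A K] [IsScalarTower k A K]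
    {π : MvPolynomial σ k →ₐ[k] A} (hπ : Function.Surjective π) (δ : Derivation k K K) :
    ∃ (D : Derivation k (MvPolynomial σ k) (MvPolynomial σ k)) (b : K), b ≠ 0 ∧
      ∀ p, algebraMap A K (π (D p)) = b * δ (algebraMap A K (π p)) := by
  obtain ⟨b, hb⟩ := IsLocalization.exist_integer_multiples_of_finite (nonZeroDivisors A)
    fun i ↦ δ (algebraMap A K (π (X i)))
  choose a' ha' using hb
  choose a ha using fun i ↦ hπ (a' i)
  refine ⟨mkDerivation k a, algebraMap A K b,
    IsFractionRing.to_map_ne_zero_of_mem_nonZeroDivisors b.2, fun p ↦ ?_⟩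
  induction p using MvPolynomial.induction_on with
  | C c =>
    rw [← MvPolynomial.algebraMap_eq, Derivation.map_algebraMap, AlgHom.commutes,
      ← IsScalarTower.algebraMap_apply, Derivation.map_algebraMap, map_zero, map_zero, mul_zero]
  | add p q hp hq => simp only [map_add, hp, hq, mul_add]
  | mul_X p i hp =>
    have hX : algebraMap A K (π (mkDerivation k a (X i)))
        = algebraMap A K b * δ (algebraMap A K (π (X i))) := by
      rw [mkDerivation_X, ha, ha', Algebra.smul_def]
    simp only [Derivation.leibniz, smul_eq_mul, map_add, map_mul, hp, hX]
    ring

/-- A polynomial derivation preserving `I`, i.e. a vector field tangent to the zero locus of `I`. -/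
def IsTangentDerivation {R : Type*} [CommRing R] (I : Ideal (MvPolynomial σ R))
    (D : Derivation R (MvPolynomial σ R) (MvPolynomial σ R)) : Prop :=
  ∀ p ∈ I, D p ∈ I

/-- Modulo `I`, the expression is `c₀ ^ 2` times `δ u + u * δ w` with `u = c₁ / c₀`: the logarithmic
derivative of `u * exp w` does not vanish identically. -/
theorem exists_isTangentDerivation_notMem [IsAlgClosed k] [CharZero k]
    {I : Ideal (MvPolynomial σ k)} [hI : I.IsPrime] {c₀ c₁ w : MvPolynomial σ k} (h₀ : c₀ ∉ I)
    (h₁ : c₁ ∉ I) (hw : ∀ c, w - C c ∉ I) :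
    ∃ D, IsTangentDerivation I D ∧ c₀ * D c₁ - c₁ * D c₀ + c₀ * c₁ * D w ∉ I := by
  let A := MvPolynomial σ k ⧸ I
  let K := FractionRing A
  let π : MvPolynomial σ k →ₐ[k] K :=
    (IsScalarTower.toAlgHom k A K).comp (Ideal.Quotient.mkₐ k I)
  have hπ : ∀ p, π p = 0 ↔ p ∈ I := fun p ↦
    (map_eq_zero_iff _ (IsFractionRing.injective A K)).trans Ideal.Quotient.eq_zero_iff_mem
  have hπw : Transcendental k (π w) := fun halg ↦ by
    obtain ⟨c, hc⟩ := exists_algebraMap_eq_of_isAlgebraic halg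
    refine hw c ((hπ _).1 ?_)
    rw [map_sub, ← hc, ← MvPolynomial.algebraMap_eq, AlgHom.commutes, sub_self]
  have hπ₀ : π c₀ ≠ 0 := (hπ _).not.2 h₀
  obtain ⟨δ, hδ⟩ := exists_derivation_add_mul_ne_zero
    (div_ne_zero ((hπ _).not.2 h₁) hπ₀) hπw
  obtain ⟨D, b, hb, hD⟩ := exists_derivation_lift_up_to_denominator (K := K)
    (Ideal.Quotient.mkₐ_surjective k I) δ
  change ∀ p, π (D p) = b * δ (π p) at hD
  refine ⟨D, fun p hp ↦ (hπ _).1 ?_, fun hmem ↦ ?_⟩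
  · rw [hD, (hπ p).2 hp, map_zero, mul_zero]
  have hquot : π c₁ = π c₀ * (π c₁ / π c₀) := (mul_div_cancel₀ _ hπ₀).symm
  have hδquot : δ (π c₁) = π c₀ * δ (π c₁ / π c₀) + π c₁ / π c₀ * δ (π c₀) := by
    conv_lhs => rw [hquot, Derivation.leibniz, smul_eq_mul, smul_eq_mul]
  refine mul_ne_zero (mul_ne_zero hb (pow_ne_zero 2 hπ₀)) hδ ?_
  have h0 := (hπ _).2 hmem
  simp only [map_add, map_sub, map_mul, hD] at h0
  rw [hδquot] at h0
  linear_combination h0 + b * (π c₀ * δ (π w) - δ (π c₀)) * -hquot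

end PolynomialDerivations

section TangentFlow

open scoped Matrix

variable {σ : Type*}

/-- The vector field on `ℂ^σ` whose coordinates are the polynomials `D (X i)`. -/
def polynomialVectorField (D : Derivation ℂ (MvPolynomial σ ℂ) (MvPolynomial σ ℂ)) (z : σ → ℂ) :
    σ → ℂ :=
  fun i ↦ eval z (D (X i))

theorem hasDerivAt_eval_of_polynomialVectorField
    {D : Derivation ℂ (MvPolynomial σ ℂ) (MvPolynomial σ ℂ)} {γ : ℝ → σ → ℂ} {t : ℝ}
    (hγ : HasDerivAt γ (polynomialVectorField D (γ t)) t) (p : MvPolynomial σ ℂ) :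
    HasDerivAt (fun s ↦ eval (γ s) p) (eval (γ t) (D p)) t := by
  induction p using MvPolynomial.induction_on with
  | C c =>
    rw [← algebraMap_eq, Derivation.map_algebraMap, map_zero]
    simpa only [algebraMap_eq, eval_C] using hasDerivAt_const t c
  | add p q hp hq => simpa only [map_add] using hp.fun_add hq
  | mul_X p i hp =>
    simp only [map_mul, eval_X, Derivation.leibniz, map_add, smul_eq_mul]
    exact (hp.mul (hasDerivAt_pi.1 hγ i)).congr_deriv (by rw [polynomialVectorField]; ring)

theorem contDiff_polynomialVectorField [Fintype σ]
    (D : Derivation ℂ (MvPolynomial σ ℂ) (MvPolynomial σ ℂ)) :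
    ContDiff ℝ 1 (polynomialVectorField D) :=
  contDiff_pi.2 fun i ↦ (AnalyticOnNhd.eval_mvPolynomial (D (X i))).contDiff.restrict_scalars ℝ

open scoped Matrix.Norms.Operator in
theorem eq_zero_of_hasDerivAt_mulVec {m : Type*} [Fintype m] {a b : ℝ} {f : ℝ → m → ℂ}
    {M : ℝ → Matrix m m ℂ} (hM : ContinuousOn M (Set.Icc a b))
    (hf : ∀ t ∈ Set.Icc a b, HasDerivAt f (M t *ᵥ f t) t) (ha : f a = 0) :
    ∀ t ∈ Set.Icc a b, f t = 0 := by
  obtain ⟨C, hC⟩ := isCompact_Icc.exists_bound_of_continuousOn hM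
  refine eq_zero_of_abs_deriv_le_mul_abs_self_of_eq_zero_right (K := C)
    (HasDerivAt.continuousOn hf)
    (fun t ht ↦ (hf t (Set.Ico_subset_Icc_self ht)).hasDerivWithinAt) ha fun t ht ↦ ?_
  exact (Matrix.linfty_opNorm_mulVec _ _).trans
    (mul_le_mul_of_nonneg_right (hC t (Set.Ico_subset_Icc_self ht)) (norm_nonneg _))

variable [Finite σ]

/-- Since `D` preserves `I`, generators of `I` satisfy a homogeneous linear system of differential
equations along `γ`. -/
theorem integralCurve_mem_zeroLocus {I : Ideal (MvPolynomial σ ℂ)}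
    {D : Derivation ℂ (MvPolynomial σ ℂ) (MvPolynomial σ ℂ)} (hD : IsTangentDerivation I D)
    {γ : ℝ → σ → ℂ} {a b : ℝ}
    (hγ : ∀ t ∈ Set.Icc a b, HasDerivAt γ (polynomialVectorField D (γ t)) t)
    (ha : γ a ∈ zeroLocus ℂ I) : ∀ t ∈ Set.Icc a b, γ t ∈ zeroLocus ℂ I := by
  obtain ⟨m, g, rfl⟩ := Submodule.fg_iff_exists_fin_generating_family.1
    ((isNoetherianRing_iff_ideal_fg _).1 inferInstance I)
  have hgI : ∀ j, g j ∈ Ideal.span (Set.range g) := fun j ↦ Ideal.subset_span ⟨j, rfl⟩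
  have hDg : ∀ j, ∃ h : Fin m → MvPolynomial σ ℂ, ∑ k, h k * g k = D (g j) := fun j ↦
    Ideal.mem_span_range_iff_exists_fun.1 (hD _ (hgI j))
  choose h hh using hDg
  have generators_zero := eq_zero_of_hasDerivAt_mulVec
    (f := fun t j ↦ eval (γ t) (g j)) (M := fun t ↦ Matrix.of fun j k ↦ eval (γ t) (h j k))
    (continuousOn_pi.2 fun j ↦ continuousOn_pi.2 fun k ↦
      HasDerivAt.continuousOn fun t ht ↦ hasDerivAt_eval_of_polynomialVectorField (hγ t ht) _)
    (fun t ht ↦ hasDerivAt_pi.2 fun j ↦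
      (hasDerivAt_eval_of_polynomialVectorField (hγ t ht) (g j)).congr_deriv (by
        simp only [← hh, map_sum, map_mul, Matrix.mulVec, dotProduct, Matrix.of_apply]))
    (funext fun j ↦ ha _ (hgI j))
  intro t ht p hp
  obtain ⟨c, rfl⟩ := Ideal.mem_span_range_iff_exists_fun.1 hp
  rw [aeval_eq_eval, map_sum]
  refine Finset.sum_eq_zero fun k _ ↦ ?_
  rw [map_mul, show eval (γ t) (g k) = 0 from congrFun (generators_zero t ht) k, mul_zero]

theorem exists_integralCurve_mem_zeroLocus {I : Ideal (MvPolynomial σ ℂ)}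
    {D : Derivation ℂ (MvPolynomial σ ℂ) (MvPolynomial σ ℂ)} (hD : IsTangentDerivation I D)
    {z : σ → ℂ} (hz : z ∈ zeroLocus ℂ I) :
    ∃ γ : ℝ → σ → ℂ, γ 0 = z ∧ HasDerivAt γ (polynomialVectorField D z) 0 ∧
      ∃ ε > 0, ∀ t ∈ Set.Icc 0 ε, γ t ∈ zeroLocus ℂ I := by
  cases nonempty_fintype σ
  obtain ⟨γ, rfl, ε, hε, hγ⟩ := (contDiff_polynomialVectorField D).contDiffAt
    |>.exists_forall_mem_closedBall_exists_eq_forall_mem_Ioo_hasDerivAt₀ (x₀ := z) 0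
  refine ⟨γ, rfl, hγ 0 (by simp [hε]), ε / 2, half_pos hε, ?_⟩
  exact integralCurve_mem_zeroLocus hD
    (fun t ht ↦ hγ t ⟨by linarith [ht.1], by linarith [ht.2]⟩) hz

end TangentFlow

section ExponentialPolynomials

variable {σ ι : Type*} [Finite σ] {I : Ideal (MvPolynomial σ ℂ)}

theorem sum_derivation_mul_exp_eq_zero
    {D : Derivation ℂ (MvPolynomial σ ℂ) (MvPolynomial σ ℂ)} (hD : IsTangentDerivation I D)
    {s : Finset ι} {c f : ι → MvPolynomial σ ℂ}
    (h : ∀ z ∈ zeroLocus ℂ I, ∑ i ∈ s, eval z (c i) * Complex.exp (eval z (f i)) = 0) :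
    ∀ z ∈ zeroLocus ℂ I,
      ∑ i ∈ s, eval z (D (c i) + c i * D (f i)) * Complex.exp (eval z (f i)) = 0 := by
  intro z hz
  obtain ⟨γ, rfl, hγ, ε, hε, hγI⟩ := exists_integralCurve_mem_zeroLocus hD hz
  have deriv_sum : HasDerivAt
      (fun t ↦ ∑ i ∈ s, eval (γ t) (c i) * Complex.exp (eval (γ t) (f i)))
      (∑ i ∈ s, eval (γ 0) (D (c i) + c i * D (f i)) * Complex.exp (eval (γ 0) (f i))) 0 := by
    refine (HasDerivAt.fun_sum fun i _ ↦
      (hasDerivAt_eval_of_polynomialVectorField hγ (c i)).mul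
        (hasDerivAt_eval_of_polynomialVectorField hγ (f i)).cexp).congr_deriv ?_
    exact Finset.sum_congr rfl fun i _ ↦ by rw [map_add, map_mul]; ring
  have deriv_zero : HasDerivWithinAt
      (fun t ↦ ∑ i ∈ s, eval (γ t) (c i) * Complex.exp (eval (γ t) (f i))) 0 (Set.Icc 0 ε) 0 :=
    (hasDerivWithinAt_const 0 _ (0 : ℂ)).congr (fun t ht ↦ h _ (hγI t ht)) (h _ hz)
  exact (uniqueDiffOn_Icc hε 0 ⟨le_rfl, hε.le⟩).eq_deriv _ deriv_sum.hasDerivWithinAt deriv_zero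

/-- Derivations tangent to `I` act on the relations and separate any two exponentials, so that terms
can be eliminated. -/
theorem forall_mem_of_sum_mul_exp_eq_zero [I.IsPrime] {s : Finset ι} {f : ι → MvPolynomial σ ℂ}
    (hf : ∀ i ∈ s, ∀ j ∈ s, i ≠ j → ∀ a, f i - f j - C a ∉ I) {c : ι → MvPolynomial σ ℂ}
    (h : ∀ z ∈ zeroLocus ℂ I, ∑ i ∈ s, eval z (c i) * Complex.exp (eval z (f i)) = 0) :
    ∀ i ∈ s, c i ∈ I := by
  let φ : MvPolynomial σ ℂ →+* (zeroLocus ℂ I → ℂ) := RingHom.pi fun z ↦ eval z.1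
  have φ_eq_zero : ∀ p, φ p = 0 ↔ p ∈ I := fun p ↦ by
    have hI : p ∈ I ↔ p ∈ vanishingIdeal ℂ (zeroLocus ℂ I) := by
      rw [IsPrime.vanishingIdeal_zeroLocus]
    rw [hI, mem_vanishingIdeal_iff, _root_.funext_iff, Subtype.forall]
    rfl
  have sum_eq_zero_iff : ∀ (t : Finset ι) (b : ι → MvPolynomial σ ℂ),
      ∑ i ∈ t, φ (b i) * (fun z : zeroLocus ℂ I ↦ Complex.exp (eval z.1 (f i))) = 0 ↔
        ∀ z ∈ zeroLocus ℂ I, ∑ i ∈ t, eval z (b i) * Complex.exp (eval z (f i)) = 0 := by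
    intro t b
    simp only [_root_.funext_iff, Finset.sum_apply, Pi.mul_apply, Pi.zero_apply, Subtype.forall]
    rfl
  intro i hi
  refine (φ_eq_zero _).1 (map_eq_zero_of_sum_map_mul_eq_zero φ
    {T | ∃ D, IsTangentDerivation I D ∧ T = fun i p ↦ D p + p * D (f i)} ?_ s
    (fun i _ ↦ Pi.isUnit_iff.2 fun z ↦ (Complex.exp_ne_zero _).isUnit) ?_ c
    ((sum_eq_zero_iff s c).2 h) i hi)
  · rintro _ ⟨D, hD, rfl⟩ t b hb
    exact (sum_eq_zero_iff _ _).2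
      (sum_derivation_mul_exp_eq_zero hD ((sum_eq_zero_iff t b).1 hb))
  · intro i hi j hj hij a b ha hb
    obtain ⟨D, hD, hmem⟩ := exists_isTangentDerivation_notMem ((φ_eq_zero a).not.1 ha)
      ((φ_eq_zero b).not.1 hb) (hf j hj i hi hij.symm)
    refine ⟨_, ⟨D, hD, rfl⟩, (φ_eq_zero _).not.2 ?_⟩
    convert! hmem using 2
    rw [map_sub]
    ring

end ExponentialPolynomials

/-! ### Algebraic points and saturated lattices -/

section AlgebraicPoints

variable {σ : Type*} [Finite σ]

theorem exists_mem_zeroLocus_aeval_ne_zero {k K : Type*} [Field k] [IsAlgClosed k] [Field K]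
    [Algebra k K] {J : Ideal (MvPolynomial σ k)} {q : MvPolynomial σ k} {z : σ → K}
    (hz : z ∈ zeroLocus K J) (hq : aeval z q ≠ 0) : ∃ a ∈ zeroLocus k J, aeval a q ≠ 0 := by
  by_contra! hcon
  have hq_mem : q ∈ J.radical := by
    rwa [← vanishingIdeal_zeroLocus_eq_radical (K := k), mem_vanishingIdeal_iff]
  exact hq (radical_le_vanishingIdeal_zeroLocus (K := K) J hq_mem z hz)

theorem exists_isAlgebraic_eval_eq_zero {F K : Type*} [Field F] [Field K] [IsAlgClosed K]
    [Algebra F K] {P : Set (MvPolynomial σ K)} (hP : ∀ p ∈ P, ∀ m, IsAlgebraic F (coeff m p))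
    {q : MvPolynomial σ F} {z : σ → K} (hz : ∀ p ∈ P, eval z p = 0) (hq : aeval z q ≠ 0) :
    ∃ a : σ → K, (∀ i, IsAlgebraic F (a i)) ∧ (∀ p ∈ P, eval a p = 0) ∧ aeval a q ≠ 0 := by
  let k := algebraicClosure F K
  have : IsAlgClosed k := (algebraicClosure.isAlgClosure F K).1
  have map_k : ∀ p ∈ P, ∃ p' : MvPolynomial σ k, map (algebraMap k K) p' = p := fun p hp ↦
    mem_range_map_iff_coeffs_subset.2 fun c hc ↦ by
      obtain ⟨m, -, rfl⟩ := mem_coeffs_iff.1 hc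
      exact ⟨⟨_, mem_algebraicClosure_iff.2 (hP p hp m)⟩, rfl⟩
  obtain ⟨a, ha, haq⟩ := exists_mem_zeroLocus_aeval_ne_zero
    (J := Ideal.span {p | map (algebraMap k K) p ∈ P}) (q := map (algebraMap F k) q) (z := z)
    (by
      rw [zeroLocus_span]
      exact fun p hp ↦ by simpa only [eval_map, aeval_def] using hz _ hp)
    (by rwa [aeval_map_algebraMap])
  refine ⟨algebraMap k K ∘ a, fun i ↦ mem_algebraicClosure_iff.1 (a i).2, ?_, ?_⟩
  · intro p hp
    obtain ⟨p, rfl⟩ := map_k p hp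
    have := congrArg (algebraMap k K) (ha p (Ideal.subset_span hp))
    rwa [← aeval_algebraMap_apply, map_zero, aeval_def, ← eval_map] at this
  · rw [aeval_map_algebraMap] at haq
    rw [aeval_algebraMap_apply]
    exact (map_ne_zero _).2 haq

theorem ZClosedQbar.exists_isAlgebraic {n : ℕ} {S : Set (Fin n → ℂ)} (hS : ZClosedQbar n S)
    (hne : S.Nonempty) : ∃ a ∈ S, ∀ i, IsAlgebraic ℚ (a i) := by
  obtain ⟨P, hP, rfl⟩ := hS
  obtain ⟨z, hz⟩ := hne
  obtain ⟨a, ha, haP, -⟩ := exists_isAlgebraic_eval_eq_zero hP (q := 1) hz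
    (by rw [map_one]; exact one_ne_zero)
  exact ⟨a, haP, ha⟩

theorem ZClosedTorusQbar.exists_isAlgebraic {n : ℕ} {T : Set (Fin n → ℂ)}
    (hT : ZClosedTorusQbar n T) (hne : T.Nonempty) : ∃ a ∈ T, ∀ i, IsAlgebraic ℚ (a i) := by
  obtain ⟨P, hP, rfl⟩ := hT
  obtain ⟨z, hz0, hz⟩ := hne
  have aeval_prod_X : ∀ w : Fin n → ℂ, aeval w (∏ i, X i : MvPolynomial (Fin n) ℚ) = ∏ i, w i :=
    fun w ↦ by simp only [map_prod, aeval_X]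
  obtain ⟨a, ha, haP, hprod⟩ := exists_isAlgebraic_eval_eq_zero hP (q := ∏ i, X i) hz
    (by rw [aeval_prod_X]; exact Finset.prod_ne_zero_iff.2 fun i _ ↦ hz0 i)
  rw [aeval_prod_X, Finset.prod_ne_zero_iff] at hprod
  exact ⟨a, ⟨fun i ↦ hprod i (Finset.mem_univ i), haP⟩, ha⟩

end AlgebraicPoints

section SaturatedLattices

variable {ι R : Type*} [Fintype ι] [CommRing R] [IsDomain R] [IsPrincipalIdealRing R]

theorem exists_mem_iff_vecMul_eq_zero_of_saturated {L : Submodule R (ι → R)}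
    (hL : ∀ (k : R) (m : ι → R), k ≠ 0 → k • m ∈ L → m ∈ L) :
    ∃ (r : ℕ) (A : Matrix ι (Fin r) R) (B : Matrix (Fin r) ι R),
      (∀ m, m ∈ L ↔ Matrix.vecMul m A = 0) ∧ B * A = 1 := by
  classical
  have : Module.IsTorsionFree R ((ι → R) ⧸ L) := by
    refine ⟨fun k hk ↦ isSMulRegular_iff_right_eq_zero_of_smul.2 fun x hx ↦ ?_⟩
    obtain ⟨m, rfl⟩ := Submodule.Quotient.mk_surjective L x
    rw [← Submodule.Quotient.mk_smul, Submodule.Quotient.mk_eq_zero] at hx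
    exact (Submodule.Quotient.mk_eq_zero L).2 (hL k m hk.ne_zero hx)
  have : Module.Free R ((ι → R) ⧸ L) := Module.free_of_finite_type_torsion_free'
  let b := Module.finBasis R ((ι → R) ⧸ L)
  let π := b.equivFun.toLinearMap ∘ₗ L.mkQ
  obtain ⟨s, hs⟩ := Module.projective_lifting_property π LinearMap.id
    (b.equivFun.surjective.comp L.mkQ_surjective)
  refine ⟨_, (LinearMap.toMatrix' π).transpose, (LinearMap.toMatrix' s).transpose,
    fun m ↦ ?_, ?_⟩
  · rw [Matrix.vecMul_transpose, LinearMap.toMatrix'_mulVec]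
    simp [π]
  · rw [← Matrix.transpose_mul, ← LinearMap.toMatrix'_comp, hs, LinearMap.toMatrix'_id,
      Matrix.transpose_one]

end SaturatedLattices

/-! ### The theorem of Gelfond and Schneider -/

section ComplexAnalysis

theorem exists_differentiable_eq_prod_sub_mul {f : ℂ → ℂ} (hf : Differentiable ℂ f) {s : Finset ℂ}
    (hs : ∀ w ∈ s, f w = 0) :
    ∃ g : ℂ → ℂ, Differentiable ℂ g ∧ ∀ z, f z = (∏ w ∈ s, (z - w)) * g z := by
  classical
  induction s using Finset.induction_on generalizing f with
  | empty => exact ⟨f, hf, by simp⟩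
  | insert a s ha ih =>
    have hd : Differentiable ℂ (dslope f a) := by
      rw [← differentiableOn_univ] at hf ⊢
      exact (Complex.differentiableOn_dslope Filter.univ_mem).2 hf
    have hfd (z : ℂ) : f z = (z - a) * dslope f a z := by
      simpa [hs a (Finset.mem_insert_self a s)] using (sub_smul_dslope f a z).symm
    have hds : ∀ w ∈ s, dslope f a w = 0 := fun w hw ↦ by
      have hwa : w - a ≠ 0 := sub_ne_zero.2 fun h ↦ ha (h ▸ hw)
      simpa [hwa, hfd w] using hs w (Finset.mem_insert_of_mem hw)
    obtain ⟨g, hg, hgz⟩ := ih hd hds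
    exact ⟨g, hg, fun z ↦ by rw [hfd, hgz, Finset.prod_insert ha, mul_assoc]⟩

theorem norm_le_mul_half_pow_card_of_forall_eq_zero {f : ℂ → ℂ} (hf : Differentiable ℂ f)
    {s : Finset ℂ} {ρ B : ℝ} (hρ : 0 < ρ) (hs : ∀ w ∈ s, f w = 0 ∧ ‖w‖ ≤ ρ)
    (hB : ∀ z, ‖z‖ ≤ 5 * ρ → ‖f z‖ ≤ B) {z₀ : ℂ} (hz₀ : ‖z₀‖ ≤ ρ) :
    ‖f z₀‖ ≤ B * (1 / 2) ^ s.card := by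
  obtain ⟨g, hg, hfg⟩ := exists_differentiable_eq_prod_sub_mul hf fun w hw ↦ (hs w hw).1
  have hg_sphere : ∀ z ∈ frontier (Metric.ball (0 : ℂ) (5 * ρ)), ‖g z‖ ≤ B / (4 * ρ) ^ s.card := by
    intro z hz
    rw [frontier_ball _ (by positivity), mem_sphere_zero_iff_norm] at hz
    have hprod : (4 * ρ) ^ s.card ≤ ‖∏ w ∈ s, (z - w)‖ := by
      rw [norm_prod, ← Finset.prod_const]
      refine Finset.prod_le_prod (fun _ _ ↦ by positivity) fun w hw ↦ ?_
      linarith [norm_sub_norm_le z w, (hs w hw).2]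
    rw [le_div_iff₀' (by positivity)]
    calc (4 * ρ) ^ s.card * ‖g z‖ ≤ ‖∏ w ∈ s, (z - w)‖ * ‖g z‖ := by gcongr
      _ = ‖f z‖ := by rw [hfg, norm_mul]
      _ ≤ B := hB z hz.le
  have hg_z₀ : ‖g z₀‖ ≤ B / (4 * ρ) ^ s.card :=
    Complex.norm_le_of_forall_mem_frontier_norm_le Metric.isBounded_ball hg.diffContOnCl hg_sphere
      (subset_closure (by rw [mem_ball_zero_iff]; linarith))
  have hprod : ‖∏ w ∈ s, (z₀ - w)‖ ≤ (2 * ρ) ^ s.card := by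
    rw [norm_prod, ← Finset.prod_const]
    refine Finset.prod_le_prod (fun _ _ ↦ norm_nonneg _) fun w hw ↦ ?_
    linarith [norm_sub_le z₀ w, (hs w hw).2]
  calc ‖f z₀‖ = ‖∏ w ∈ s, (z₀ - w)‖ * ‖g z₀‖ := by rw [hfg, norm_mul]
    _ ≤ (2 * ρ) ^ s.card * (B / (4 * ρ) ^ s.card) := by gcongr
    _ = B * (1 / 2) ^ s.card := by
      rw [show 4 * ρ = 2 * (2 * ρ) by ring, mul_pow 2 (2 * ρ), one_div, inv_pow]
      field_simp

end ComplexAnalysis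

section NumberFields

open NumberField Module
open scoped Matrix

theorem one_le_norm_mul_house_pow_s1 {K : Type*} [Field K] [NumberField K] (φ : K →+* ℂ) {x : K}
    (hx : x ≠ 0) (hintegral : IsIntegral ℤ x) : 1 ≤ ‖φ x‖ * house x ^ (finrank ℚ K - 1) := by
  refine le_trans ?_ (norm_norm_le_norm_mul_house_pow x φ)
  obtain ⟨m, hm⟩ := IsIntegrallyClosed.isIntegral_iff.1 (Algebra.isIntegral_norm ℚ hintegral)
  have hm0 : m ≠ 0 := by
    rintro rfl
    exact hx ((Algebra.norm_eq_zero_iff (R := ℚ)).1 (hm.symm.trans (map_zero _)))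
  rw [← hm]
  simpa [Int.norm_eq_abs] using mod_cast Int.one_le_abs hm0

theorem exists_siegel_constant (K : Type*) [Field K] [NumberField K] :
    ∃ C : ℝ, ∀ {α β : Type} [Fintype α] [Fintype β] [Nonempty α] (a : Matrix α β K) {A : ℝ},
      Fintype.card β = 2 * Fintype.card α → a ≠ 0 → (∀ k l, IsIntegral ℤ (a k l)) →
      (∀ k l, house (a k l) ≤ A) →
      ∃ ξ : β → K, ξ ≠ 0 ∧ a *ᵥ ξ = 0 ∧ (∀ l, IsIntegral ℤ (ξ l)) ∧
        ∀ l, house (ξ l) ≤ C * (Fintype.card α * A) := by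
  classical
  obtain ⟨c, hc⟩ : ∃ c : ℝ, ∀ {α β : Type} [Fintype α] [Fintype β] (a : Matrix α β (𝓞 K)) {A : ℝ}
      {p q : ℕ}, 0 < p → p < q → Fintype.card α = p → Fintype.card β = q → a ≠ 0 →
      (∀ k l, house (algebraMap (𝓞 K) K (a k l)) ≤ A) →
      ∃ ξ : β → 𝓞 K, ξ ≠ 0 ∧ a *ᵥ ξ = 0 ∧
        ∀ l, house (ξ l : K) ≤ c * (c * q * A) ^ ((p : ℝ) / (q - p)) :=
    ⟨_, fun a _ _ _ hp hpq hα hβ ha hA ↦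
      house.exists_ne_zero_int_vec_house_le K a ha hp hpq hβ hA hα⟩
  refine ⟨2 * c ^ 2, fun {α β} _ _ _ a A hcard ha hintegral hA ↦ ?_⟩
  have hp : 0 < Fintype.card α := Fintype.card_pos
  obtain ⟨ξ, hξ0, haξ, hξ⟩ := hc (fun k l ↦ (⟨a k l, hintegral k l⟩ : 𝓞 K)) hp (by omega) rfl hcard
    (fun h ↦ ha (Matrix.ext fun k l ↦ congrArg Subtype.val (congrFun₂ h k l))) hA
  refine ⟨fun l ↦ ξ l, fun h ↦ hξ0 (funext fun l ↦ RingOfIntegers.ext (congrFun h l)), ?_,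
    fun l ↦ (ξ l).2, fun l ↦ (hξ l).trans_eq ?_⟩
  · funext k
    have hk := congrArg (algebraMap (𝓞 K) K) (congrFun haξ k)
    simp only [Matrix.mulVec, dotProduct, map_sum, Pi.zero_apply, map_zero] at hk
    exact hk
  · have hexp : (Fintype.card α : ℝ) / ((2 * Fintype.card α : ℕ) - Fintype.card α) = 1 := by
      push_cast
      rw [two_mul, add_sub_cancel_right, div_self (by positivity)]
    rw [hexp, Real.rpow_one]
    push_cast
    ring

end NumberFields

section BivariatePolynomials

/-- The value at `(x, y)` of the polynomial with coefficients `q` and degree less than `m` in the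
first and less than `n` in the second variable. The auxiliary function of Gelfond's method is
`z ↦ biEval q z (exp (2πiz))`. -/
def biEval {A : Type*} [CommSemiring A] {m n : ℕ} (q : Fin m × Fin n → A) (x y : A) : A :=
  ∑ ij, q ij * (x ^ (ij.1 : ℕ) * y ^ (ij.2 : ℕ))

variable {m n : ℕ}

theorem map_biEval {A B : Type*} [CommSemiring A] [CommSemiring B] (φ : A →+* B)
    (q : Fin m × Fin n → A) (x y : A) : φ (biEval q x y) = biEval (φ ∘ q) (φ x) (φ y) := by
  simp [biEval]

theorem eq_zero_of_forall_biEval_eq_zero {A : Type*} [CommRing A] [IsDomain A] [CharZero A]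
    {q : Fin m × Fin n → A} {b g : A} (hg : Function.Injective fun v : ℕ ↦ g ^ v)
    (h : ∀ u v : ℕ, biEval q (u + v * b) (g ^ v) = 0) : q = 0 := by
  have hrow (v : ℕ) : (fun i ↦ ∑ j : Fin n, (g ^ v) ^ (j : ℕ) * q (i, j)) = 0 := by
    refine Matrix.eq_zero_of_forall_index_sum_pow_mul_eq_zero
      (f := fun u : Fin m ↦ ((u : ℕ) : A) + v * b) (fun u u' huu' ↦ ?_) fun u ↦ ?_
    · simpa [Fin.val_inj] using huu'
    · rw [← h u v, biEval, Fintype.sum_prod_type]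
      simp only [Finset.mul_sum]
      exact Finset.sum_congr rfl fun i _ ↦ Finset.sum_congr rfl fun j _ ↦ by ring
  funext ⟨i, j⟩
  refine congrFun (Matrix.eq_zero_of_forall_index_sum_pow_mul_eq_zero
    (f := fun v : Fin n ↦ g ^ (v : ℕ)) (v := fun j ↦ q (i, j)) (hg.comp Fin.val_injective)
    fun v ↦ ?_) j
  exact congrFun (hrow v) i

theorem norm_pow_mul_pow_le {A : Type*} [SeminormedCommRing A] [NormOneClass A] {x y : A} {X Y : ℝ}
    (hX : 1 ≤ X) (hY : 1 ≤ Y) (hx : ‖x‖ ≤ X) (hy : ‖y‖ ≤ Y) {i j : ℕ} (hi : i ≤ m) (hj : j ≤ n) :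
    ‖x ^ i * y ^ j‖ ≤ X ^ m * Y ^ n :=
  calc ‖x ^ i * y ^ j‖ ≤ ‖x‖ ^ i * ‖y‖ ^ j :=
        (norm_mul_le _ _).trans (by gcongr <;> exact norm_pow_le _ _)
    _ ≤ X ^ m * Y ^ n := by
        gcongr
        · exact (pow_le_pow_left₀ (norm_nonneg x) hx i).trans (pow_le_pow_right₀ hX hi)
        · exact (pow_le_pow_left₀ (norm_nonneg y) hy j).trans (pow_le_pow_right₀ hY hj)

theorem norm_biEval_le {A : Type*} [SeminormedCommRing A] [NormOneClass A]
    {q : Fin m × Fin n → A} {x y : A} {a X Y : ℝ} (hX : 1 ≤ X) (hY : 1 ≤ Y)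
    (hq : ∀ ij, ‖q ij‖ ≤ a) (hx : ‖x‖ ≤ X) (hy : ‖y‖ ≤ Y) :
    ‖biEval q x y‖ ≤ (m * n : ℕ) * (a * (X ^ m * Y ^ n)) := by
  have hterm : ∀ ij ∈ Finset.univ, ‖q ij * (x ^ (ij.1 : ℕ) * y ^ (ij.2 : ℕ))‖ ≤
      a * (X ^ m * Y ^ n) := fun ij _ ↦ (norm_mul_le _ _).trans <|
    mul_le_mul (hq ij) (norm_pow_mul_pow_le hX hY hx hy ij.1.2.le ij.2.2.le) (norm_nonneg _)
      ((norm_nonneg _).trans (hq ij))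
  refine (norm_sum_le_of_le _ hterm).trans_eq ?_
  simp

theorem isIntegral_pow_mul_pow_mul_pow {R A : Type*} [CommRing R] [CommRing A] [Algebra R A]
    {d x y : A} (hd : IsIntegral R d) (hx : IsIntegral R (d * x)) (hy : IsIntegral R (d * y))
    {e i j : ℕ} (h : i + j ≤ e) : IsIntegral R (d ^ e * (x ^ i * y ^ j)) := by
  obtain ⟨f, rfl⟩ := Nat.exists_eq_add_of_le h
  convert! (hd.pow f).mul ((hx.pow i).mul (hy.pow j)) using 1
  ring

end BivariatePolynomials

section Gelfond

open Filter NumberField Module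
open scoped Topology Matrix

theorem exists_forall_pow_lt_two_pow (A H : ℝ) (c : ℕ) :
    ∃ k : ℕ, 1 ≤ k ∧ ∀ M : ℕ, k ^ 2 ≤ M → (A * (H * M) ^ c) ^ k < (2 : ℝ) ^ M := by
  have hlittle : (fun s : ℝ ↦ A * (H * s ^ 2) ^ c) =o[atTop] fun s ↦ Real.exp (Real.log 2 * s) := by
    have hpow := (isLittleO_pow_exp_pos_mul_atTop (k := 2 * c)
      (Real.log_pos one_lt_two)).const_mul_left (A * H ^ c)
    refine hpow.congr_left fun s ↦ ?_
    rw [mul_pow, ← pow_mul, mul_assoc]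
  have hsmall : ∀ᶠ M : ℕ in atTop, |A * (H * M) ^ c| < Real.exp (Real.log 2 * √M) := by
    filter_upwards [(Real.tendsto_sqrt_atTop.comp tendsto_natCast_atTop_atTop).eventually
      (hlittle.def one_half_pos)] with M hM
    simp only [Function.comp_apply, Real.sq_sqrt (Nat.cast_nonneg M), Real.norm_eq_abs,
      Real.abs_exp] at hM
    linarith [Real.exp_pos (Real.log 2 * √M)]
  obtain ⟨M₀, hM₀⟩ := eventually_atTop.1 hsmall
  refine ⟨M₀ + 1, by omega, fun M hM ↦ ?_⟩
  have hsqrt : ((M₀ + 1 : ℕ) : ℝ) ≤ √M := Real.le_sqrt_of_sq_le (mod_cast hM)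
  calc (A * (H * M) ^ c) ^ (M₀ + 1) ≤ |A * (H * M) ^ c| ^ (M₀ + 1) := by
        rw [← abs_pow]; exact le_abs_self _
    _ < Real.exp (Real.log 2 * √M) ^ (M₀ + 1) :=
        pow_lt_pow_left₀ (hM₀ M (by nlinarith)) (abs_nonneg _) M₀.succ_ne_zero
    _ = Real.exp (Real.log 2 * (√M * (M₀ + 1 : ℕ))) := by rw [← Real.exp_nat_mul]; ring_nf
    _ ≤ Real.exp (Real.log 2 * (√M * √M)) := by
        have := Real.log_nonneg one_le_two
        gcongr
    _ = 2 ^ M := by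
        rw [Real.mul_self_sqrt (Nat.cast_nonneg M), mul_comm, Real.exp_nat_mul,
          Real.exp_log two_pos]

section Exponents

variable {H : ℝ} {k M : ℕ}

theorem two_le_mul_cast (hH : 2 ≤ H) (hk : 1 ≤ k) (hkM : k ^ 2 ≤ M) : 2 ≤ H * M := by
  have hM : (1 : ℝ) ≤ M := mod_cast (Nat.one_le_pow 2 k hk).trans hkM
  nlinarith

theorem cast_two_mul_cube_mul_le (hH : 2 ≤ H) (hk : 1 ≤ k) (hkM : k ^ 2 ≤ M) :
    ((2 * k ^ 3 * k : ℕ) : ℝ) ≤ (H * M) ^ (3 * (M * k)) := by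
  have hHM := two_le_mul_cast hH hk hkM
  have hkM' : (k : ℝ) ^ 2 ≤ H * M :=
    (show (k : ℝ) ^ 2 ≤ M from mod_cast hkM).trans
      (le_mul_of_one_le_left M.cast_nonneg (by linarith))
  have hMk : 1 ≤ M * k := Nat.mul_pos ((Nat.one_le_pow 2 k hk).trans hkM) hk
  calc ((2 * k ^ 3 * k : ℕ) : ℝ) = 2 * (k ^ 2 * k ^ 2) := by push_cast; ring
    _ ≤ H * M * (H * M * (H * M)) := by gcongr
    _ = (H * M) ^ 3 := by ring
    _ ≤ (H * M) ^ (3 * (M * k)) := pow_le_pow_right₀ (by linarith) (by omega)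

theorem mul_pow_mul_pow_pow_le (hH : 2 ≤ H) (hk : 1 ≤ k) (hkM : k ^ 2 ≤ M) :
    (H * M) ^ (2 * k ^ 3) * (H ^ M) ^ k ≤ (H * M) ^ (3 * (M * k)) := by
  have hHM := two_le_mul_cast hH hk hkM
  have hM : (1 : ℝ) ≤ M := mod_cast (Nat.one_le_pow 2 k hk).trans hkM
  calc (H * M) ^ (2 * k ^ 3) * (H ^ M) ^ k
      ≤ (H * M) ^ (2 * k ^ 3) * ((H * M) ^ M) ^ k := by
        gcongr
        exact le_mul_of_one_le_right (by linarith) hM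
    _ = (H * M) ^ (2 * k ^ 3 + M * k) := by rw [← pow_mul, ← pow_add]
    _ ≤ (H * M) ^ (3 * (M * k)) := pow_le_pow_right₀ (by linarith) (by nlinarith)

theorem mul_natCast_mul_pow_le {C : ℝ} (hH : 2 ≤ H) (hCH : C ≤ H) (hk : 1 ≤ k) :
    C * ((k ^ 2 * k ^ 2 : ℕ) * (H * (k ^ 2 : ℕ)) ^ (6 * (k ^ 2 * k))) ≤
      (H * (k ^ 2 : ℕ)) ^ (9 * (k ^ 2 * k)) := by
  have hHk := two_le_mul_cast hH hk le_rfl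
  have hk2 : 1 ≤ k ^ 2 := Nat.one_le_pow 2 k hk
  have hk3 : 1 ≤ k ^ 2 * k := Nat.mul_pos hk2 hk
  have hk2H : ((k ^ 2 : ℕ) : ℝ) ≤ H * (k ^ 2 : ℕ) :=
    le_mul_of_one_le_left (by positivity) (by linarith)
  have hCHk : C ≤ H * (k ^ 2 : ℕ) :=
    hCH.trans (le_mul_of_one_le_right (by linarith) (mod_cast hk2))
  calc C * ((k ^ 2 * k ^ 2 : ℕ) * (H * (k ^ 2 : ℕ)) ^ (6 * (k ^ 2 * k)))
      ≤ H * (k ^ 2 : ℕ) * (H * (k ^ 2 : ℕ) * (H * (k ^ 2 : ℕ)) *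
          (H * (k ^ 2 : ℕ)) ^ (6 * (k ^ 2 * k))) := by
        rw [Nat.cast_mul]
        gcongr
    _ = (H * (k ^ 2 : ℕ)) ^ (3 + 6 * (k ^ 2 * k)) := by ring
    _ ≤ (H * (k ^ 2 : ℕ)) ^ (9 * (k ^ 2 * k)) := pow_le_pow_right₀ (by linarith) (by omega)

theorem mul_half_pow_mul_pow_lt_one {A : ℝ} {D : ℕ} (hA : 0 ≤ A) (hH : 2 ≤ H) (hk : 1 ≤ k)
    (hkM : k ^ 2 ≤ M) (h : (A * (H * M) ^ (17 + 18 * D)) ^ k < (2 : ℝ) ^ M) :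
    (H * M) ^ (14 * (M * k)) * A ^ (M * k) * (1 / 2) ^ (M * M) *
      ((H * M) ^ (3 + 18 * D)) ^ (M * k) < 1 := by
  have := two_le_mul_cast hH hk hkM
  have hM : M ≠ 0 := Nat.one_le_iff_ne_zero.1 ((Nat.one_le_pow 2 k hk).trans hkM)
  calc (H * M) ^ (14 * (M * k)) * A ^ (M * k) * (1 / 2) ^ (M * M) *
        ((H * M) ^ (3 + 18 * D)) ^ (M * k)
      = ((A * (H * M) ^ (17 + 18 * D)) ^ k) ^ M * (1 / 2) ^ (M * M) := by ring
    _ < (2 ^ M) ^ M * (1 / 2) ^ (M * M) := by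
        have := pow_lt_pow_left₀ h (by positivity) hM
        gcongr
    _ = 1 := by rw [← pow_mul, ← mul_pow]; norm_num

end Exponents

/-- `d` is a common denominator of `b` and `g`, and `H` bounds the sizes of `d`, `b` and `g`; the
bound on `b` is normalised so that `u + v * b` has house at most `H * M` for `u, v ≤ M`. -/
structure IsHeightBound {K : Type*} [Field K] [NumberField K] (b g : K) (d : ℤ) (H : ℝ) : Prop where
  two_le : 2 ≤ H
  den_ne_zero : d ≠ 0
  abs_den_le : |(d : ℝ)| ≤ H
  isIntegral_den_mul_left : IsIntegral ℤ (d * b)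
  isIntegral_den_mul_right : IsIntegral ℤ (d * g)
  one_add_house_le : 1 + house b ≤ H
  house_le : house g ≤ H

theorem exists_isHeightBound {K : Type*} [Field K] [NumberField K] (b g : K) (C : ℝ) :
    ∃ d H, IsHeightBound b g d H ∧ C ≤ H := by
  classical
  obtain ⟨d, hd, hintegral⟩ := exists_integral_multiples ℤ ℚ (L := K) {b, g}
  have hb := house_nonneg b
  have hg := house_nonneg g
  have hdR := abs_nonneg (d : ℝ)
  have hC := neg_abs_le C
  refine ⟨d, 2 + |(d : ℝ)| + house b + house g + |C|, ⟨?_, hd, ?_, ?_, ?_, ?_, ?_⟩, ?_⟩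
  any_goals linarith [le_abs_self C]
  · simpa only [zsmul_eq_mul] using hintegral b (by simp)
  · simpa only [zsmul_eq_mul] using hintegral g (by simp)

namespace IsHeightBound

variable {K : Type*} [Field K] [NumberField K] {b g : K} {d : ℤ} {H : ℝ} {k M u v : ℕ}

variable (h : IsHeightBound b g d H)
include h

theorem house_natCast_add_mul_le (hu : u ≤ M) (hv : v ≤ M) : house (u + v * b : K) ≤ H * M :=
  calc house (u + v * b : K) ≤ house (u : K) + house (v * b) := house_add_le _ _
    _ = u + v * house b := by
        rw [house_nat_mul]
        simpa using house_intCast (K := K) u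
    _ ≤ M + M * house b := by
        have := house_nonneg b
        gcongr
    _ = (1 + house b) * M := by ring
    _ ≤ H * M := by
        gcongr
        exact h.one_add_house_le

theorem house_pow_le (hv : v ≤ M) : house (g ^ v) ≤ H ^ M :=
  calc house (g ^ v) ≤ house g ^ v := NumberField.house_pow_le g v
    _ ≤ H ^ v := pow_le_pow_left₀ (house_nonneg g) h.house_le v
    _ ≤ H ^ M := pow_le_pow_right₀ (by linarith [h.two_le]) hv

theorem house_den_pow_le (hM : 1 ≤ M) (e : ℕ) : house ((d : K) ^ e) ≤ (H * M) ^ e := by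
  refine (NumberField.house_pow_le _ e).trans (pow_le_pow_left₀ (house_nonneg _) ?_ e)
  rw [house_intCast, Int.cast_abs]
  exact h.abs_den_le.trans
    (le_mul_of_one_le_right (by linarith [h.two_le]) (mod_cast hM))

theorem house_monomial_le (hk : 1 ≤ k) (hkM : k ^ 2 ≤ M) (hu : u ≤ M) (hv : v ≤ M) {i j : ℕ}
    (hi : i ≤ 2 * k ^ 3) (hj : j ≤ k) :
    house ((u + v * b) ^ i * (g ^ v) ^ j) ≤ (H * M) ^ (3 * (M * k)) := by
  have hH := h.two_le
  have hHM := two_le_mul_cast hH hk hkM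
  refine le_trans ?_ (mul_pow_mul_pow_pow_le hH hk hkM)
  rw [house, map_mul, map_pow, map_pow _ (g ^ v)]
  exact norm_pow_mul_pow_le (by linarith) (one_le_pow₀ (by linarith))
    (h.house_natCast_add_mul_le hu hv) (h.house_pow_le hv) hi hj

theorem isIntegral_den_pow_mul_monomial (hkM : k ^ 2 ≤ M) (hv : v ≤ M) {i j : ℕ}
    (hi : i ≤ 2 * k ^ 3) (hj : j ≤ k) :
    IsIntegral ℤ ((d : K) ^ (3 * (M * k)) * ((u + v * b) ^ i * (g ^ v) ^ j)) := by
  rw [← pow_mul]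
  refine isIntegral_pow_mul_pow_mul_pow (isIntegral_algebraMap (x := d)) ?_
    h.isIntegral_den_mul_right ?_
  · have hsum := (isIntegral_algebraMap (A := K) (x := d * u)).add
      ((isIntegral_algebraMap (A := K) (x := (v : ℤ))).mul h.isIntegral_den_mul_left)
    convert! hsum using 1
    push_cast [algebraMap_int_eq, eq_intCast]
    ring
  · have hvj : v * j ≤ M * k := Nat.mul_le_mul hv hj
    nlinarith

theorem house_biEval_le (hk : 1 ≤ k) (hkM : k ^ 2 ≤ M) {q : Fin (2 * k ^ 3) × Fin k → K}
    (hq : ∀ ij, house (q ij) ≤ (H * M) ^ (9 * (M * k))) (hu : u ≤ M) (hv : v ≤ M) :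
    house (biEval q (u + v * b) (g ^ v)) ≤ (H * M) ^ (15 * (M * k)) := by
  have hH := h.two_le
  have hHM := two_le_mul_cast hH hk hkM
  rw [house, map_biEval]
  refine (norm_biEval_le (by linarith) (one_le_pow₀ (by linarith)) hq
    (h.house_natCast_add_mul_le hu hv) (h.house_pow_le hv)).trans ?_
  calc ((2 * k ^ 3 * k : ℕ) : ℝ) * ((H * M) ^ (9 * (M * k)) * ((H * M) ^ (2 * k ^ 3) * (H ^ M) ^ k))
      ≤ (H * M) ^ (3 * (M * k)) * ((H * M) ^ (9 * (M * k)) * (H * M) ^ (3 * (M * k))) := by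
        gcongr
        · exact cast_two_mul_cube_mul_le hH hk hkM
        · exact mul_pow_mul_pow_pow_le hH hk hkM
    _ = (H * M) ^ (15 * (M * k)) := by ring

theorem one_le_norm_biEval_mul_pow (φ : K →+* ℂ) (hk : 1 ≤ k) (hkM : k ^ 2 ≤ M)
    {q : Fin (2 * k ^ 3) × Fin k → K} (hintegral : ∀ ij, IsIntegral ℤ (q ij))
    (hq : ∀ ij, house (q ij) ≤ (H * M) ^ (9 * (M * k))) (hu : u ≤ M) (hv : v ≤ M)
    (hne : biEval q (u + v * b) (g ^ v) ≠ 0) :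
    1 ≤ ‖φ (biEval q (u + v * b) (g ^ v))‖ * ((H * M) ^ (3 + 18 * finrank ℚ K)) ^ (M * k) := by
  have hM : 1 ≤ M := (Nat.one_le_pow 2 k hk).trans hkM
  have hHM := two_le_mul_cast h.two_le hk hkM
  set y := biEval q (u + v * b) (g ^ v) with hy
  set x : K := (d : K) ^ (3 * (M * k)) * y with hx
  have hx0 : x ≠ 0 := mul_ne_zero (pow_ne_zero _ (mod_cast h.den_ne_zero)) hne
  have hxint : IsIntegral ℤ x := by
    rw [hx, hy, biEval, Finset.mul_sum]
    refine IsIntegral.sum _ fun ij _ ↦ ?_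
    rw [mul_left_comm]
    exact (hintegral ij).mul (h.isIntegral_den_pow_mul_monomial hkM hv ij.1.2.le ij.2.2.le)
  have hxhouse : house x ≤ (H * M) ^ (18 * (M * k)) :=
    calc house x ≤ house ((d : K) ^ (3 * (M * k))) * house y := house_mul_le _ _
      _ ≤ (H * M) ^ (3 * (M * k)) * (H * M) ^ (15 * (M * k)) :=
          mul_le_mul (h.house_den_pow_le hM _) (h.house_biEval_le hk hkM hq hu hv)
            (house_nonneg _) (by positivity)
      _ = (H * M) ^ (18 * (M * k)) := by ring
  have hxnorm : ‖φ x‖ ≤ (H * M) ^ (3 * (M * k)) * ‖φ y‖ := by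
    rw [hx, map_mul, norm_mul]
    gcongr
    exact (norm_embedding_le_house _ φ).trans (h.house_den_pow_le hM _)
  calc 1 ≤ ‖φ x‖ * house x ^ (finrank ℚ K - 1) := one_le_norm_mul_house_pow_s1 φ hx0 hxint
    _ ≤ (H * M) ^ (3 * (M * k)) * ‖φ y‖ * ((H * M) ^ (18 * (M * k))) ^ finrank ℚ K := by
        refine mul_le_mul hxnorm ?_ (pow_nonneg (house_nonneg x) _) (by positivity)
        exact (pow_le_pow_left₀ (house_nonneg x) hxhouse _).trans
          (pow_le_pow_right₀ (one_le_pow₀ (by linarith)) (Nat.sub_le _ _))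
    _ = ‖φ y‖ * ((H * M) ^ (3 + 18 * finrank ℚ K)) ^ (M * k) := by
        rw [← pow_mul, ← pow_mul]
        ring

end IsHeightBound

theorem exists_auxiliary_polynomial (K : Type*) [Field K] [NumberField K] :
    ∃ C : ℝ, ∀ {b g : K} {d : ℤ} {H : ℝ}, IsHeightBound b g d H → C ≤ H → ∀ {k : ℕ}, 1 ≤ k →
      ∃ q : Fin (2 * k ^ 3) × Fin k → K, q ≠ 0 ∧ (∀ ij, IsIntegral ℤ (q ij)) ∧
        (∀ ij, house (q ij) ≤ (H * (k ^ 2 : ℕ)) ^ (9 * (k ^ 2 * k))) ∧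
        ∀ u < k ^ 2, ∀ v < k ^ 2, biEval q (u + v * b) (g ^ v) = 0 := by
  obtain ⟨C, hC⟩ := exists_siegel_constant K
  refine ⟨C, fun {b g d H} h hCH k hk ↦ ?_⟩
  have hk2 : 1 ≤ k ^ 2 := Nat.one_le_pow 2 k hk
  have hH := h.two_le
  have := two_le_mul_cast hH hk le_rfl
  have : NeZero (k ^ 2) := ⟨by omega⟩
  let a : Matrix (Fin (k ^ 2) × Fin (k ^ 2)) (Fin (2 * k ^ 3) × Fin k) K := fun uv ij ↦
    (d : K) ^ (3 * (k ^ 2 * k)) *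
      (((uv.1 : ℕ) + (uv.2 : ℕ) * b) ^ (ij.1 : ℕ) * (g ^ (uv.2 : ℕ)) ^ (ij.2 : ℕ))
  have hd : (d : K) ^ (3 * (k ^ 2 * k)) ≠ 0 := pow_ne_zero _ (mod_cast h.den_ne_zero)
  have ha0 : a ≠ 0 := fun ha ↦ hd <| by
    simpa [a] using congrFun₂ ha (0, 0) (⟨0, by positivity⟩, ⟨0, hk⟩)
  have hahouse (uv ij) : house (a uv ij) ≤ (H * (k ^ 2 : ℕ)) ^ (6 * (k ^ 2 * k)) :=
    calc house (a uv ij) ≤ house ((d : K) ^ (3 * (k ^ 2 * k))) * house _ := house_mul_le _ _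
      _ ≤ (H * (k ^ 2 : ℕ)) ^ (3 * (k ^ 2 * k)) * (H * (k ^ 2 : ℕ)) ^ (3 * (k ^ 2 * k)) :=
          mul_le_mul (h.house_den_pow_le hk2 _)
            (h.house_monomial_le hk le_rfl uv.1.2.le uv.2.2.le ij.1.2.le ij.2.2.le)
            (house_nonneg _) (by positivity)
      _ = (H * (k ^ 2 : ℕ)) ^ (6 * (k ^ 2 * k)) := by ring
  obtain ⟨q, hq0, haq, hintegral, hq⟩ := hC a (by simp; ring) ha0
    (fun uv ij ↦ h.isIntegral_den_pow_mul_monomial le_rfl uv.2.2.le ij.1.2.le ij.2.2.le) hahouse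
  refine ⟨q, hq0, hintegral, fun ij ↦ (hq ij).trans ?_, fun u hu v hv ↦ ?_⟩
  · rw [Fintype.card_prod, Fintype.card_fin]
    exact mul_natCast_mul_pow_le hH hCH hk
  · refine (mul_eq_zero.1 ?_).resolve_left hd
    refine Eq.trans ?_ (congrFun haq (⟨u, hu⟩, ⟨v, hv⟩))
    rw [biEval, Finset.mul_sum]
    exact Finset.sum_congr rfl fun ij _ ↦ by simp only [a]; ring

section AuxiliaryFunction

variable {K : Type*} [Field K] {b g : K} {φ : K →+* ℂ}

theorem biEval_natCast_add_mul_exp (hbg : Complex.exp (2 * Real.pi * Complex.I * φ b) = φ g)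
    {m n : ℕ} (q : Fin m × Fin n → K) (u v : ℕ) :
    biEval (φ ∘ q) (u + v * φ b) (Complex.exp (2 * Real.pi * Complex.I * (u + v * φ b))) =
      φ (biEval q (u + v * b) (g ^ v)) := by
  have hexp : Complex.exp (2 * Real.pi * Complex.I * (u + v * φ b)) = φ (g ^ v) := by
    rw [map_pow, ← hbg, ← Complex.exp_nat_mul, mul_add, Complex.exp_add,
      mul_comm _ (u : ℂ), Complex.exp_nat_mul_two_pi_mul_I, one_mul]
    ring_nf
  rw [hexp, map_biEval, map_add, map_mul, map_natCast, map_natCast]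

theorem norm_biEval_exp_le {H : ℝ} {k M : ℕ} (hH : 2 ≤ H) (hk : 1 ≤ k) (hkM : k ^ 2 ≤ M)
    {q : Fin (2 * k ^ 3) × Fin k → ℂ} (hq : ∀ ij, ‖q ij‖ ≤ (H * M) ^ (9 * (M * k)))
    {z : ℂ} (hz : ‖z‖ ≤ 5 * (H * M)) :
    ‖biEval q z (Complex.exp (2 * Real.pi * Complex.I * z))‖ ≤
      (H * M) ^ (14 * (M * k)) * (25 * Real.exp (10 * Real.pi * H)) ^ (M * k) := by
  have hHM := two_le_mul_cast hH hk hkM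
  have hexp : ‖Complex.exp (2 * Real.pi * Complex.I * z)‖ ≤ Real.exp (10 * Real.pi * H) ^ M := by
    refine (Complex.norm_exp_le_exp_norm _).trans ?_
    rw [← Real.exp_nat_mul, Real.exp_le_exp]
    calc ‖2 * Real.pi * Complex.I * z‖ = 2 * Real.pi * ‖z‖ := by simp [abs_of_pos Real.pi_pos]
      _ ≤ 2 * Real.pi * (5 * (H * M)) := by gcongr
      _ = M * (10 * Real.pi * H) := by ring
  refine (norm_biEval_le (by linarith) (one_le_pow₀ (Real.one_le_exp (by positivity)))
    hq hz hexp).trans ?_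
  calc ((2 * k ^ 3 * k : ℕ) : ℝ) * ((H * M) ^ (9 * (M * k)) *
          ((5 * (H * M)) ^ (2 * k ^ 3) * (Real.exp (10 * Real.pi * H) ^ M) ^ k))
      ≤ (H * M) ^ (3 * (M * k)) * ((H * M) ^ (9 * (M * k)) *
          ((5 * (H * M)) ^ (2 * (M * k)) * (Real.exp (10 * Real.pi * H) ^ M) ^ k)) := by
        gcongr
        · exact cast_two_mul_cube_mul_le hH hk hkM
        · linarith
        · nlinarith
    _ = (H * M) ^ (14 * (M * k)) * (25 * Real.exp (10 * Real.pi * H)) ^ (M * k) := by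
        rw [mul_pow 5, mul_pow 25, pow_mul 5 2]
        ring

end AuxiliaryFunction

theorem natCast_add_mul_injective {β : ℂ} (hβ : ∀ r : ℚ, β ≠ r) :
    Function.Injective fun uv : ℤ × ℤ ↦ (uv.1 : ℂ) + uv.2 * β := by
  rintro ⟨u, v⟩ ⟨u', v'⟩ h
  have hv : v = v' := by
    by_contra hne
    have hne' : (v : ℂ) - v' ≠ 0 := sub_ne_zero.2 (mod_cast hne)
    refine hβ ((u' - u) / (v - v')) ?_
    push_cast
    rw [eq_div_iff hne']
    linear_combination h
  subst hv
  simpa using h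

theorem pow_injective_of_exp_eq {K : Type*} [Field K] {φ : K →+* ℂ} {b g : K}
    (hbg : Complex.exp (2 * Real.pi * Complex.I * φ b) = φ g) (hb : ∀ r : ℚ, φ b ≠ r) :
    Function.Injective fun v : ℕ ↦ g ^ v := by
  intro v v' hvv'
  have hexp := congrArg φ hvv'
  simp only [map_pow, ← hbg, ← Complex.exp_nat_mul] at hexp
  obtain ⟨m, hm⟩ := Complex.exp_eq_exp_iff_exists_int.1 hexp
  have hgrid := @natCast_add_mul_injective _ hb (0, v) (m, v') <| by
    refine mul_left_cancel₀ Complex.two_pi_I_ne_zero ?_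
    push_cast
    linear_combination hm
  exact Int.ofNat_inj.1 (congrArg Prod.snd hgrid)

/-- The zeros on the grid make the value at `u + v * b` too small, by the maximum principle, for a
nonzero algebraic number of this height and denominator. -/
theorem IsHeightBound.biEval_eq_zero_of_forall_lt {K : Type*} [Field K] [NumberField K] {b g : K}
    {d : ℤ} {H : ℝ} (h : IsHeightBound b g d H) {φ : K →+* ℂ}
    (hbg : Complex.exp (2 * Real.pi * Complex.I * φ b) = φ g) (hb : ∀ r : ℚ, φ b ≠ r)
    {k M : ℕ} (hk : 1 ≤ k) (hkM : k ^ 2 ≤ M)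
    (hM : (25 * Real.exp (10 * Real.pi * H) * (H * M) ^ (17 + 18 * finrank ℚ K)) ^ k < (2 : ℝ) ^ M)
    {q : Fin (2 * k ^ 3) × Fin k → K} (hintegral : ∀ ij, IsIntegral ℤ (q ij))
    (hq : ∀ ij, house (q ij) ≤ (H * M) ^ (9 * (M * k)))
    (hzero : ∀ u < M, ∀ v < M, biEval q (u + v * b) (g ^ v) = 0)
    {u v : ℕ} (hu : u ≤ M) (hv : v ≤ M) : biEval q (u + v * b) (g ^ v) = 0 := by
  by_contra hne
  have hHM := two_le_mul_cast h.two_le hk hkM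
  let grid : Finset ℂ := (Finset.range M ×ˢ Finset.range M).image fun uv ↦ (uv.1 : ℂ) + uv.2 * φ b
  have hcard : grid.card = M * M := by
    rw [Finset.card_image_of_injective, Finset.card_product, Finset.card_range]
    intro uv uv' huv
    have := (natCast_add_mul_injective hb).comp
      (Prod.map_injective.2 ⟨Nat.cast_injective (R := ℤ), Nat.cast_injective (R := ℤ)⟩)
    exact this (by simpa using huv)
  have hnorm {u v : ℕ} (hu : u ≤ M) (hv : v ≤ M) : ‖(u : ℂ) + v * φ b‖ ≤ H * M := by
    simpa using (norm_embedding_le_house _ φ).trans (h.house_natCast_add_mul_le hu hv)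
  have hgrid : ∀ w ∈ grid,
      biEval (φ ∘ q) w (Complex.exp (2 * Real.pi * Complex.I * w)) = 0 ∧ ‖w‖ ≤ H * M := by
    intro w hw
    obtain ⟨⟨u, v⟩, huv, rfl⟩ := Finset.mem_image.1 hw
    obtain ⟨hu, hv⟩ := Finset.mem_product.1 huv
    rw [Finset.mem_range] at hu hv
    exact ⟨by rw [biEval_natCast_add_mul_exp hbg, hzero u hu v hv, map_zero], hnorm hu.le hv.le⟩
  have hupper := norm_le_mul_half_pow_card_of_forall_eq_zero
    (f := fun z ↦ biEval (φ ∘ q) z (Complex.exp (2 * Real.pi * Complex.I * z)))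
    (by unfold biEval; fun_prop) (by linarith) hgrid
    (fun z hz ↦ norm_biEval_exp_le h.two_le hk hkM
      (fun ij ↦ (norm_embedding_le_house _ φ).trans (hq ij)) hz) (hnorm hu hv)
  rw [biEval_natCast_add_mul_exp hbg, hcard] at hupper
  have hlower := h.one_le_norm_biEval_mul_pow φ hk hkM hintegral hq hu hv hne
  refine (hlower.trans (mul_le_mul_of_nonneg_right hupper (by positivity))).not_gt ?_
  exact mul_half_pow_mul_pow_lt_one (by positivity) h.two_le hk hkM hM

theorem exists_ratCast_eq_of_exp_two_pi_mul_I_mul_eq {K : Type*} [Field K] [NumberField K]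
    {φ : K →+* ℂ} {b g : K} (hbg : Complex.exp (2 * Real.pi * Complex.I * φ b) = φ g) :
    ∃ r : ℚ, φ b = r := by
  by_contra! hb
  obtain ⟨C, hC⟩ := exists_auxiliary_polynomial K
  obtain ⟨d, H, h, hCH⟩ := exists_isHeightBound b g C
  have hH := h.two_le
  obtain ⟨k, hk, hpow⟩ :=
    exists_forall_pow_lt_two_pow (25 * Real.exp (10 * Real.pi * H)) H (17 + 18 * finrank ℚ K)
  obtain ⟨q, hq0, hintegral, hq, hzero⟩ := hC h hCH hk
  have hall (M : ℕ) (hkM : k ^ 2 ≤ M) :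
      ∀ u < M, ∀ v < M, biEval q (u + v * b) (g ^ v) = 0 := by
    induction M, hkM using Nat.le_induction with
    | base => exact hzero
    | succ M hkM ih =>
      intro u hu v hv
      have hHk := two_le_mul_cast hH hk le_rfl
      have hqM (ij) : house (q ij) ≤ (H * M) ^ (9 * (M * k)) :=
        calc house (q ij) ≤ (H * (k ^ 2 : ℕ)) ^ (9 * (k ^ 2 * k)) := hq ij
          _ ≤ (H * (k ^ 2 : ℕ)) ^ (9 * (M * k)) := by gcongr; linarith
          _ ≤ (H * M) ^ (9 * (M * k)) := by gcongr
      exact h.biEval_eq_zero_of_forall_lt hbg hb hk hkM (hpow M hkM) hintegral hqM ih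
        (Nat.le_of_lt_succ hu) (Nat.le_of_lt_succ hv)
  exact hq0 <| eq_zero_of_forall_biEval_eq_zero (pow_injective_of_exp_eq hbg hb) fun u v ↦
    hall (k ^ 2 + u + v + 1) (by omega) u (by omega) v (by omega)

/-- The case of the Gelfond–Schneider theorem in which the logarithm is `2πi`. -/
theorem exists_ratCast_eq_of_isAlgebraic_exp {β : ℂ} (hβ : IsAlgebraic ℚ β)
    (hexp : IsAlgebraic ℚ (Complex.exp (2 * Real.pi * Complex.I * β))) : ∃ r : ℚ, β = r := by
  let K := IntermediateField.adjoin ℚ ({β, Complex.exp (2 * Real.pi * Complex.I * β)} : Set ℂ)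
  have : FiniteDimensional ℚ K := by
    refine IntermediateField.finiteDimensional_adjoin ?_
    rintro x (rfl | rfl)
    exacts [hβ.isIntegral, hexp.isIntegral]
  have : NumberField K := ⟨⟩
  exact exists_ratCast_eq_of_exp_two_pi_mul_I_mul_eq (φ := algebraMap K ℂ)
    (b := ⟨β, IntermediateField.subset_adjoin _ _ (by simp)⟩)
    (g := ⟨_, IntermediateField.subset_adjoin _ _ (Set.mem_insert_of_mem _ rfl)⟩) rfl

end Gelfond

/-! ### Cosets of subtori -/

section IntegerForms

open scoped Matrix

variable {ι κ : Type*} [Fintype κ]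

/-- The linear form `z ↦ ∑ j, m j * z j` on `ℂ^κ` with integer coefficients `m`. -/
def intForm : (κ → ℤ) →ₗ[ℤ] (κ → ℂ) →ₗ[ℂ] ℂ :=
  Fintype.linearCombination ℤ fun j ↦ LinearMap.proj j

theorem intForm_apply (m : κ → ℤ) (z : κ → ℂ) : intForm m z = ∑ j, m j * z j := by
  simp [intForm, Fintype.linearCombination_apply]

/-- The `ℂ`-linear map `ℂ^κ → ℂ^ι` with integer matrix `A`: the logarithm of the homomorphism of
tori `x ↦ (∏ j, x j ^ A i j)`. -/
def intMap (A : Matrix ι κ ℤ) : (κ → ℂ) →ₗ[ℂ] (ι → ℂ) :=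
  LinearMap.pi fun i ↦ intForm (A i)

theorem intMap_apply (A : Matrix ι κ ℤ) (y : κ → ℂ) (i : ι) : intMap A y i = intForm (A i) y :=
  rfl

variable [Fintype ι]

theorem intForm_intMap (m : ι → ℤ) (A : Matrix ι κ ℤ) (y : κ → ℂ) :
    intForm m (intMap A y) = intForm (m ᵥ* A) y := by
  simp only [intForm_apply, intMap_apply, Matrix.vecMul, dotProduct, Int.cast_sum, Int.cast_mul,
    Finset.mul_sum, Finset.sum_mul, mul_assoc]
  exact Finset.sum_comm

theorem intForm_one_sub_mul [DecidableEq ι] (A : Matrix ι κ ℤ) (B : Matrix κ ι ℤ) (w : ι → ℂ)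
    (i : ι) : intForm ((1 - A * B : Matrix ι ι ℤ) i) w = w i - intMap A (intMap B w) i := by
  have hone : intForm ((1 : Matrix ι ι ℤ) i) w = w i := by
    simp [intForm_apply, Matrix.one_apply]
  have hmul : intForm ((A * B) i) w = intMap A (intMap B w) i :=
    (intForm_intMap (A i) B w).symm
  rw [← hone, ← hmul, ← LinearMap.sub_apply, ← map_sub]
  rfl

theorem one_sub_mul_vecMul_eq_zero [DecidableEq ι] [DecidableEq κ] {A : Matrix ι κ ℤ}
    {B : Matrix κ ι ℤ} (hBA : B * A = 1) (i : ι) : (1 - A * B : Matrix ι ι ℤ) i ᵥ* A = 0 := by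
  have : (1 - A * B) * A = 0 := by
    rw [Matrix.sub_mul, Matrix.mul_assoc, hBA, Matrix.one_mul, Matrix.mul_one, sub_self]
  exact congrFun this i

theorem intMap_intMap_eq_self [DecidableEq κ] {A : Matrix ι κ ℤ}
    {B : Matrix κ ι ℤ} (hBA : B * A = 1) {w : ι → ℂ}
    (hw : ∀ m : ι → ℤ, m ᵥ* A = 0 → intForm m w = 0) : intMap A (intMap B w) = w := by
  classical
  funext i
  have := hw _ (one_sub_mul_vecMul_eq_zero hBA i)
  rw [intForm_one_sub_mul] at this
  exact (sub_eq_zero.1 this).symm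

end IntegerForms

section Exponential

/-- The character `x ↦ e^{2πix}` of `ℂ`. -/
def expTwoPiI : AddChar ℂ ℂ where
  toFun x := Complex.exp (2 * Real.pi * Complex.I * x)
  map_zero_eq_one' := by rw [mul_zero, Complex.exp_zero]
  map_add_eq_mul' x y := by rw [mul_add, Complex.exp_add]

theorem expTwoPiI_apply (x : ℂ) : expTwoPiI x = Complex.exp (2 * Real.pi * Complex.I * x) := rfl

theorem expTwoPiI_ne_zero (x : ℂ) : expTwoPiI x ≠ 0 := Complex.exp_ne_zero _

theorem expTwoPiI_intCast (k : ℤ) : expTwoPiI k = 1 := by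
  rw [expTwoPiI_apply, mul_comm, Complex.exp_int_mul_two_pi_mul_I]

theorem expTwoPiI_half : expTwoPiI (1 / 2) = -1 := by
  rw [expTwoPiI_apply, ← Complex.exp_pi_mul_I]
  congr 1
  ring

variable {n : ℕ}

theorem expMap_apply (u : Fin n → ℂ) (i : Fin n) : expMap n u i = expTwoPiI (u i) := rfl

theorem expMap_ne_zero (u : Fin n → ℂ) (i : Fin n) : expMap n u i ≠ 0 := expTwoPiI_ne_zero _

theorem prod_expMap_zpow (u : Fin n → ℂ) (m : Fin n → ℤ) :
    ∏ i, expMap n u i ^ m i = expTwoPiI (intForm m u) := by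
  rw [intForm_apply, expTwoPiI_apply, Finset.mul_sum, Complex.exp_sum]
  refine Finset.prod_congr rfl fun i _ ↦ ?_
  rw [expMap_apply, ← AddChar.map_zsmul_eq_zpow, zsmul_eq_mul, expTwoPiI_apply]

theorem exists_expMap_eq {z : Fin n → ℂ} (hz : ∀ i, z i ≠ 0) : ∃ u, expMap n u = z := by
  refine ⟨fun i ↦ Complex.log (z i) / (2 * Real.pi * Complex.I), funext fun i ↦ ?_⟩
  rw [expMap, mul_div_cancel₀ _ Complex.two_pi_I_ne_zero, Complex.exp_log (hz i)]

end Exponential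

section TorusCoset

open scoped Matrix

/-- The coset of a subtorus of `(ℂ^*)^n` through `exp a`; the subtorus is the image of `(ℂ^*)^κ`
under the monomial map with matrix `A`, parametrised here through the exponential. -/
def torusCoset {n : ℕ} {κ : Type*} [Fintype κ] (a : Fin n → ℂ) (A : Matrix (Fin n) κ ℤ) :
    Set (Fin n → ℂ) :=
  Set.range fun y ↦ expMap n (a + intMap A y)

variable {n : ℕ} {κ μ : Type*} [Fintype κ] [Fintype μ] {a : Fin n → ℂ} {A : Matrix (Fin n) κ ℤ}
  {B : Matrix κ (Fin n) ℤ}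

theorem prod_zpow_of_mem_torusCoset {z : Fin n → ℂ} (hz : z ∈ torusCoset a A) {m : Fin n → ℤ}
    (hm : m ᵥ* A = 0) : ∏ i, z i ^ m i = expTwoPiI (intForm m a) := by
  obtain ⟨y, rfl⟩ := hz
  rw [prod_expMap_zpow, map_add, intForm_intMap, hm, map_zero, LinearMap.zero_apply, add_zero]

theorem mem_torusCoset_iff [DecidableEq κ] (hBA : B * A = 1) {z : Fin n → ℂ} :
    z ∈ torusCoset a A ↔ (∀ i, z i ≠ 0) ∧
      ∀ m : Fin n → ℤ, m ᵥ* A = 0 → ∏ i, z i ^ m i = expTwoPiI (intForm m a) := by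
  refine ⟨fun hz ↦ ⟨?_, fun m hm ↦ prod_zpow_of_mem_torusCoset hz hm⟩, fun ⟨hz, hmon⟩ ↦ ?_⟩
  · obtain ⟨y, rfl⟩ := hz
    exact expMap_ne_zero _
  · obtain ⟨u, rfl⟩ := exists_expMap_eq hz
    refine ⟨intMap B (u - a), funext fun i ↦ ?_⟩
    have hexp := hmon _ (one_sub_mul_vecMul_eq_zero hBA i)
    rw [prod_expMap_zpow, intForm_one_sub_mul, intForm_one_sub_mul] at hexp
    calc expTwoPiI ((a + intMap A (intMap B (u - a))) i)
        = expTwoPiI (a i - intMap A (intMap B a) i) * expTwoPiI (intMap A (intMap B u) i) := by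
          rw [← AddChar.map_add_eq_mul, map_sub, map_sub, Pi.add_apply, Pi.sub_apply]
          congr 1
          ring
      _ = expTwoPiI (u i) := by rw [← hexp, ← AddChar.map_add_eq_mul, sub_add_cancel]

theorem torusCoset_subset_torusCoset_iff [DecidableEq κ] (hBA : B * A = 1)
    {G : Matrix (Fin n) μ ℤ} :
    torusCoset a G ⊆ torusCoset a A ↔ ∀ m : Fin n → ℤ, m ᵥ* A = 0 → m ᵥ* G = 0 := by
  classical
  refine ⟨fun hsub m hm ↦ ?_, fun h z hz ↦ (mem_torusCoset_iff hBA).2 ⟨?_, fun m hm ↦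
    prod_zpow_of_mem_torusCoset hz (h m hm)⟩⟩
  · by_contra hne
    obtain ⟨j, hj⟩ := Function.ne_iff.1 hne
    have hj' : ((m ᵥ* G) j : ℂ) ≠ 0 := Int.cast_ne_zero.2 hj
    have hmon := prod_zpow_of_mem_torusCoset (hsub ⟨Pi.single j (1 / 2 / (m ᵥ* G) j), rfl⟩) hm
    have hhalf : intForm (m ᵥ* G) (Pi.single j (1 / 2 / (m ᵥ* G) j)) = 1 / 2 := by
      rw [intForm_apply, Fintype.sum_eq_single j fun i hi ↦ by rw [Pi.single_eq_of_ne hi, mul_zero],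
        Pi.single_eq_same, mul_div_cancel₀ _ hj']
    rw [prod_expMap_zpow, map_add, intForm_intMap, hhalf, AddChar.map_add_eq_mul,
      expTwoPiI_half, mul_neg_one] at hmon
    exact neg_ne_self.2 (expTwoPiI_ne_zero _) hmon
  · obtain ⟨y, rfl⟩ := hz
    exact expMap_ne_zero _

theorem eval_prod_X_pow_sub_eq_zero_iff {F ι : Type*} [Field F] [Fintype ι] {z : ι → F}
    (hz : ∀ i, z i ≠ 0) (m : ι → ℤ) (c : F) :
    eval z (∏ i, X i ^ (m i).toNat - C c * ∏ i, X i ^ (-m i).toNat) = 0 ↔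
      ∏ i, z i ^ m i = c := by
  have hneg : ∏ i, z i ^ (-m i).toNat ≠ 0 :=
    Finset.prod_ne_zero_iff.2 fun i _ ↦ pow_ne_zero _ (hz i)
  have hquot : ∏ i, z i ^ m i = (∏ i, z i ^ (m i).toNat) / ∏ i, z i ^ (-m i).toNat := by
    rw [← Finset.prod_div_distrib]
    refine Finset.prod_congr rfl fun i _ ↦ ?_
    rw [← zpow_natCast, ← zpow_natCast, ← zpow_sub₀ (hz i), Int.toNat_sub_toNat_neg]
  simp only [map_sub, map_mul, map_prod, map_pow, eval_X, eval_C]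
  rw [sub_eq_zero, hquot, div_eq_iff hneg]

theorem zClosedTorus_torusCoset [DecidableEq κ] (hBA : B * A = 1) :
    ZClosedTorus n (torusCoset a A) := by
  refine ⟨(fun m : Fin n → ℤ ↦ ∏ i, X i ^ (m i).toNat -
    C (expTwoPiI (intForm m a)) * ∏ i, X i ^ (-m i).toNat) '' {m | m ᵥ* A = 0}, ?_⟩
  ext z
  rw [mem_torusCoset_iff hBA]
  refine and_congr_right fun hz ↦ ?_
  rw [Set.forall_mem_image]
  exact forall₂_congr fun m _ ↦ (eval_prod_X_pow_sub_eq_zero_iff hz m _).symm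

theorem isIrrOf_torusCoset (a : Fin n → ℂ) (A : Matrix (Fin n) κ ℤ) :
    IsIrrOf (ZClosedTorus n) (torusCoset a A) := by
  refine ⟨Set.range_nonempty _, ?_⟩
  rintro _ _ ⟨P, rfl⟩ ⟨Q, rfl⟩ hsub
  by_contra! hcon
  simp only [Set.not_subset, torusCoset, Set.exists_range_iff, Set.mem_ofPred_eq, not_and,
    not_forall] at hcon
  obtain ⟨⟨y, hy⟩, w, hw⟩ := hcon
  obtain ⟨p, hpP, hp⟩ := hy (expMap_ne_zero _)
  obtain ⟨q, hqQ, hq⟩ := hw (expMap_ne_zero _)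
  let line (t : ℂ) : Fin n → ℂ := expMap n (a + intMap A (y + t • (w - y)))
  have hanalytic (p : MvPolynomial (Fin n) ℂ) :
      AnalyticOnNhd ℂ (fun t ↦ eval (line t) p) Set.univ := by
    refine (Differentiable.differentiableOn ?_).analyticOnNhd isOpen_univ
    simp only [line, eval_eq', expMap, map_add, map_smul, Pi.add_apply, Pi.smul_apply]
    fun_prop
  have hmul : ∀ t ∈ Set.univ, eval (line t) p * eval (line t) q = 0 := fun t _ ↦ by
    rcases hsub ⟨y + t • (w - y), rfl⟩ with h | h
    · exact mul_eq_zero_of_left (h.2 p hpP) _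
    · exact mul_eq_zero_of_right _ (h.2 q hqQ)
  rcases AnalyticOnNhd.eq_zero_or_eq_zero_of_mul_eq_zero (hanalytic p) (hanalytic q) hmul
    isPreconnected_univ with h | h
  · exact hp (by simpa only [line, zero_smul, add_zero] using h 0 trivial)
  · exact hq (by simpa only [line, one_smul, add_sub_cancel] using h 1 trivial)

theorem exists_eval_expMap_add_intMap_eq_sum (a : Fin n → ℂ) (A : Matrix (Fin n) κ ℤ)
    (p : MvPolynomial (Fin n) ℂ) : ∃ (s : Finset (κ → ℤ)) (c : (κ → ℤ) → ℂ),
      ∀ y, eval (expMap n (a + intMap A y)) p = ∑ k ∈ s, c k * expTwoPiI (intForm k y) := by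
  classical
  let exponent (m : Fin n →₀ ℕ) : Fin n → ℤ := fun i ↦ m i
  refine ⟨p.support.image fun m ↦ exponent m ᵥ* A,
    fun k ↦ ∑ m ∈ p.support with exponent m ᵥ* A = k,
      coeff m p * expTwoPiI (intForm (exponent m) a), fun y ↦ ?_⟩
  rw [eval_eq', ← Finset.sum_fiberwise_of_maps_to (g := fun m ↦ exponent m ᵥ* A)
    fun m hm ↦ Finset.mem_image_of_mem _ hm]
  refine Finset.sum_congr rfl fun k _ ↦ ?_
  rw [Finset.sum_mul]
  refine Finset.sum_congr rfl fun m hm ↦ ?_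
  have hmonomial := prod_expMap_zpow (a + intMap A y) (exponent m)
  simp only [exponent, zpow_natCast] at hmonomial
  rw [hmonomial, map_add, intForm_intMap, AddChar.map_add_eq_mul, mul_assoc,
    (Finset.mem_filter.1 hm).2]

end TorusCoset

section Dimension

theorem coe_succ_le_dimOf_of_ssubset {α : Type*} {Closed : Set α → Prop} {d : ℕ}
    {Z : Fin (d + 1) → Set α} {T : Set α} (hZ : ∀ i, Closed (Z i) ∧ IsIrrOf Closed (Z i))
    (hmono : StrictMono Z) (hT : Closed T) (hTirr : IsIrrOf Closed T)
    (hlt : Z (Fin.last d) ⊂ T) : ((d + 1 : ℕ) : ℕ∞) ≤ dimOf Closed T := by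
  let chain : Fin (d + 2) → Set α := Fin.snoc Z T
  have hchain : StrictMono chain := by
    refine Fin.strictMono_iff_lt_succ.2 fun i ↦ ?_
    induction i using Fin.lastCases with
    | last => simpa only [chain, Fin.snoc_castSucc, Fin.succ_last, Fin.snoc_last] using hlt
    | cast i =>
      simpa only [chain, ← Fin.castSucc_succ, Fin.snoc_castSucc] using hmono i.castSucc_lt_succ
  refine le_sSup ⟨d + 1, rfl, chain, fun i ↦ ⟨?_, ?_, ?_⟩, fun i j hij ↦ hchain hij⟩
  · induction i using Fin.lastCases with
    | last => simpa only [chain, Fin.snoc_last] using hT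
    | cast i => simpa only [chain, Fin.snoc_castSucc] using (hZ i).1
  · induction i using Fin.lastCases with
    | last => simpa only [chain, Fin.snoc_last] using hTirr
    | cast i => simpa only [chain, Fin.snoc_castSucc] using (hZ i).2
  · simpa only [chain, Fin.snoc_last] using hchain.monotone i.le_last

open scoped Matrix in
/-- The chain consists of the cosets belonging to the first `k` columns of `A`, for `k ≤ r`. -/
theorem coe_succ_le_dimOf_of_torusCoset_ssubset {n r : ℕ} {a : Fin n → ℂ}
    {A : Matrix (Fin n) (Fin r) ℤ} {B : Matrix (Fin r) (Fin n) ℤ} (hBA : B * A = 1)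
    {T : Set (Fin n → ℂ)} (hT : ZClosedTorus n T) (hTirr : IsIrrOf (ZClosedTorus n) T)
    (hlt : torusCoset a A ⊂ T) : ((r + 1 : ℕ) : ℕ∞) ≤ dimOf (ZClosedTorus n) T := by
  let cols (k : Fin (r + 1)) : Matrix (Fin n) (Fin k) ℤ := A.submatrix id (Fin.castLE k.is_le)
  let rows (k : Fin (r + 1)) : Matrix (Fin k) (Fin n) ℤ := B.submatrix (Fin.castLE k.is_le) id
  have hrows (k : Fin (r + 1)) : rows k * cols k = 1 := by
    rw [← Matrix.submatrix_mul B A _ id _ Function.bijective_id, hBA,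
      Matrix.submatrix_one _ (Fin.castLE_injective _)]
  have hvec (m : Fin n → ℤ) (k : Fin (r + 1)) (j : Fin k) :
      (m ᵥ* cols k) j = (m ᵥ* A) (Fin.castLE k.is_le j) := rfl
  refine coe_succ_le_dimOf_of_ssubset (Z := fun k ↦ torusCoset a (cols k))
    (fun k ↦ ⟨zClosedTorus_torusCoset (hrows k), isIrrOf_torusCoset a _⟩)
    (fun k l hkl ↦ ⟨?_, fun hsub ↦ ?_⟩) hT hTirr hlt
  · refine (torusCoset_subset_torusCoset_iff (hrows l)).2 ?_
    exact fun m hm ↦ funext fun j ↦ congrFun hm (Fin.castLE hkl.le j)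
  · have hker := (torusCoset_subset_torusCoset_iff (hrows k)).1 hsub
    let i : Fin r := ⟨k, (Fin.lt_def.1 hkl).trans_le l.is_le⟩
    have hBi : B i ᵥ* A = (1 : Matrix (Fin r) (Fin r) ℤ) i := congrFun hBA i
    have hzero : B i ᵥ* cols k = 0 := funext fun j ↦ by
      rw [hvec, hBi]
      exact Matrix.one_apply_ne (Fin.ne_of_gt j.is_lt)
    have hone : (B i ᵥ* cols l) ⟨k, hkl⟩ = 1 := by
      rw [hvec, hBi]
      exact Matrix.one_apply_eq i
    rw [hker _ hzero, Pi.zero_apply] at hone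
    exact zero_ne_one hone

theorem ZClosed.zeroLocus_vanishingIdeal {n : ℕ} {S : Set (Fin n → ℂ)} (hS : ZClosed n S) :
    zeroLocus ℂ (vanishingIdeal ℂ S) = S := by
  refine (zeroLocus_vanishingIdeal_le S).antisymm' ?_
  obtain ⟨P, rfl⟩ := hS
  exact fun z hz p hp ↦ hz p fun w hw ↦ hw p hp

theorem IsIrrOf.isPrime_vanishingIdeal {n : ℕ} {S : Set (Fin n → ℂ)}
    (hS : IsIrrOf (ZClosed n) S) : (vanishingIdeal ℂ S).IsPrime := by
  obtain ⟨⟨z, hz⟩, hirr⟩ := hS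
  refine ⟨fun htop ↦ ?_, fun {p q} hpq ↦ ?_⟩
  · have := (Ideal.eq_top_iff_one _).1 htop z hz
    exact one_ne_zero ((map_one (aeval z)).symm.trans this)
  · have hclosed (f : MvPolynomial (Fin n) ℂ) : ZClosed n {z | aeval z f = 0} :=
      ⟨{f}, by simp only [Set.mem_singleton_iff, forall_eq, aeval_eq_eval]⟩
    refine hirr _ _ (hclosed p) (hclosed q) fun z hz ↦ ?_
    exact mul_eq_zero.1 ((map_mul (aeval z) p q).symm.trans (hpq z hz))

theorem ZClosed.comap_vanishingIdeal_lt {n r : ℕ} {Z W : Set (Fin n → ℂ)} (hZ : ZClosed n Z)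
    (hlt : Z ⊂ W) {φ : MvPolynomial (Fin r) ℂ →ₐ[ℂ] MvPolynomial (Fin n) ℂ}
    {ψ : MvPolynomial (Fin n) ℂ →ₐ[ℂ] MvPolynomial (Fin r) ℂ}
    (h : ∀ z ∈ W, ∀ i, aeval z (φ (ψ (X i))) = z i) :
    (vanishingIdeal ℂ W).comap φ < (vanishingIdeal ℂ Z).comap φ := by
  refine lt_of_le_not_ge (Ideal.comap_mono (vanishingIdeal_anti_mono hlt.1)) fun hge ↦ hlt.2 ?_
  intro z hz
  rw [← hZ.zeroLocus_vanishingIdeal]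
  intro p hp
  have hinv (w : Fin n → ℂ) (hw : w ∈ W) : aeval w (φ (ψ p)) = aeval w p := by
    have : ((aeval w).comp φ).comp ψ = aeval w :=
      algHom_ext fun i ↦ (h w hw i).trans (aeval_X w i).symm
    exact DFunLike.congr_fun this p
  have hmem : ψ p ∈ (vanishingIdeal ℂ Z).comap φ := fun w hw ↦
    (hinv w (hlt.1 hw)).trans (hp w hw)
  exact (hinv z hz).symm.trans (hge hmem z hz)

/-- A chain in `S` gives a chain of vanishing ideals, and pulling back along `φ` keeps it strict
because `ψ` parametrises `S`. -/
theorem dimOf_zClosed_le {n r : ℕ} {S : Set (Fin n → ℂ)}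
    {φ : MvPolynomial (Fin r) ℂ →ₐ[ℂ] MvPolynomial (Fin n) ℂ}
    {ψ : MvPolynomial (Fin n) ℂ →ₐ[ℂ] MvPolynomial (Fin r) ℂ}
    (h : ∀ z ∈ S, ∀ i, aeval z (φ (ψ (X i))) = z i) : dimOf (ZClosed n) S ≤ r := by
  refine sSup_le ?_
  rintro _ ⟨d, rfl, Z, hZ, hlt⟩
  have hprime (i : Fin (d + 1)) : ((vanishingIdeal ℂ (Z i)).comap φ).IsPrime :=
    have := (hZ i).2.1.isPrime_vanishingIdeal
    Ideal.IsPrime.comap _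
  let chain : LTSeries (PrimeSpectrum (MvPolynomial (Fin r) ℂ)) :=
    LTSeries.mk d (fun i ↦ ⟨_, hprime i.rev⟩) fun i j hij ↦
      ZClosed.comap_vanishingIdeal_lt (hZ _).1 (hlt _ _ (Fin.rev_lt_rev.2 hij))
        fun z hz ↦ h z ((hZ _).2.2 hz)
  have hlength : (d : WithBot ℕ∞) ≤ ringKrullDim (MvPolynomial (Fin r) ℂ) :=
    Order.LTSeries.length_le_krullDim chain
  rw [MvPolynomial.ringKrullDim_of_isNoetherianRing, ringKrullDim_eq_zero_of_field, zero_add,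
    Nat.card_eq_fintype_card, Fintype.card_fin] at hlength
  exact_mod_cast hlength

end Dimension

section ConstantForms

open scoped Matrix

/-- The lattice of integer linear forms that are constant on `S`. -/
def constantForms {n : ℕ} (S : Set (Fin n → ℂ)) : Submodule ℤ (Fin n → ℤ) where
  carrier := {m | ∀ z ∈ S, ∀ w ∈ S, intForm m z = intForm m w}
  add_mem' hl hm z hz w hw := by
    rw [map_add, LinearMap.add_apply, LinearMap.add_apply, hl z hz w hw, hm z hz w hw]
  zero_mem' z _ w _ := by rw [map_zero, LinearMap.zero_apply, LinearMap.zero_apply]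
  smul_mem' k m hm z hz w hw := by
    rw [map_smul, LinearMap.smul_apply, LinearMap.smul_apply, hm z hz w hw]

theorem mem_constantForms_of_smul_mem {n : ℕ} {S : Set (Fin n → ℂ)} {k : ℤ} {m : Fin n → ℤ}
    (hk : k ≠ 0) (h : k • m ∈ constantForms S) : m ∈ constantForms S := fun z hz w hw ↦ by
  have := h z hz w hw
  rw [map_smul, LinearMap.smul_apply, LinearMap.smul_apply] at this
  exact smul_right_injective ℂ hk this

/-- The polynomial function `z ↦ ∑ i, m i * (z i - a i)`. -/
def intFormPolynomial {n : ℕ} (m : Fin n → ℤ) (a : Fin n → ℂ) : MvPolynomial (Fin n) ℂ :=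
  ∑ i, C (m i : ℂ) * (X i - C (a i))

theorem aeval_intFormPolynomial {n : ℕ} (m : Fin n → ℤ) (a z : Fin n → ℂ) :
    aeval z (intFormPolynomial m a) = intForm m (z - a) := by
  simp [intFormPolynomial, intForm_apply]

variable {n r : ℕ} {S T : Set (Fin n → ℂ)} {a : Fin n → ℂ} {A : Matrix (Fin n) (Fin r) ℤ}
  {B : Matrix (Fin r) (Fin n) ℤ}

theorem add_intMap_intMap_sub_eq_self (hA : ∀ m, m ∈ constantForms S ↔ m ᵥ* A = 0)
    (hBA : B * A = 1) (ha : a ∈ S) {z : Fin n → ℂ} (hz : z ∈ S) :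
    a + intMap A (intMap B (z - a)) = z := by
  rw [intMap_intMap_eq_self hBA, add_sub_cancel]
  intro m hm
  rw [map_sub, (hA m).2 hm z hz a ha, sub_self]

theorem dimOf_le_of_mem_constantForms_iff (hA : ∀ m, m ∈ constantForms S ↔ m ᵥ* A = 0)
    (hBA : B * A = 1) (ha : a ∈ S) : dimOf (ZClosed n) S ≤ r := by
  refine dimOf_zClosed_le (φ := aeval fun j ↦ intFormPolynomial (B j) a)
    (ψ := aeval fun i ↦ C (a i) + intFormPolynomial (A i) 0) fun z hz i ↦ ?_
  have hcomp : (aeval z).comp (aeval fun j ↦ intFormPolynomial (B j) a) =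
      aeval (intMap B (z - a)) :=
    algHom_ext fun j ↦ by
      rw [AlgHom.comp_apply, aeval_X, aeval_X, aeval_intFormPolynomial, intMap_apply]
  rw [aeval_X, ← AlgHom.comp_apply, hcomp, map_add, aeval_intFormPolynomial, sub_zero, aeval_C,
    ← intMap_apply]
  exact congrFun (add_intMap_intMap_sub_eq_self hA hBA ha hz) i

/-- On `S`, `p ∘ exp` is an exponential sum whose frequencies are the polynomials
`2πi * intForm (k ᵥ* B) (z - a)`. These are pairwise non-congruent modulo constants, so all
coefficients of the sum vanish, and `p ∘ exp` vanishes on the whole affine space `a + im A`. -/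
theorem eval_expMap_add_intMap_eq_zero (hS : ZClosed n S) (hSirr : IsIrrOf (ZClosed n) S)
    (hA : ∀ m, m ∈ constantForms S ↔ m ᵥ* A = 0) (hBA : B * A = 1) (ha : a ∈ S)
    {p : MvPolynomial (Fin n) ℂ} (hp : ∀ z ∈ S, eval (expMap n z) p = 0) (y : Fin r → ℂ) :
    eval (expMap n (a + intMap A y)) p = 0 := by
  have := hSirr.isPrime_vanishingIdeal
  obtain ⟨s, c, hsum⟩ := exists_eval_expMap_add_intMap_eq_sum a A p
  let f (k : Fin r → ℤ) : MvPolynomial (Fin n) ℂ :=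
    C (2 * Real.pi * Complex.I) * intFormPolynomial (k ᵥ* B) a
  have hf (k : Fin r → ℤ) (z : Fin n → ℂ) :
      eval z (f k) = 2 * Real.pi * Complex.I * intForm k (intMap B (z - a)) := by
    rw [intForm_intMap, ← aeval_intFormPolynomial, aeval_eq_eval, map_mul, eval_C]
  have hindep : ∀ k ∈ s, ∀ l ∈ s, k ≠ l → ∀ b, f k - f l - C b ∉ vanishingIdeal ℂ S := by
    intro k _ l _ hkl b hmem
    have hconst : ∀ z ∈ S, 2 * Real.pi * Complex.I * intForm ((k - l) ᵥ* B) (z - a) = b := by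
      intro z hz
      have := hmem z hz
      rw [aeval_eq_eval, map_sub, map_sub, hf, hf, eval_C, sub_eq_zero] at this
      rw [← intForm_intMap, map_sub, LinearMap.sub_apply, mul_sub, this]
    have hform : (k - l) ᵥ* B ∈ constantForms S := fun z hz w hw ↦ by
      have := mul_left_cancel₀ Complex.two_pi_I_ne_zero
        ((hconst z hz).trans (hconst w hw).symm)
      rwa [map_sub, map_sub, sub_left_inj] at this
    rw [hA, Matrix.vecMul_vecMul, hBA, Matrix.vecMul_one, sub_eq_zero] at hform
    exact hkl hform
  have hvanish := forall_mem_of_sum_mul_exp_eq_zero hindep (c := fun k ↦ C (c k)) fun z hz ↦ by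
    rw [hS.zeroLocus_vanishingIdeal] at hz
    rw [← hp z hz, ← add_intMap_intMap_sub_eq_self hA hBA ha hz, hsum,
      add_intMap_intMap_sub_eq_self hA hBA ha hz]
    simp only [eval_C, hf, expTwoPiI_apply]
  rw [hsum]
  refine Finset.sum_eq_zero fun k hk ↦ ?_
  have : c k = 0 := (aeval_C a (c k)).symm.trans (hvanish k hk a ha)
  rw [this, zero_mul]

theorem torusCoset_subset_of_image_expMap_subset (hS : ZClosed n S)
    (hSirr : IsIrrOf (ZClosed n) S) (hA : ∀ m, m ∈ constantForms S ↔ m ᵥ* A = 0)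
    (hBA : B * A = 1) (ha : a ∈ S) (hT : ZClosedTorus n T) (hsub : expMap n '' S ⊆ T) :
    torusCoset a A ⊆ T := by
  obtain ⟨P, rfl⟩ := hT
  rintro _ ⟨y, rfl⟩
  exact ⟨expMap_ne_zero _, fun p hp ↦ eval_expMap_add_intMap_eq_zero hS hSirr hA hBA ha
    (fun z hz ↦ (hsub ⟨z, hz, rfl⟩).2 p hp) y⟩

end ConstantForms

section TorsionCosets

open scoped Matrix

variable {n : ℕ}

theorem isSubtorus_torusCoset_zero {r : ℕ} (A : Matrix (Fin n) (Fin r) ℤ) :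
    IsSubtorus n (torusCoset 0 A) := by
  have hmonomial (y : Fin r → ℂ) (i : Fin n) :
      ∏ j, expMap r y j ^ A i j = expMap n (0 + intMap A y) i := by
    rw [prod_expMap_zpow, zero_add, expMap_apply, intMap_apply]
  refine ⟨r, A, Set.ext fun z ↦ ⟨?_, ?_⟩⟩
  · rintro ⟨y, rfl⟩
    exact ⟨expMap r y, expMap_ne_zero y, fun i ↦ (hmonomial y i).symm⟩
  · rintro ⟨x, hx, hz⟩
    obtain ⟨y, rfl⟩ := exists_expMap_eq hx
    exact ⟨y, funext fun i ↦ (hmonomial y i).symm.trans (hz i).symm⟩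

variable {κ : Type*} [Fintype κ]

theorem image_expMap_mul_torusCoset_zero (b : Fin n → ℂ) (A : Matrix (Fin n) κ ℤ) :
    (fun z i ↦ expMap n b i * z i) '' torusCoset 0 A = torusCoset b A := by
  rw [torusCoset, ← Set.range_comp]
  congr 1
  funext y i
  rw [Function.comp_apply, zero_add, expMap_apply, expMap_apply, expMap_apply,
    ← AddChar.map_add_eq_mul, Pi.add_apply]

theorem torusCoset_add_intMap (b : Fin n → ℂ) (A : Matrix (Fin n) κ ℤ) (v : κ → ℂ) :
    torusCoset (b + intMap A v) A = torusCoset b A := by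
  refine Eq.trans ?_ ((Equiv.addLeft v).surjective.range_comp fun y ↦ expMap n (b + intMap A y))
  simp only [torusCoset, Function.comp_def, Equiv.coe_addLeft, map_add, add_assoc]

theorem isTorsionPoint_expMap_ratCast (q : Fin n → ℚ) :
    IsTorsionPoint n (expMap n fun i ↦ q i) := by
  refine fun i ↦ ⟨(q i).den, (q i).pos, ?_⟩
  rw [expMap_apply, ← AddChar.map_nsmul_eq_pow, nsmul_eq_mul]
  have : ((q i).den * q i : ℂ) = (q i).num := mod_cast Rat.den_mul_eq_num (q i)
  rw [this, expTwoPiI_intCast]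

theorem exists_ratCast_eq_intForm {A : Matrix (Fin n) κ ℤ} {a t : Fin n → ℂ}
    (ha : ∀ i, IsAlgebraic ℚ (a i)) (ht : t ∈ torusCoset a A) (htalg : ∀ i, IsAlgebraic ℚ (t i))
    {m : Fin n → ℤ} (hm : m ᵥ* A = 0) : ∃ q : ℚ, intForm m a = q := by
  simp only [← mem_algebraicClosure_iff] at ha htalg
  refine exists_ratCast_eq_of_isAlgebraic_exp ?_ ?_
  · rw [← mem_algebraicClosure_iff, intForm_apply]
    exact sum_mem fun i _ ↦ mul_mem (intCast_mem _ _) (ha i)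
  · rw [← mem_algebraicClosure_iff, ← expTwoPiI_apply, ← prod_zpow_of_mem_torusCoset ht hm]
    exact prod_mem fun i _ ↦ zpow_mem (htalg i) _

theorem isTorsionTranslateOfSubtorus_torusCoset {r : ℕ} {A : Matrix (Fin n) (Fin r) ℤ}
    {B : Matrix (Fin r) (Fin n) ℤ} (hBA : B * A = 1) {a : Fin n → ℂ}
    (ha : ∀ i, IsAlgebraic ℚ (a i)) (halg : ∃ t ∈ torusCoset a A, ∀ i, IsAlgebraic ℚ (t i)) :
    IsTorsionTranslateOfSubtorus n (torusCoset a A) := by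
  obtain ⟨t, ht, htalg⟩ := halg
  choose q hq using fun i ↦
    exists_ratCast_eq_intForm ha ht htalg (one_sub_mul_vecMul_eq_zero hBA i)
  have hdecomp : a = (fun i ↦ (q i : ℂ)) + intMap A (intMap B a) := by
    funext i
    rw [Pi.add_apply, ← hq, intForm_one_sub_mul, sub_add_cancel]
  refine ⟨_, _, isTorsionPoint_expMap_ratCast q, isSubtorus_torusCoset_zero A, ?_⟩
  rw [image_expMap_mul_torusCoset_zero]
  conv_lhs => rw [hdecomp, torusCoset_add_intMap]

end TorsionCosets

theorem ZClosedQbar.zClosed {n : ℕ} {S : Set (Fin n → ℂ)} (hS : ZClosedQbar n S) : ZClosed n S :=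
  let ⟨P, _, hP⟩ := hS
  ⟨P, hP⟩

theorem ZClosedTorusQbar.zClosedTorus {n : ℕ} {T : Set (Fin n → ℂ)} (hT : ZClosedTorusQbar n T) :
    ZClosedTorus n T :=
  let ⟨P, _, hP⟩ := hT
  ⟨P, hP⟩

theorem torsion_translate_of_exp_subset_general (n : ℕ) (S T : Set (Fin n → ℂ))
    (hS : ZClosed n S) (hSirr : IsIrrOf (ZClosed n) S)
    (hSalg : ∃ a ∈ S, ∀ i, IsAlgebraic ℚ (a i))
    (hT : ZClosedTorus n T) (hTirr : IsIrrOf (ZClosedTorus n) T)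
    (hTalg : ∃ t ∈ T, ∀ i, IsAlgebraic ℚ (t i))
    (hdim : dimOf (ZClosedTorus n) T ≤ dimOf (ZClosed n) S) (hsub : expMap n '' S ⊆ T) :
    IsTorsionTranslateOfSubtorus n T := by
  obtain ⟨a, haS, ha⟩ := hSalg
  obtain ⟨r, A, B, hA, hBA⟩ := exists_mem_iff_vecMul_eq_zero_of_saturated
    (L := constantForms S) fun _ _ ↦ mem_constantForms_of_smul_mem
  have hcoset : torusCoset a A ⊆ T :=
    torusCoset_subset_of_image_expMap_subset hS hSirr hA hBA haS hT hsub
  have hdimT : dimOf (ZClosedTorus n) T ≤ r :=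
    hdim.trans (dimOf_le_of_mem_constantForms_iff hA hBA haS)
  have hTeq : torusCoset a A = T := by
    by_contra hne
    have := coe_succ_le_dimOf_of_torusCoset_ssubset hBA hT hTirr (hcoset.ssubset_of_ne hne)
    exact (Nat.cast_le.1 (this.trans hdimT)).not_gt r.lt_succ_self
  subst hTeq
  exact isTorsionTranslateOfSubtorus_torusCoset hBA ha hTalg

/-- If `S ⊆ ℂ^n` is a nonempty irreducible Zariski closed subset defined over `ℚ̄`
and `T ⊆ (ℂ^*)^n` is an irreducible Zariski closed subset defined over `ℚ̄` with
`dim S = dim T` and `exp(S) ⊆ T`, then `T` is a torsion translate of a subtorus. -/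
theorem torsion_translate_of_exp_subset (n : ℕ) (hn : 1 ≤ n)
    (S T : Set (Fin n → ℂ))
    (hSne : S.Nonempty)
    (hSclosed : ZClosedQbar n S) (hSirr : IsIrrOf (ZClosed n) S)
    (hTclosed : ZClosedTorusQbar n T) (hTirr : IsIrrOf (ZClosedTorus n) T)
    (hdim : dimOf (ZClosed n) S = dimOf (ZClosedTorus n) T)
    (hsub : expMap n '' S ⊆ T) :
    IsTorsionTranslateOfSubtorus n T :=
  torsion_translate_of_exp_subset_general n S T hSclosed.zClosed hSirr
    (hSclosed.exists_isAlgebraic hSne) hTclosed.zClosedTorus hTirr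
    (hTclosed.exists_isAlgebraic hTirr.1) hdim.ge hsub
end
end
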